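/- **Setting.** A DAG $G$ on nodes $1,\dots,n$ is given by parent sets $\pi_i\subseteq\{1,\dots,i-1\}$; $p_i=|\pi_i|$ is the in-degree of $i$ and $d_{avg}=\frac1n\sum_i p_i$. $G$ is a *polytree* if its underlying undirected graph is acyclic (possibly disconnected). A Gaussian Bayesian network on $G$ with parameters $A_i\in\mathbb R^{\pi_i}$, $\sigma_i>0$ is the law of $X\in\mathbb R^n$ with $X_i=\sum_{j\in\pi_i}(A_i)_jX_j+\eta_i$, where the $\eta_i\sim N(0,\sigma_i^2)$ are independent. $d_{TV}(P,Q)=\sup_S|P(S)-Q(S)|$ over measurable $S$. **Estimator.** Given $m$ i.i.d. samples from $P$, use the first $m_1=\lfloor m/2\rfloor$ samples as follows: for each node $i$ with $p_i\ge1$, form $\lfloor m_1/p_i\rfloor$ disjoint batches of $p_i$ samples; in each batch solve the $p_i\times p_i$ linear system equating the values of node $i$ to linear combinations of the values of its parents (the solution is set to $0$ if the system is singular); let $\widehat A_i$ be the coordinate-wise median of the batch solutions. For every node $i$ let $\widehat\sigma_i^2$ be the mean over the remaining $m-m_1$ samples of $(X_i-\sum_{j\in\pi_i}(\widehat A_i)_jX_j)^2$.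 Let $Q$ be the Gaussian Bayesian network on $G$ with parameters $(\widehat A_i,\widehat\sigma_i)$. **Theorem.** There is a universal constant $C>0$ such that the following holds. 1. Let $\varepsilon,\delta\in(0,1)$, let $G$ be a polytree on $n$ nodes with all in-degrees at most $d$, and let $P$ be any Gaussian Bayesian network on $G$. If $$m\ \ge\ C\cdot\frac{n\,\max(1,d_{avg}d)}{\varepsilon^2}\,\log\frac{n}{\varepsilon\delta},$$ then with probability at least $1-\delta$ over the samples $d_{TV}(P,Q)\le\varepsilon$. 2. If in addition $n\ge2$ and the underlying graph of $G$ is connected, then the same conclusion holds for every $$m\ \ge\ C\cdot\frac{n\,d_{avg}\,d}{\varepsilon^2}\,\log\frac{n}{\varepsilon\delta}.$$ 3. (Running time; a step is an arithmetic operation $+,-,\times,\div$ on reals, the loading of a rational constant, or a comparison of two reals, and computations are algebraic computation trees with worst-case step count.) Let $\omega\ge2$ be an exponent such that $p\times p$ real matrices can be multiplied in $O(p^\omega)$ steps. Then there is a constant $K$, depending only on $\omega$ (and $C$), such that for every polytree $G$ on $n$ nodes with all in-degrees at most $d$ and every $m\ge1$, all the $\widehat A_i$ and $\widehat\sigma_i^2$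 can be computed from the $m$ samples in at most $K\,m\,n\max(1,d_{avg}d^{\omega-2})$ steps. If moreover $n\ge2$ and the underlying graph is connected, then for all $\varepsilon,\delta\in(0,1)$ and $m=\big\lceil C\frac{n d_{avg}d}{\varepsilon^2}\log\frac n{\varepsilon\delta}\big\rceil$ at most $K\,\frac{n^2d_{avg}^2d^{\omega-1}}{\varepsilon^2}\log\frac{n}{\varepsilon\delta}$ steps suffice. -/

import Mathlib

open MeasureTheory ProbabilityTheory Matrix

namespace GBN

noncomputable section

/-- Total variation distance `sup_s |P(s) − Q(s)|` over measurable sets `s`. -/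
def dTV {E : Type*} [MeasurableSpace E] (P Q : Measure E) : ℝ :=
  ⨆ s : {s : Set E // MeasurableSet s}, |P.real s.1 - Q.real s.1|

/-! ### Gaussian Bayesian networks

A DAG on `n` nodes is given by its parent sets `π i`, with `j < i` for `j ∈ π i`. -/

/-- The underlying undirected graph of the DAG with parent sets `π`. -/
def underlyingGraph {n : ℕ} (π : Fin n → Finset (Fin n)) : SimpleGraph (Fin n) :=
  SimpleGraph.fromRel fun i j => j ∈ π i

/-- The average in-degree. -/
def avgInDegree {n : ℕ} (π : Fin n → Finset (Fin n)) : ℝ :=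
  (∑ i, ((π i).card : ℝ)) / n

/-- The matrix `B` with `B i j = (A i) j` for `j ∈ π i` and `0` otherwise. -/
def coeffMatrix {n : ℕ} (π : Fin n → Finset (Fin n)) (A : ∀ i, {j // j ∈ π i} → ℝ) :
    Matrix (Fin n) (Fin n) ℝ :=
  Matrix.of fun i j => if h : j ∈ π i then A i ⟨j, h⟩ else 0

/-- The Gaussian Bayesian network with coefficients `A` and noise standard deviations `σ`:
the pushforward of `⊗ᵢ N(0, σᵢ²)` under `η ↦ (I − B)⁻¹ η`. -/
def gaussianBN {n : ℕ} (π : Fin n → Finset (Fin n)) (A : ∀ i, {j // j ∈ π i} → ℝ)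
    (σ : Fin n → ℝ) : Measure (Fin n → ℝ) :=
  Measure.map (fun η => (1 - coeffMatrix π A)⁻¹ *ᵥ η)
    (Measure.pi fun i => gaussianReal 0 (Real.toNNReal (σ i ^ 2)))

/-! ### The estimator -/

/-- The sample median of `k` values: the mean of the two middle order statistics
(which coincide for odd `k`). -/
def sampleMedian {k : ℕ} (x : Fin k → ℝ) : ℝ :=
  let l := (Multiset.map x Finset.univ.val).sort (· ≤ ·)
  (l.getD ((k - 1) / 2) 0 + l.getD (k / 2) 0) / 2

/-- The `s`-th batch of `p` consecutive samples. -/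
def batch {E : Type*} {m₁ p : ℕ} (x : Fin m₁ → E) (s : Fin (m₁ / p)) (r : Fin p) : E :=
  x ⟨p * s.1 + r.1, by
    calc p * s.1 + r.1 < p * s.1 + p := Nat.add_lt_add_left r.2 _
      _ = p * (s.1 + 1) := by ring
      _ ≤ p * (m₁ / p) := Nat.mul_le_mul le_rfl s.2
      _ ≤ m₁ := Nat.mul_div_le m₁ p⟩

/-- The `p × p` matrix of a batch for the parent set `S`, `p = |S|`: row `r` holds the values
of the parents (listed in increasing order) in the `r`-th sample of the batch. -/
def batchMatrix {n : ℕ} (S : Finset (Fin n)) (x : Fin S.card → Fin n → ℝ) :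
    Matrix (Fin S.card) (Fin S.card) ℝ :=
  Matrix.of fun r c => x r (S.orderEmbOfFin rfl c)

/-- The solution `a` of the linear system `X a = (x r i)_r` of a batch for node `i` with parent
set `S` (by convention `0` if `X` is singular). -/
def batchSolution {n : ℕ} (S : Finset (Fin n)) (i : Fin n) (x : Fin S.card → Fin n → ℝ) :
    Fin S.card → ℝ :=
  (batchMatrix S x)⁻¹ *ᵥ fun r => x r i

/-- Coefficient recovery: coordinate-wise median of the batch solutions. -/
def coeffRecovery {n m₁ : ℕ} (π : Fin n → Finset (Fin n)) (x : Fin m₁ → Fin n → ℝ) :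
    ∀ i, {j // j ∈ π i} → ℝ := fun i j =>
  sampleMedian fun s : Fin (m₁ / (π i).card) =>
    batchSolution (π i) i (batch x s) (((π i).orderIsoOfFin rfl).symm j)

/-- Variance recovery: empirical mean of the squared residuals. -/
def varianceRecovery {n m₂ : ℕ} (π : Fin n → Finset (Fin n)) (A : ∀ i, {j // j ∈ π i} → ℝ)
    (y : Fin m₂ → Fin n → ℝ) (i : Fin n) : ℝ :=
  (∑ s, (y s i - ∑ j, A i j * y s j.1) ^ 2) / m₂

def firstHalf {E : Type*} {m : ℕ} (x : Fin m → E) (s : Fin (m / 2)) : E :=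
  x ⟨s.1, by omega⟩

def secondHalf {E : Type*} {m : ℕ} (x : Fin m → E) (s : Fin (m - m / 2)) : E :=
  x ⟨m / 2 + s.1, by omega⟩

/-- The estimated coefficients `Â` computed from `m` samples. -/
def coeffEst {n m : ℕ} (π : Fin n → Finset (Fin n)) (x : Fin m → Fin n → ℝ) :
    ∀ i, {j // j ∈ π i} → ℝ :=
  coeffRecovery π (firstHalf x)

/-- The estimated variances `σ̂²` computed from `m` samples. -/
def varEst {n m : ℕ} (π : Fin n → Finset (Fin n)) (x : Fin m → Fin n → ℝ) : Fin n → ℝ :=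
  varianceRecovery π (coeffEst π x) (secondHalf x)

/-- The learned network `Q`, with parameters `(Âᵢ, σ̂ᵢ)`. -/
def learnedBN {n m : ℕ} (π : Fin n → Finset (Fin n)) (x : Fin m → Fin n → ℝ) :
    Measure (Fin n → ℝ) :=
  gaussianBN π (coeffEst π x) fun i => √(varEst π x i)

/-- With probability at least `1 − δ` over `m` i.i.d. samples from `gaussianBN π A σ`, the
learned network is within total variation distance `ε` of it. -/
def LearnsWithin {n : ℕ} (π : Fin n → Finset (Fin n)) (A : ∀ i, {j // j ∈ π i} → ℝ)
    (σ : Fin n → ℝ) (m : ℕ) (ε δ : ℝ) : Prop :=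
  ENNReal.ofReal (1 - δ) ≤ (Measure.pi fun _ : Fin m => gaussianBN π A σ)
    {x | dTV (gaussianBN π A σ) (learnedBN π x) ≤ ε}

/-! ### Running time

Algebraic computation trees: real arithmetic and comparisons at unit cost. -/

inductive ArithOp
  | add | sub | mul | div

def ArithOp.apply : ArithOp → ℝ → ℝ → ℝ
  | .add, a, b => a + b
  | .sub, a, b => a - b
  | .mul, a, b => a * b
  | .div, a, b => a / b

/-- Algebraic computation trees with real values available in the registers `α` and outputs
indexed by `κ`. Every `const` and `op` node stores one new value, in the register `none` of
`Option α`; a `branch` node compares two registers. -/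
inductive ArithTree (κ : Type) : Type → Type 1
  | ret {α : Type} (out : κ → α) : ArithTree κ α
  | const {α : Type} (c : ℚ) (next : ArithTree κ (Option α)) : ArithTree κ α
  | op {α : Type} (o : ArithOp) (a b : α) (next : ArithTree κ (Option α)) : ArithTree κ α
  | branch {α : Type} (a b : α) (lt ge : ArithTree κ α) : ArithTree κ α

/-- The outputs of a tree on the register contents `v`. -/
def ArithTree.eval {κ : Type} : {α : Type} → ArithTree κ α → (α → ℝ) → κ → ℝ
  | _, .ret out, v => fun k => v (out k)
  | _, .const c next, v => next.eval fun r => r.elim (c : ℝ) v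
  | _, .op o a b next, v => next.eval fun r => r.elim (o.apply (v a) (v b)) v
  | _, .branch a b lt ge, v => if v a < v b then lt.eval v else ge.eval v

/-- The worst-case number of steps of a tree. -/
def ArithTree.cost {κ : Type} : {α : Type} → ArithTree κ α → ℕ
  | _, .ret _ => 0
  | _, .const _ next => next.cost + 1
  | _, .op _ _ _ next => next.cost + 1
  | _, .branch _ _ lt ge => max lt.cost ge.cost + 1

/-- `F` can be computed in at most `T` steps on every input. -/
def ComputableInTime {α κ : Type} (F : (α → ℝ) → κ → ℝ) (T : ℝ) : Prop :=
  ∃ t : ArithTree κ α, (t.cost : ℝ) ≤ T ∧ ∀ v, t.eval v = F v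

/-- `p × p` matrix multiplication, on the lists of entries. -/
def matMul (p : ℕ) (v : (Fin p × Fin p) ⊕ (Fin p × Fin p) → ℝ) : Fin p × Fin p → ℝ := fun e =>
  ((Matrix.of fun i j => v (.inl (i, j)) : Matrix (Fin p) (Fin p) ℝ) *
    (Matrix.of fun i j => v (.inr (i, j)) : Matrix (Fin p) (Fin p) ℝ)) e.1 e.2

/-- `ω ≥ 2` is an achievable exponent of matrix multiplication: `p × p` matrices can be
multiplied in `O(p^ω)` steps. -/
def IsMatMulExponent (ω : ℝ) : Prop :=
  2 ≤ ω ∧ ∃ K : ℝ, ∀ p : ℕ, 1 ≤ p → ComputableInTime (matMul p) (K * (p : ℝ) ^ ω)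

/-- The map from the `m · n` sample values to all the estimated coefficients and variances. -/
def estimator {n : ℕ} (π : Fin n → Finset (Fin n)) (m : ℕ) (v : Fin m × Fin n → ℝ) :
    ((i : Fin n) × {j // j ∈ π i}) ⊕ Fin n → ℝ :=
  Sum.elim (fun e => coeffEst π (fun s i => v (s, i)) e.1 e.2)
    (varEst π (fun s i => v (s, i)))

end

end GBN

namespace GBN

section PiMeasure

/-- Restricting a product probability measure along an injection of the index set. -/
theorem map_pi_precomp {ι κ E : Type*} [Fintype ι] [Fintype κ] [MeasurableSpace E]
    (μ : ι → Measure E) [∀ i, IsProbabilityMeasure (μ i)] {f : κ → ι} (hf : f.Injective) :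
    (Measure.pi μ).map (fun x k => x (f k)) = Measure.pi fun k => μ (f k) := by
  have h := (iIndepFun_pi (μ := μ) (X := fun _ => id) fun _ => aemeasurable_id).precomp hf
  have h2 := h.map_fun_eq_pi_map fun k => (measurable_pi_apply (f k)).aemeasurable
  have h3 : ∀ k, (Measure.pi μ).map (fun x => x (f k)) = μ (f k) :=
    fun k => (measurePreserving_eval μ (f k)).map_eq
  simpa [h3] using h2

/-- Currying identifies a product over pairs with an iterated product. -/
theorem map_pi_curry {ι κ E : Type*} [Fintype ι] [Fintype κ] [MeasurableSpace E]
    (μ : ι → κ → Measure E) [∀ i k, IsProbabilityMeasure (μ i k)] :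
    (Measure.pi fun q : ι × κ => μ q.1 q.2).map (fun x i k => x (i, k)) =
      Measure.pi fun i => Measure.pi (μ i) := by
  have := Measure.infinitePi_map_curry μ
  simp only [Measure.infinitePi_eq_pi] at this
  exact this

theorem map_pi_uncurry {ι κ E : Type*} [Fintype ι] [Fintype κ] [MeasurableSpace E]
    (μ : ι → κ → Measure E) [∀ i k, IsProbabilityMeasure (μ i k)] :
    (Measure.pi fun i => Measure.pi (μ i)).map (fun x (q : ι × κ) => x q.1 q.2) =
      Measure.pi fun q : ι × κ => μ q.1 q.2 := by
  have := Measure.infinitePi_map_curry_symm μ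
  simp only [Measure.infinitePi_eq_pi] at this
  exact this

/-- Transposing an array of independent variables. -/
theorem map_pi_swap {ι κ E : Type*} [Fintype ι] [Fintype κ] [MeasurableSpace E]
    (μ : ι → κ → Measure E) [∀ i k, IsProbabilityMeasure (μ i k)] :
    (Measure.pi fun i => Measure.pi (μ i)).map (fun x k i => x i k) =
      Measure.pi fun k => Measure.pi fun i => μ i k := by
  have h := map_pi_precomp (fun q : ι × κ => μ q.1 q.2) (f := Prod.swap) Prod.swap_injective
  simp only [Prod.fst_swap, Prod.snd_swap] at h
  rw [← map_pi_curry (fun k i => μ i k), ← h, ← map_pi_uncurry, Measure.map_map, Measure.map_map]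
  · rfl
  all_goals fun_prop

/-- Resampling one coordinate of a product probability measure. -/
theorem map_update_pi_prod {ι : Type*} [Fintype ι] [DecidableEq ι] {E : ι → Type*}
    [∀ i, MeasurableSpace (E i)]
    (μ : ∀ i, Measure (E i)) [∀ i, IsProbabilityMeasure (μ i)] (k : ι) :
    ((Measure.pi μ).prod (μ k)).map (fun z => Function.update z.1 k z.2) = Measure.pi μ := by
  symm
  have hm : Measurable fun z : (∀ i, E i) × E k => Function.update z.1 k z.2 := by
    refine measurable_pi_lambda _ fun i => ?_
    by_cases h : i = k
    · subst h; simpa using measurable_snd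
    · simp only [Function.update_of_ne h]; fun_prop
  refine Measure.pi_eq fun s hs => ?_
  rw [Measure.map_apply hm (MeasurableSet.univ_pi hs)]
  have : (fun z : (∀ i, E i) × E k => Function.update z.1 k z.2) ⁻¹' Set.univ.pi s =
      (Set.univ.pi (Function.update s k Set.univ)) ×ˢ s k := by
    ext z
    simp only [Set.mem_preimage, Set.mem_pi, Set.mem_univ, true_implies, Set.mem_prod]
    constructor
    · intro h
      refine ⟨fun i => ?_, by simpa using h k⟩
      by_cases hi : i = k
      · subst hi; simp
      · simpa [Function.update_of_ne hi] using h i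
    · rintro ⟨h1, h2⟩ i
      by_cases hi : i = k
      · subst hi; simpa using h2
      · simpa [Function.update_of_ne hi] using h1 i
  rw [this, Measure.prod_prod, Measure.pi_pi, ← Finset.mul_prod_erase _ _ (Finset.mem_univ k),
    ← Finset.mul_prod_erase (f := fun i => μ i (s i)) _ (Finset.mem_univ k)]
  have h1 : ∏ x ∈ Finset.univ.erase k, μ x (Function.update s k Set.univ x) =
      ∏ x ∈ Finset.univ.erase k, μ x (s x) :=
    Finset.prod_congr rfl fun i hi => by rw [Function.update_of_ne (Finset.ne_of_mem_erase hi)]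
  rw [h1]
  simp [mul_comm]

/-- Markov's inequality for the exponential of a sum of i.i.d. variables. -/
theorem measure_pi_sum_nonneg_le {E : Type*} [MeasurableSpace E] (μ : Measure E)
    [IsProbabilityMeasure μ] (k : ℕ) (f : E → ℝ) (hf : Measurable f) :
    (Measure.pi fun _ : Fin k => μ) {x | 0 ≤ ∑ s, f (x s)} ≤
      (∫⁻ x, ENNReal.ofReal (Real.exp (f x)) ∂μ) ^ k := by
  have hg : Measurable fun x => ENNReal.ofReal (Real.exp (f x)) := by fun_prop
  calc (Measure.pi fun _ : Fin k => μ) {x | 0 ≤ ∑ s, f (x s)}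
      ≤ (Measure.pi fun _ : Fin k => μ) {x | 1 ≤ ∏ s, ENNReal.ofReal (Real.exp (f (x s)))} := by
        refine measure_mono fun x hx => ?_
        simp only [Set.mem_ofPred_eq] at hx ⊢
        rw [← ENNReal.ofReal_prod_of_nonneg fun _ _ => (Real.exp_pos _).le, ← Real.exp_sum]
        simpa using hx
    _ ≤ ∫⁻ x, ∏ s, ENNReal.ofReal (Real.exp (f (x s))) ∂(Measure.pi fun _ : Fin k => μ) := by
        have := mul_meas_ge_le_lintegral₀ (μ := Measure.pi fun _ : Fin k => μ)
          (f := fun x => ∏ s, ENNReal.ofReal (Real.exp (f (x s))))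
          (Finset.measurable_fun_prod _ fun s _ => hg.comp (measurable_pi_apply s)).aemeasurable 1
        simpa using this
    _ = _ := by
        rw [lintegral_prod_eq_prod_lintegral_of_indepFun Finset.univ
          (fun (s : Fin k) (x : Fin k → E) => ENNReal.ofReal (Real.exp (f (x s))))
          (iIndepFun_pi (μ := fun _ : Fin k => μ)
            (X := fun _ x => ENNReal.ofReal (Real.exp (f x))) fun _ => hg.aemeasurable)
          fun s => hg.comp (measurable_pi_apply s)]
        have h (s : Fin k) :=
          (measurePreserving_eval (fun _ : Fin k => μ) s).lintegral_comp hg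
        simp only [Function.eval] at h
        simp [h]

end PiMeasure

section Gaussian

/-- The image of a product of centred Gaussians under a linear map with orthogonal rows is a
product of centred Gaussians. -/
theorem map_mulVec_pi_gaussianReal {ι κ : Type*} [Fintype ι] [Fintype κ] (v : ι → NNReal)
    (M : Matrix κ ι ℝ) (hM : ∀ c c', c ≠ c' → ∑ a, (v a : ℝ) * (M c a * M c' a) = 0) :
    (Measure.pi fun a => gaussianReal 0 (v a)).map (fun x => M *ᵥ x) =
      Measure.pi fun c => gaussianReal 0 (∑ a, (v a : ℝ) * M c a ^ 2).toNNReal := by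
  classical
  set P := Measure.pi fun a => gaussianReal 0 (v a)
  have hind : iIndepFun (fun a (x : ι → ℝ) => x a) P :=
    iIndepFun_pi (μ := fun a => gaussianReal 0 (v a)) (X := fun _ => id)
      fun _ => aemeasurable_id
  have hlaw : ∀ a, P.map (fun x => x a) = gaussianReal 0 (v a) :=
    fun a => (measurePreserving_eval (fun a => gaussianReal 0 (v a)) a).map_eq
  have hga : ∀ a, HasGaussianLaw (fun x : ι → ℝ => x a) P := fun a =>
    ⟨by rw [hlaw]; infer_instance⟩
  have hg : HasGaussianLaw (fun x : ι → ℝ => x) P := iIndepFun.hasGaussianLaw hga hind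
  have hae : ∀ a, AEMeasurable (fun x : ι → ℝ => x a) P :=
    fun a => (measurable_pi_apply a).aemeasurable
  have hmem : ∀ a, MemLp (fun x : ι → ℝ => x a) 2 P := fun a => (hga a).memLp_two
  have hvar : ∀ a, Var[fun x : ι → ℝ => x a; P] = v a := by
    intro a
    have := variance_map (μ := P) (X := fun x : ℝ => x) (Y := fun x : ι → ℝ => x a)
      (by fun_prop) (hae a)
    rw [hlaw, variance_fun_id_gaussianReal] at this
    exact this.symm
  have hmean : ∀ a, P[fun x : ι → ℝ => x a] = 0 := by
    intro a
    have := integral_map (μ := P) (φ := fun x : ι → ℝ => x a) (f := fun x : ℝ => x)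
      (hae a) (by fun_prop)
    rw [hlaw, integral_id_gaussianReal] at this
    exact this.symm
  have hcov0 : ∀ a b, cov[fun x : ι → ℝ => x a, fun x => x b; P] =
      if a = b then (v a : ℝ) else 0 := by
    intro a b
    split_ifs with h
    · subst h
      rw [covariance_self (hae a), hvar]
    · exact (hind.indepFun h).covariance_eq_zero (hmem a) (hmem b)
  have hcov : ∀ c c', cov[fun x : ι → ℝ => (M *ᵥ x) c, fun x => (M *ᵥ x) c'; P] =
      ∑ a, (v a : ℝ) * (M c a * M c' a) := by
    intro c c'
    simp only [mulVec, dotProduct]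
    rw [covariance_fun_sum_fun_sum (fun a => (hmem a).const_mul _) (fun a => (hmem a).const_mul _)]
    refine Finset.sum_congr rfl fun a _ => ?_
    simp only [covariance_const_mul_left, covariance_const_mul_right, hcov0]
    simp
    ring
  have hgM : HasGaussianLaw (fun x : ι → ℝ => M *ᵥ x) P :=
    hg.map_fun (LinearMap.toContinuousLinearMap (Matrix.toLin' M))
  have hi : iIndepFun (fun c (x : ι → ℝ) => (M *ᵥ x) c) P :=
    HasGaussianLaw.iIndepFun_of_covariance_eq_zero hgM fun c c' h => by rw [hcov, hM c c' h]
  have := hi.map_fun_eq_pi_map fun c => (by fun_prop)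
  change P.map (fun x c => (M *ᵥ x) c) = _
  rw [this]
  congr 1
  ext1 c
  rw [HasGaussianLaw.map_eq_gaussianReal (hgM.eval c), ← covariance_self (by fun_prop), hcov]
  congr 1
  · simp only [mulVec, dotProduct]
    rw [integral_finsetSum _ fun a _ => ((hmem a).integrable one_le_two).const_mul _]
    simp [integral_const_mul, hmean]
  · simp [sq]

/-- The law of a linear functional of independent centred Gaussians. -/
theorem map_dotProduct_pi_gaussianReal {ι : Type*} [Fintype ι] (v : ι → NNReal) (w : ι → ℝ) :
    (Measure.pi fun a => gaussianReal 0 (v a)).map (fun x => w ⬝ᵥ x) =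
      gaussianReal 0 (∑ a, (v a : ℝ) * w a ^ 2).toNNReal := by
  have h := map_mulVec_pi_gaussianReal v (Matrix.of fun _ : Unit => w) (by simp)
  have h2 := congrArg (Measure.map fun y : Unit → ℝ => y ()) h
  rw [Measure.map_map (by fun_prop) (by fun_prop),
    (measurePreserving_eval _ ()).map_eq] at h2
  exact h2

end Gaussian


section GaussianRatio

theorem le_gaussianReal_Icc {a b R : ℝ} (ha : -R ≤ a) (hb : b ≤ R) :
    ENNReal.ofReal ((b - a) * gaussianPDFReal 0 1 R) ≤ gaussianReal 0 1 (Set.Icc a b) := by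
  rw [gaussianReal_apply 0 one_ne_zero]
  calc ENNReal.ofReal ((b - a) * gaussianPDFReal 0 1 R)
      = ∫⁻ _ in Set.Icc a b, ENNReal.ofReal (gaussianPDFReal 0 1 R) := by
        rw [setLIntegral_const, Real.volume_Icc, mul_comm,
          ENNReal.ofReal_mul (gaussianPDFReal_nonneg _ _ _)]
    _ ≤ ∫⁻ x in Set.Icc a b, gaussianPDF 0 1 x := by
        refine setLIntegral_mono (by fun_prop) fun x hx => ?_
        refine ENNReal.ofReal_le_ofReal ?_
        simp only [gaussianPDFReal]
        gcongr ?_ * Real.exp (-?_ / _)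
        exact sq_le_sq.2 (by
          simp only [sub_zero]
          exact (abs_le.2 ⟨by linarith [hx.1], by linarith [hx.2]⟩).trans (le_abs_self R))

/-- The standard Gaussian measure on `ℝ^ι`. -/
noncomputable def stdPi (ι : Type*) [Fintype ι] : Measure (ι → ℝ) :=
  Measure.pi fun _ => gaussianReal 0 1

instance (ι : Type*) [Fintype ι] : IsProbabilityMeasure (stdPi ι) := by
  unfold stdPi; infer_instance

variable {ι : Type*} [Fintype ι]

theorem dotProduct_self_pos {w : ι → ℝ} (hw : w ≠ 0) : 0 < w ⬝ᵥ w := by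
  have h0 : 0 ≤ w ⬝ᵥ w := Finset.sum_nonneg fun i _ => mul_self_nonneg _
  exact lt_of_le_of_ne h0 fun h => hw (dotProduct_self_eq_zero.1 h.symm)

theorem map_dotProduct_stdPi {w : ι → ℝ} (hw : w ≠ 0) :
    (stdPi ι).map (fun x => (w ⬝ᵥ x) / √(w ⬝ᵥ w)) = gaussianReal 0 1 := by
  have hpos := dotProduct_self_pos hw
  have h := map_dotProduct_pi_gaussianReal (fun _ : ι => 1) ((√(w ⬝ᵥ w))⁻¹ • w)
  have h1 : (∑ a : ι, ((1 : NNReal) : ℝ) * ((√(w ⬝ᵥ w))⁻¹ • w) a ^ 2) = 1 := by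
    simp only [NNReal.coe_one, one_mul, Pi.smul_apply, smul_eq_mul, mul_pow, ← Finset.mul_sum,
      inv_pow, Real.sq_sqrt hpos.le]
    have : ∑ i, w i ^ 2 = w ⬝ᵥ w := by simp [dotProduct, sq]
    rw [this, inv_mul_cancel₀ hpos.ne']
  rw [h1] at h
  rw [Real.toNNReal_one] at h
  rw [← h]
  unfold stdPi
  congr 1
  ext x
  rw [smul_dotProduct, smul_eq_mul, div_eq_inv_mul]

theorem ae_dotProduct_ne_zero {w : ι → ℝ} (hw : w ≠ 0) : ∀ᵐ x ∂stdPi ι, w ⬝ᵥ x ≠ 0 := by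
  have hpos := Real.sqrt_pos.2 (dotProduct_self_pos hw)
  have h : gaussianReal 0 1 {0} = 0 := by
    have := nullSingletonClass_gaussianReal (μ := 0) (v := 1) one_ne_zero
    exact measure_singleton _
  rw [← map_dotProduct_stdPi hw, Measure.map_apply (by fun_prop) (measurableSet_singleton _)] at h
  rw [ae_iff]
  convert h using 2
  ext x
  simp [hpos.ne']

/-- `P(|⟨w, a⟩| ≤ τ |⟨w, b⟩|)` is at least of order `τ` for independent standard Gaussian vectors
`a`, `b`. -/
theorem le_measure_abs_dotProduct_le {w : ι → ℝ} (hw : w ≠ 0) {τ : ℝ} (h0 : 0 < τ) (h1 : τ ≤ 1) :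
    ENNReal.ofReal (2 * gaussianPDFReal 0 1 1 * gaussianPDFReal 0 1 2 * τ) ≤
      ((stdPi ι).prod (stdPi ι)) {z | |w ⬝ᵥ z.1| ≤ τ * |w ⬝ᵥ z.2|} := by
  have hpos := Real.sqrt_pos.2 (dotProduct_self_pos hw)
  have hA : ENNReal.ofReal ((τ - -τ) * gaussianPDFReal 0 1 1) ≤
      stdPi ι {x | (w ⬝ᵥ x) / √(w ⬝ᵥ w) ∈ Set.Icc (-τ) τ} := by
    refine (le_gaussianReal_Icc (by linarith) h1).trans_eq ?_
    rw [← map_dotProduct_stdPi hw, Measure.map_apply (by fun_prop) measurableSet_Icc]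
    rfl
  have hB : ENNReal.ofReal ((2 - 1) * gaussianPDFReal 0 1 2) ≤
      stdPi ι {x | (w ⬝ᵥ x) / √(w ⬝ᵥ w) ∈ Set.Icc 1 2} := by
    refine (le_gaussianReal_Icc (by norm_num) le_rfl).trans_eq ?_
    rw [← map_dotProduct_stdPi hw, Measure.map_apply (by fun_prop) measurableSet_Icc]
    rfl
  calc _ = ENNReal.ofReal ((τ - -τ) * gaussianPDFReal 0 1 1) *
        ENNReal.ofReal ((2 - 1) * gaussianPDFReal 0 1 2) := by
        rw [← ENNReal.ofReal_mul (mul_nonneg (by linarith) (gaussianPDFReal_nonneg _ _ _))]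
        congr 1; ring
    _ ≤ _ := mul_le_mul' hA hB
    _ = ((stdPi ι).prod (stdPi ι)) _ := (Measure.prod_prod _ _).symm
    _ ≤ _ := by
        refine measure_mono ?_
        rintro ⟨a, b⟩ ⟨ha, hb⟩
        simp only [Set.mem_ofPred_eq, Set.mem_Icc] at ha hb ⊢
        rw [← abs_le, abs_div, abs_of_pos hpos, div_le_iff₀ hpos] at ha
        rw [le_div_iff₀ hpos] at hb
        refine ha.trans (mul_le_mul_of_nonneg_left ?_ h0.le)
        linarith [le_abs_self (w ⬝ᵥ b)]

variable [DecidableEq ι]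

/-- The square matrix with columns `z (some c)`. -/
def colMatrix (z : Option ι → ι → ℝ) : Matrix ι ι ℝ := Matrix.of fun r c => z (some c) r

theorem colMatrix_update_some {ι : Type*} [DecidableEq ι] (z : Option ι → ι → ℝ) (c : ι)
    (b : ι → ℝ) :
    colMatrix (Function.update z (some c) b) = (colMatrix z).updateCol c b := by
  ext r k
  by_cases h : k = c
  · subst h; simp [colMatrix]
  · simp [colMatrix, Function.update_of_ne, h]

theorem colMatrix_update_none {ι : Type*} [DecidableEq ι] (z : Option ι → ι → ℝ) (b : ι → ℝ) :
    colMatrix (Function.update z none b) = colMatrix z := by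
  ext r k
  simp [colMatrix]

theorem det_updateCol_eq_dotProduct (M : Matrix ι ι ℝ) (c : ι) (b : ι → ℝ) :
    (M.updateCol c b).det = M.adjugate c ⬝ᵥ b := by
  rw [← cramer_apply, cramer_eq_adjugate_mulVec]; rfl

/-- The standard Gaussian measure on families of `|ι| + 1` vectors of `ℝ^ι`. -/
noncomputable def stdCols (ι : Type*) [Fintype ι] : Measure (Option ι → ι → ℝ) :=
  Measure.pi fun _ => stdPi ι

instance : IsProbabilityMeasure (stdCols ι) := by
  unfold stdCols; infer_instance

theorem measurable_det_of {α : Type*} [MeasurableSpace α] {M : α → Matrix ι ι ℝ}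
    (hM : ∀ r c, Measurable fun x => M x r c) : Measurable fun x => (M x).det := by
  simp only [det_apply]
  refine Finset.measurable_fun_sum _ fun σ _ => ?_
  refine Measurable.const_smul (Finset.measurable_fun_prod _ fun i _ => hM _ _) _

/-- A Gaussian matrix is almost surely nonsingular. -/
theorem ae_det_colMatrix_ne_zero : ∀ᵐ z ∂stdCols ι, (colMatrix z).det ≠ 0 := by
  suffices H : ∀ s : Finset ι, ∀ᵐ z ∂stdCols ι,
      (Matrix.of fun r c => if c ∈ s then z (some c) r else (1 : Matrix ι ι ℝ) r c).det ≠ 0 by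
    filter_upwards [H Finset.univ] with z hz
    simpa [colMatrix] using hz
  intro s
  induction s using Finset.induction_on with
  | empty =>
    refine Filter.Eventually.of_forall fun z => ?_
    have : (Matrix.of fun r c => if c ∈ (∅ : Finset ι) then z (some c) r
        else (1 : Matrix ι ι ℝ) r c) = 1 := by ext; simp
    rw [this, det_one]; exact one_ne_zero
  | insert c s hc ih =>
    have hmeas : ∀ t : Finset ι, MeasurableSet {z : Option ι → ι → ℝ |
        (Matrix.of fun r c => if c ∈ t then z (some c) r else (1 : Matrix ι ι ℝ) r c).det ≠ 0} := by
      intro t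
      refine (measurable_det_of fun r c => ?_) (measurableSet_singleton (0 : ℝ)).compl
      by_cases h : c ∈ t
      · simp only [of_apply, h, if_true]; fun_prop
      · simp only [of_apply, h, if_false]; fun_prop
    have hmap := map_update_pi_prod (fun _ : Option ι => stdPi ι) (some c)
    have hmu : Measurable fun z : (Option ι → ι → ℝ) × (ι → ℝ) =>
        Function.update z.1 (some c) z.2 := by
      refine measurable_pi_lambda _ fun i => ?_
      by_cases h : i = some c
      · subst h; simpa using measurable_snd
      · simp only [Function.update_of_ne h]; fun_prop
    unfold stdCols at ih ⊢
    rw [← hmap, ae_map_iff hmu.aemeasurable (hmeas _), Measure.ae_prod_iff_ae_ae]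
    · filter_upwards [ih] with z hz
      set M : Matrix ι ι ℝ :=
        Matrix.of fun r c => if c ∈ s then z (some c) r else (1 : Matrix ι ι ℝ) r c with hM
      have hw : M.adjugate c ≠ 0 := by
        intro h0
        apply hz
        have h1 : M = M.updateCol c (Pi.single c 1) := by
          ext r k
          by_cases h : k = c
          · subst h; simp [hM, hc, Matrix.one_apply, Pi.single_apply]
          · simp [updateCol_ne h]
        rw [h1, det_updateCol_eq_dotProduct, h0, zero_dotProduct]
      filter_upwards [ae_dotProduct_ne_zero hw] with b hb
      rw [← det_updateCol_eq_dotProduct] at hb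
      convert hb using 3
      ext r k
      by_cases h : k = c
      · subst h; simp
      · simp [hM, h, Function.update_of_ne]
    · exact hmu (hmeas _)

theorem inv_mulVec_apply_eq_div (M : Matrix ι ι ℝ) (b : ι → ℝ) (c : ι) :
    (M⁻¹ *ᵥ b) c = (M.updateCol c b).det / M.det := by
  rw [inv_def, Ring.inverse_eq_inv', smul_mulVec, ← cramer_eq_adjugate_mulVec, Pi.smul_apply,
    cramer_apply, smul_eq_mul, inv_mul_eq_div]

/-- The ratio of determinants given by Cramer's rule for the system with matrix `colMatrix z` and
right-hand side `z none`. -/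
noncomputable def cramerRatio (c : ι) (z : Option ι → ι → ℝ) : ℝ :=
  ((colMatrix z)⁻¹ *ᵥ z none) c

theorem cramerRatio_eq (c : ι) (z : Option ι → ι → ℝ) :
    cramerRatio c z = ((colMatrix z).updateCol c (z none)).det / (colMatrix z).det :=
  inv_mulVec_apply_eq_div _ _ _

theorem measurable_cramerRatio (c : ι) : Measurable (cramerRatio c) := by
  have : cramerRatio c = fun z =>
      ((colMatrix z).updateCol c (z none)).det / (colMatrix z).det := funext (cramerRatio_eq c)
  rw [this]
  refine Measurable.div (measurable_det_of fun r k => ?_) (measurable_det_of fun r k => ?_)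
  · by_cases h : k = c
    · subst h; simp only [updateCol_self]; fun_prop
    · simp only [updateCol_ne h, colMatrix, of_apply]; fun_prop
  · simp only [colMatrix, of_apply]; fun_prop

theorem le_measure_abs_cramerRatio_le (c : ι) {τ : ℝ} (h0 : 0 < τ) (h1 : τ ≤ 1) :
    ENNReal.ofReal (2 * gaussianPDFReal 0 1 1 * gaussianPDFReal 0 1 2 * τ) ≤
      stdCols ι {z | |cramerRatio c z| ≤ τ} := by
  have hmu : ∀ k : Option ι, Measurable fun z : (Option ι → ι → ℝ) × (ι → ℝ) =>
      Function.update z.1 k z.2 := by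
    intro k
    refine measurable_pi_lambda _ fun i => ?_
    by_cases h : i = k
    · subst h; simpa using measurable_snd
    · simp only [Function.update_of_ne h]; fun_prop
  have hS : MeasurableSet {z : Option ι → ι → ℝ | |cramerRatio c z| ≤ τ} :=
    measurableSet_le (measurable_cramerRatio c).abs measurable_const
  have hmap1 : ((stdCols ι).prod (stdPi ι)).map (fun z => Function.update z.1 (some c) z.2) =
      stdCols ι := map_update_pi_prod (fun _ : Option ι => stdPi ι) (some c)
  have hmap2 : ((stdCols ι).prod (stdPi ι)).map (fun z => Function.update z.1 none z.2) =
      stdCols ι := map_update_pi_prod (fun _ : Option ι => stdPi ι) none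
  have hmap : ((stdCols ι).prod ((stdPi ι).prod (stdPi ι))).map
      (fun z => Function.update (Function.update z.1 (some c) z.2.2) none z.2.1) = stdCols ι := by
    have e1 : MeasurePreserving (fun z : (Option ι → ι → ℝ) × (ι → ℝ) × (ι → ℝ) => (z.1, z.2.swap))
        ((stdCols ι).prod ((stdPi ι).prod (stdPi ι)))
        ((stdCols ι).prod ((stdPi ι).prod (stdPi ι))) :=
      (MeasurePreserving.id (stdCols ι)).prod Measure.measurePreserving_swap
    have e2 := (measurePreserving_prodAssoc (stdCols ι) (stdPi ι) (stdPi ι)).symm.comp e1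
    have e3 := ((MeasurePreserving.mk (hmu (some c)) hmap1).prod
      (MeasurePreserving.id (stdPi ι))).comp e2
    exact ((MeasurePreserving.mk (hmu none) hmap2).comp e3).map_eq
  have hm : Measurable fun z : (Option ι → ι → ℝ) × (ι → ℝ) × (ι → ℝ) =>
      Function.update (Function.update z.1 (some c) z.2.2) none z.2.1 :=
    (hmu none).comp (((hmu (some c)).comp (measurable_fst.prodMk measurable_snd.snd)).prodMk
      measurable_snd.fst)
  rw [← hmap, Measure.map_apply hm hS, Measure.prod_apply (hm hS)]
  calc _ = ∫⁻ _, ENNReal.ofReal (2 * gaussianPDFReal 0 1 1 * gaussianPDFReal 0 1 2 * τ)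
        ∂(stdCols ι) := by simp
    _ ≤ _ := by
        refine lintegral_mono_ae ?_
        filter_upwards [ae_det_colMatrix_ne_zero (ι := ι)] with z hz
        have hw : (colMatrix z).adjugate c ≠ 0 := by
          intro h
          apply hz
          have h1 : colMatrix z = (colMatrix z).updateCol c fun r => colMatrix z r c := by
            rw [updateCol_eq_self]
          rw [h1, det_updateCol_eq_dotProduct, h, zero_dotProduct]
        refine (le_measure_abs_dotProduct_le hw h0 h1).trans (measure_mono ?_)
        rintro ⟨a, b⟩ hab
        simp only [Set.mem_ofPred_eq, Set.mem_preimage, ← det_updateCol_eq_dotProduct] at hab ⊢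
        rw [cramerRatio_eq, colMatrix_update_none, colMatrix_update_some, Function.update_self,
          updateCol_idem, abs_div]
        exact div_le_of_le_mul₀ (abs_nonneg _) h0.le hab

theorem map_neg_none_stdCols :
    (stdCols ι).map (fun z => Function.update z none (-z none)) = stdCols ι := by
  have hneg : (stdPi ι).map (fun x => -x) = stdPi ι := by
    have := Measure.pi_map_pi (μ := fun _ : ι => gaussianReal 0 1) (f := fun _ x => -x)
      (fun _ => by fun_prop)
    simp only [gaussianReal_map_neg, neg_zero] at this
    exact this
  have := Measure.pi_map_pi (μ := fun _ : Option ι => stdPi ι)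
    (f := fun o x => if o = none then -x else x)
    (hμ := fun o => by
      by_cases h : o = none
      · simp only [h, if_true, hneg]; infer_instance
      · simp only [h, if_false, Measure.map_id']; infer_instance)
    (fun o => by
      by_cases h : o = none
      · simp only [h, if_true]; fun_prop
      · simp only [h, if_false]; fun_prop)
  unfold stdCols
  convert this using 2
  · ext z o r
    cases o <;> simp
  · ext1 o
    by_cases h : o = none
    · simp only [h, if_true, hneg]
    · simp only [h, if_false, Measure.map_id']

theorem cramerRatio_neg (c : ι) (z : Option ι → ι → ℝ) :
    cramerRatio c (Function.update z none (-z none)) = -cramerRatio c z := by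
  simp [cramerRatio, colMatrix_update_none, mulVec_neg]

/-- The two tails of a coordinate of the solution of a Gaussian linear system have mass at most
`1/2 - c τ` beyond `τ`. -/
theorem measure_cramerRatio_tail_le (c : ι) {τ : ℝ} (h0 : 0 < τ) (h1 : τ ≤ 1) :
    stdCols ι {z | τ < cramerRatio c z} ≤
        ENNReal.ofReal (1 / 2 - gaussianPDFReal 0 1 1 * gaussianPDFReal 0 1 2 * τ) ∧
      stdCols ι {z | cramerRatio c z < -τ} ≤
        ENNReal.ofReal (1 / 2 - gaussianPDFReal 0 1 1 * gaussianPDFReal 0 1 2 * τ) := by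
  have hr := measurable_cramerRatio c
  have hS1 : MeasurableSet {z : Option ι → ι → ℝ | τ < cramerRatio c z} :=
    measurableSet_lt measurable_const hr
  have hS2 : MeasurableSet {z : Option ι → ι → ℝ | cramerRatio c z < -τ} :=
    measurableSet_lt hr measurable_const
  have hS3 : MeasurableSet {z : Option ι → ι → ℝ | |cramerRatio c z| ≤ τ} :=
    measurableSet_le hr.abs measurable_const
  have heq : (stdCols ι).real {z | cramerRatio c z < -τ} =
      (stdCols ι).real {z | τ < cramerRatio c z} := by
    have hm : Measurable fun z : Option ι → ι → ℝ => Function.update z none (-z none) := by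
      refine measurable_pi_lambda _ fun o => ?_
      cases o
      · simp only [Function.update_self]; fun_prop
      · simp only [ne_eq, reduceCtorEq, not_false_eq_true, Function.update_of_ne]; fun_prop
    conv_lhs => rw [← map_neg_none_stdCols]
    rw [map_measureReal_apply hm hS2]
    congr 1
    ext z
    simp [cramerRatio_neg]
  have hsum : (stdCols ι).real {z | τ < cramerRatio c z} +
      (stdCols ι).real {z | cramerRatio c z < -τ} +
      (stdCols ι).real {z | |cramerRatio c z| ≤ τ} ≤ 1 := by
    rw [← measureReal_union _ hS2, ← measureReal_union _ hS3]
    · exact measureReal_le_one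
    · rw [Set.disjoint_left]
      rintro z (hz | hz) hz' <;> simp only [Set.mem_ofPred_eq] at hz hz' <;>
        rw [abs_le] at hz' <;> linarith [hz'.1, hz'.2]
    · rw [Set.disjoint_left]
      intro z hz hz'
      simp only [Set.mem_ofPred_eq] at hz hz'
      linarith
  have h3 := le_measure_abs_cramerRatio_le c h0 h1
  rw [ENNReal.ofReal_le_iff_le_toReal (measure_ne_top _ _)] at h3
  change _ ≤ (stdCols ι).real _ at h3
  have key : (stdCols ι).real {z | τ < cramerRatio c z} ≤
      1 / 2 - gaussianPDFReal 0 1 1 * gaussianPDFReal 0 1 2 * τ := by linarith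
  rw [← ENNReal.ofReal_toReal (measure_ne_top (stdCols ι) {z | τ < cramerRatio c z}),
    ← ENNReal.ofReal_toReal (measure_ne_top (stdCols ι) {z | cramerRatio c z < -τ})]
  exact ⟨ENNReal.ofReal_le_ofReal key, ENNReal.ofReal_le_ofReal (heq.le.trans key)⟩

end GaussianRatio


section Median

/-- In a sorted list, the `r`-th entry satisfies a downward closed predicate iff more than `r`
entries do. -/
theorem getD_iff_lt_countP (p : ℝ → Prop) [DecidablePred p] (hp : ∀ a b, a ≤ b → p b → p a) :
    ∀ (l : List ℝ), l.Pairwise (· ≤ ·) → ∀ r, r < l.length →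
      (p (l.getD r 0) ↔ r < l.countP p)
  | [], _, r, hr => absurd hr (by simp)
  | a :: l, hl, r, hr => by
    rw [List.pairwise_cons] at hl
    have hall : ¬ p a → l.countP p = 0 := fun ha => by
      rw [List.countP_eq_zero]
      intro b hb
      simpa using fun h => ha (hp a b (hl.1 b hb) h)
    cases r with
    | zero =>
      simp only [List.getD_cons_zero, List.countP_cons]
      by_cases ha : p a
      · simp [ha]
      · simp [ha, hall ha]
    | succ r =>
      have hr' : r < l.length := by simpa using hr
      have ih := getD_iff_lt_countP p hp l hl.2 r hr'
      simp only [List.getD_cons_succ, List.countP_cons, ih]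
      by_cases ha : p a
      · simp [ha]
      · simp [ha, hall ha]

/-- The `r`-th order statistic (counting from `0`) of a multiset. -/
noncomputable def ordStat (s : Multiset ℝ) (r : ℕ) : ℝ := (s.sort (· ≤ ·)).getD r 0

theorem ordStat_iff (p : ℝ → Prop) [DecidablePred p] (hp : ∀ a b, a ≤ b → p b → p a)
    {s : Multiset ℝ} {r : ℕ} (hr : r < s.card) : p (ordStat s r) ↔ r < s.countP p := by
  have h := getD_iff_lt_countP p hp (s.sort (· ≤ ·)) (s.pairwise_sort _) r (by simpa using hr)
  rw [ordStat, h]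
  conv_rhs => rw [← Multiset.sort_eq s (· ≤ ·), Multiset.coe_countP]

theorem ordStat_le_iff {s : Multiset ℝ} {r : ℕ} (hr : r < s.card) (t : ℝ) :
    ordStat s r ≤ t ↔ r < s.countP (· ≤ t) :=
  ordStat_iff (· ≤ t) (fun _ _ h h' => h.trans h') hr

theorem ordStat_lt_iff {s : Multiset ℝ} {r : ℕ} (hr : r < s.card) (t : ℝ) :
    ordStat s r < t ↔ r < s.countP (· < t) :=
  ordStat_iff (· < t) (fun _ _ h h' => h.trans_lt h') hr

theorem ordStat_mono {s : Multiset ℝ} {r q : ℕ} (hrq : r ≤ q) (hq : q < s.card) :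
    ordStat s r ≤ ordStat s q :=
  (ordStat_le_iff (hrq.trans_lt hq) _).2 (hrq.trans_lt ((ordStat_le_iff hq _).1 le_rfl))

theorem sampleMedian_eq {k : ℕ} (x : Fin k → ℝ) :
    sampleMedian x = (ordStat (Finset.univ.val.map x) ((k - 1) / 2) +
      ordStat (Finset.univ.val.map x) (k / 2)) / 2 := rfl

theorem countP_map_univ {k : ℕ} (x : Fin k → ℝ) (p : ℝ → Prop) [DecidablePred p] :
    (Finset.univ.val.map x).countP p = (Finset.univ.filter fun s => p (x s)).card := by
  rw [Multiset.countP_map]; rfl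

theorem le_two_mul_card_of_lt_sampleMedian {k : ℕ} (hk : 0 < k) {x : Fin k → ℝ} {a : ℝ}
    (h : a < sampleMedian x) : k ≤ 2 * (Finset.univ.filter fun s => a < x s).card := by
  have hc : (Finset.univ.val.map x).card = k := by simp
  have hq : k / 2 < (Finset.univ.val.map x).card := by rw [hc]; omega
  have hm := ordStat_mono (show (k - 1) / 2 ≤ k / 2 by omega) hq
  rw [sampleMedian_eq] at h
  have h1 : ¬ ordStat (Finset.univ.val.map x) (k / 2) ≤ a := by intro h'; linarith
  rw [ordStat_le_iff hq, countP_map_univ] at h1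
  have h2 := Finset.card_filter_add_card_filter_not (s := Finset.univ) (fun s => x s ≤ a)
  simp only [not_le, Finset.card_univ, Fintype.card_fin] at h2
  omega

theorem le_two_mul_card_of_sampleMedian_lt {k : ℕ} (hk : 0 < k) {x : Fin k → ℝ} {a : ℝ}
    (h : sampleMedian x < a) : k ≤ 2 * (Finset.univ.filter fun s => x s < a).card := by
  have hc : (Finset.univ.val.map x).card = k := by simp
  have hq : k / 2 < (Finset.univ.val.map x).card := by rw [hc]; omega
  have hm := ordStat_mono (show (k - 1) / 2 ≤ k / 2 by omega) hq
  rw [sampleMedian_eq] at h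
  have h1 : ordStat (Finset.univ.val.map x) ((k - 1) / 2) < a := by linarith
  rw [ordStat_lt_iff (by omega), countP_map_univ] at h1
  omega

theorem measurable_sampleMedian {k : ℕ} : Measurable (sampleMedian (k := k)) := by
  rcases Nat.eq_zero_or_pos k with rfl | hk
  · exact measurable_const' fun x y => congrArg _ (Subsingleton.elim x y)
  have h : ∀ r < k, Measurable fun x : Fin k → ℝ => ordStat (Finset.univ.val.map x) r := by
    intro r hr
    refine measurable_of_Iic fun t => ?_
    have : (fun x : Fin k → ℝ => ordStat (Finset.univ.val.map x) r) ⁻¹' Set.Iic t =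
        {x | r < ∑ s, if x s ≤ t then 1 else 0} := by
      ext x
      simp only [Set.mem_preimage, Set.mem_Iic, Set.mem_ofPred_eq]
      rw [ordStat_le_iff (by simpa using hr), countP_map_univ, Finset.card_filter]
    rw [this]
    refine measurableSet_lt measurable_const (Finset.measurable_fun_sum _ fun s _ => ?_)
    exact Measurable.ite (measurableSet_le (measurable_pi_apply s) measurable_const)
      measurable_const measurable_const
  have : sampleMedian (k := k) = fun x => (ordStat (Finset.univ.val.map x) ((k - 1) / 2) +
      ordStat (Finset.univ.val.map x) (k / 2)) / 2 := funext sampleMedian_eq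
  rw [this]
  exact ((h _ (by omega)).add (h _ (by omega))).div_const _

/-- An event of probability at most `1/2 - γ` occurs in at least half of `k` independent trials
with probability at most `exp (-k γ²)`. -/
theorem measure_pi_half_le {E : Type*} [MeasurableSpace E] (μ : Measure E)
    [IsProbabilityMeasure μ] (k : ℕ) {S : Set E} [DecidablePred (· ∈ S)] (hS : MeasurableSet S)
    {γ : ℝ} (h0 : 0 ≤ γ) (h1 : γ ≤ 1 / 2) (hq : μ S ≤ ENNReal.ofReal (1 / 2 - γ)) :
    (Measure.pi fun _ : Fin k => μ)
        {x | k ≤ 2 * (Finset.univ.filter fun s => x s ∈ S).card} ≤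
      ENNReal.ofReal (Real.exp (-(k * γ ^ 2))) := by
  set h : ℝ := 2 * γ
  let f : E → ℝ := fun y => if y ∈ S then h else -h
  have hf : Measurable f := Measurable.ite hS measurable_const measurable_const
  have hInt : ∫⁻ y, ENNReal.ofReal (Real.exp (f y)) ∂μ ≤ ENNReal.ofReal (Real.exp (-γ ^ 2)) := by
    have h2 : ∀ y, ENNReal.ofReal (Real.exp (f y)) = S.indicator
        (fun _ => ENNReal.ofReal (Real.exp h - Real.exp (-h))) y + ENNReal.ofReal (Real.exp (-h)) := by
      intro y
      have : Real.exp (-h) ≤ Real.exp h := Real.exp_le_exp.2 (by simp only [h]; linarith)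
      by_cases hy : y ∈ S
      · simp only [f, hy, if_true, Set.indicator_of_mem]
        rw [← ENNReal.ofReal_add (by linarith) (Real.exp_pos _).le, sub_add_cancel]
      · simp only [f, hy, if_false, not_false_eq_true, Set.indicator_of_notMem, zero_add]
    simp only [h2]
    rw [lintegral_add_right _ measurable_const, lintegral_indicator_const hS, lintegral_const,
      measure_univ, mul_one]
    calc _ ≤ ENNReal.ofReal (Real.exp h - Real.exp (-h)) * ENNReal.ofReal (1 / 2 - γ) +
          ENNReal.ofReal (Real.exp (-h)) := by gcongr
      _ = ENNReal.ofReal ((Real.exp h - Real.exp (-h)) * (1 / 2 - γ) + Real.exp (-h)) := by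
        have : Real.exp (-h) ≤ Real.exp h := Real.exp_le_exp.2 (by simp only [h]; linarith)
        rw [← ENNReal.ofReal_mul (by linarith), ← ENNReal.ofReal_add _ (Real.exp_pos _).le]
        exact mul_nonneg (by linarith) (by linarith)
      _ ≤ _ := by
        refine ENNReal.ofReal_le_ofReal ?_
        have hc : Real.cosh h ≤ Real.exp (2 * γ ^ 2) := by
          have := Real.cosh_le_exp_half_sq h
          convert this using 2
          simp only [h]; ring
        have hs : h ≤ Real.sinh h := Real.self_le_sinh_iff.2 (by positivity)
        have e1 : (Real.exp h - Real.exp (-h)) * (1 / 2 - γ) + Real.exp (-h) =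
            Real.cosh h - 2 * γ * Real.sinh h := by
          rw [Real.cosh_eq, Real.sinh_eq]; ring
        have e2 : 2 * γ * h ≤ 2 * γ * Real.sinh h := mul_le_mul_of_nonneg_left hs (by linarith)
        have hx0 : 0 ≤ γ ^ 2 := sq_nonneg _
        have hx1 : γ ^ 2 ≤ 1 / 4 := by nlinarith
        have e3 : Real.exp (2 * γ ^ 2) ≤ 1 + 2 * γ ^ 2 + (2 * γ ^ 2) ^ 2 := by
          have := Real.abs_exp_sub_one_sub_id_le (x := 2 * γ ^ 2)
            (by rw [abs_of_nonneg (by linarith)]; linarith)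
          linarith [(abs_le.1 this).2]
        have e4 := Real.add_one_le_exp (-γ ^ 2)
        rw [e1]
        simp only [h] at e2 hc ⊢
        nlinarith
  calc _ ≤ (Measure.pi fun _ : Fin k => μ) {x | 0 ≤ ∑ s, f (x s)} := by
        refine measure_mono fun x hx => ?_
        simp only [Set.mem_ofPred_eq] at hx ⊢
        have e : ∑ s, f (x s) = h * (2 * (Finset.univ.filter fun s => x s ∈ S).card - k) := by
          have : ∀ s, f (x s) = h * (2 * (if x s ∈ S then 1 else 0) - 1) := by
            intro s; by_cases hs : x s ∈ S <;> simp [f, hs]; ring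
          simp only [this, ← Finset.mul_sum, Finset.sum_sub_distrib, Finset.card_filter]
          push_cast
          simp
        rw [e]
        have : (k : ℝ) ≤ 2 * (Finset.univ.filter fun s => x s ∈ S).card := by exact_mod_cast hx
        exact mul_nonneg (by positivity) (by linarith)
    _ ≤ _ := measure_pi_sum_nonneg_le μ k f hf
    _ ≤ ENNReal.ofReal (Real.exp (-γ ^ 2)) ^ k := by gcongr
    _ = _ := by
        rw [← ENNReal.ofReal_pow (Real.exp_pos _).le, ← Real.exp_nat_mul]
        congr 2; ring

end Median


section ChiSquare

theorem inv_one_sub_le_exp {x : ℝ} (h0 : -(1 / 2) ≤ x) (h1 : x ≤ 1 / 2) :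
    (1 - x)⁻¹ ≤ Real.exp (x + x ^ 2) := by
  rw [inv_le_iff_one_le_mul₀ (by linarith)]
  rcases le_total 0 x with h | h
  · have := Real.quadratic_le_exp_of_nonneg (x := x + x ^ 2) (by positivity)
    have h2 : 1 ≤ (1 + (x + x ^ 2) + (x + x ^ 2) ^ 2 / 2) * (1 - x) := by
      have : 0 ≤ 1 - x - x ^ 2 - x ^ 3 := by nlinarith
      nlinarith [mul_nonneg (sq_nonneg x) this]
    exact h2.trans (mul_le_mul_of_nonneg_right this (by linarith))
  · have h3 := Real.abs_exp_sub_one_sub_id_le (x := -(x + x ^ 2))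
      (abs_le.2 ⟨by nlinarith, by nlinarith⟩)
    have h4 : Real.exp (-(x + x ^ 2)) ≤ 1 - x := by
      have := (abs_le.1 h3).2
      nlinarith [mul_nonneg (sq_nonneg x) (show 0 ≤ 1 - (1 + x) ^ 2 by nlinarith)]
    calc 1 = Real.exp (x + x ^ 2) * Real.exp (-(x + x ^ 2)) := by rw [← Real.exp_add]; simp
      _ ≤ _ := mul_le_mul_of_nonneg_left h4 (Real.exp_pos _).le

theorem lintegral_exp_mul_sq_gaussianReal_le {t : ℝ} (h0 : -(1 / 4) ≤ t) (h1 : t ≤ 1 / 4) (c : ℝ) :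
    ∫⁻ x, ENNReal.ofReal (Real.exp (t * x ^ 2 + c)) ∂(gaussianReal 0 1) ≤
      ENNReal.ofReal (Real.exp (t + 2 * t ^ 2 + c)) := by
  rw [gaussianReal_of_var_ne_zero _ one_ne_zero,
    lintegral_withDensity_eq_lintegral_mul _ (by fun_prop) (by fun_prop)]
  have hpos : 0 < 1 / 2 - t := by linarith
  have e : ∀ x : ℝ, (gaussianPDF 0 1 * fun x => ENNReal.ofReal (Real.exp (t * x ^ 2 + c))) x =
      ENNReal.ofReal ((√(2 * Real.pi))⁻¹ * Real.exp c * Real.exp (-(1 / 2 - t) * x ^ 2)) := by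
    intro x
    simp only [Pi.mul_apply, gaussianPDF]
    rw [← ENNReal.ofReal_mul (gaussianPDFReal_nonneg _ _ _)]
    congr 1
    simp only [gaussianPDFReal, NNReal.coe_one, mul_one, sub_zero, mul_assoc]
    rw [← Real.exp_add, ← Real.exp_add]
    congr 2; ring
  simp only [e]
  rw [← ofReal_integral_eq_lintegral_ofReal
    ((integrable_exp_neg_mul_sq hpos).const_mul _)
    (Filter.Eventually.of_forall fun x => by positivity), integral_const_mul, integral_gaussian]
  refine ENNReal.ofReal_le_ofReal ?_
  have h2 : (√(2 * Real.pi))⁻¹ * √(Real.pi / (1 / 2 - t)) = √((1 - 2 * t)⁻¹) := by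
    rw [← Real.sqrt_inv, ← Real.sqrt_mul (by positivity)]
    congr 1
    have : 1 - 2 * t ≠ 0 := by linarith
    field_simp
  have h3 : √((1 - 2 * t)⁻¹) ≤ Real.exp (t + 2 * t ^ 2) := by
    rw [Real.sqrt_le_iff]
    refine ⟨(Real.exp_pos _).le, (inv_one_sub_le_exp (by linarith) (by linarith)).trans_eq ?_⟩
    rw [← Real.exp_nat_mul]; congr 1; push_cast; ring
  calc _ = √((1 - 2 * t)⁻¹) * Real.exp c := by rw [← h2]; ring
    _ ≤ Real.exp (t + 2 * t ^ 2) * Real.exp c := by gcongr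
    _ = _ := by rw [← Real.exp_add]

/-- The probability that the mean of `m` squared standard Gaussians deviates from `1` by more
than `u`. -/
noncomputable def chiSqTail (m : ℕ) (u : ℝ) : ENNReal :=
  stdPi (Fin m) {x | u < |(∑ s, x s ^ 2) / m - 1|}

theorem chiSqTail_le {m : ℕ} (hm : 0 < m) {u : ℝ} (h0 : 0 < u) (h1 : u ≤ 1) :
    chiSqTail m u ≤ ENNReal.ofReal (2 * Real.exp (-(m * u ^ 2 / 8))) := by
  have hm' : (0 : ℝ) < m := by exact_mod_cast hm
  have key : ∀ t c : ℝ, -(1 / 4) ≤ t → t ≤ 1 / 4 → t + 2 * t ^ 2 + c = -(u ^ 2 / 8) →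
      stdPi (Fin m) {x | 0 ≤ ∑ s, (t * x s ^ 2 + c)} ≤
        ENNReal.ofReal (Real.exp (-(m * u ^ 2 / 8))) := by
    intro t c ht0 ht1 htc
    refine (measure_pi_sum_nonneg_le (gaussianReal 0 1) m (fun x => t * x ^ 2 + c)
      (by fun_prop)).trans ?_
    calc _ ≤ ENNReal.ofReal (Real.exp (-(u ^ 2 / 8))) ^ m := by
          gcongr
          exact htc ▸ lintegral_exp_mul_sq_gaussianReal_le ht0 ht1 c
      _ = _ := by
          rw [← ENNReal.ofReal_pow (Real.exp_pos _).le, ← Real.exp_nat_mul]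
          congr 2; ring
  have k1 := key (u / 4) (-(u / 4) * (1 + u)) (by linarith) (by linarith) (by ring)
  have k2 := key (-(u / 4)) (u / 4 * (1 - u)) (by linarith) (by linarith) (by ring)
  have hsub : {x : Fin m → ℝ | u < |(∑ s, x s ^ 2) / m - 1|} ⊆
      {x | 0 ≤ ∑ s, (u / 4 * x s ^ 2 + -(u / 4) * (1 + u))} ∪
      {x | 0 ≤ ∑ s, (-(u / 4) * x s ^ 2 + u / 4 * (1 - u))} := by
    intro x hx
    simp only [Set.mem_union, Set.mem_ofPred_eq, Finset.sum_add_distrib, ← Finset.mul_sum,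
      Finset.sum_const, Finset.card_univ, Fintype.card_fin, nsmul_eq_mul] at hx ⊢
    rcases lt_abs.1 hx with h | h
    · left
      have : (1 + u) * m < ∑ s, x s ^ 2 := by
        rw [← lt_div_iff₀ hm']; linarith
      nlinarith
    · right
      have : ∑ s, x s ^ 2 < (1 - u) * m := by
        rw [← div_lt_iff₀ hm']; linarith
      nlinarith
  calc chiSqTail m u ≤ _ := measure_mono hsub
    _ ≤ _ := measure_union_le _ _
    _ ≤ _ := add_le_add k1 k2
    _ = _ := by rw [← ENNReal.ofReal_add (Real.exp_pos _).le (Real.exp_pos _).le]; congr 1; ring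

/-- The deviation by more than `1/2` is exponentially unlikely, for every number of variables. -/
theorem exists_chiSqTail_half_le : ∃ κ : ℝ, 0 < κ ∧ ∀ m : ℕ, 0 < m →
    chiSqTail m (1 / 2) ≤ ENNReal.ofReal (Real.exp (-(κ * m))) := by
  set q : ℝ := (6 / 5 - 4 / 5) * gaussianPDFReal 0 1 (6 / 5) with hq
  have hq0 : 0 < q := mul_pos (by norm_num) (gaussianPDFReal_pos _ _ _ one_ne_zero)
  have hqm : ENNReal.ofReal q ≤ gaussianReal 0 1 (Set.Icc (4 / 5) (6 / 5)) :=
    le_gaussianReal_Icc (by norm_num) le_rfl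
  have hq1 : q ≤ 1 := by
    have := hqm.trans prob_le_one
    rwa [ENNReal.ofReal_le_one] at this
  have hqp : q ^ 100 ≤ 1 := pow_le_one₀ hq0.le hq1
  refine ⟨q ^ 100 / 100, by positivity, fun m hm => ?_⟩
  have hm' : (0 : ℝ) < m := by exact_mod_cast hm
  rcases le_or_gt 100 m with h | h
  · refine (chiSqTail_le hm (by norm_num) (by norm_num)).trans (ENNReal.ofReal_le_ofReal ?_)
    have h' : (100 : ℝ) ≤ m := by exact_mod_cast h
    have e2 : (2 : ℝ) ≤ Real.exp 1 := by linarith [Real.add_one_le_exp (1 : ℝ)]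
    calc 2 * Real.exp (-(m * (1 / 2) ^ 2 / 8))
        ≤ Real.exp 1 * Real.exp (-(m * (1 / 2) ^ 2 / 8)) := by gcongr
      _ = Real.exp (1 + -(m * (1 / 2) ^ 2 / 8)) := (Real.exp_add _ _).symm
      _ ≤ _ := Real.exp_le_exp.2 (by nlinarith)
  · have hge : ENNReal.ofReal (q ^ 100) ≤
        stdPi (Fin m) (Set.univ.pi fun _ => Set.Icc (4 / 5) (6 / 5)) := by
      unfold stdPi
      rw [Measure.pi_pi]
      simp only [Finset.prod_const, Finset.card_univ, Fintype.card_fin]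
      calc ENNReal.ofReal (q ^ 100) ≤ ENNReal.ofReal (q ^ m) :=
            ENNReal.ofReal_le_ofReal (pow_le_pow_of_le_one hq0.le hq1 h.le)
        _ = ENNReal.ofReal q ^ m := ENNReal.ofReal_pow hq0.le _
        _ ≤ _ := by gcongr
    have hsub : {x : Fin m → ℝ | 1 / 2 < |(∑ s, x s ^ 2) / m - 1|} ⊆
        (Set.univ.pi fun _ => Set.Icc (4 / 5) (6 / 5))ᶜ := by
      intro x hx hx'
      simp only [Set.mem_pi, Set.mem_univ, true_implies, Set.mem_Icc] at hx'
      have h1 : ∑ s, x s ^ 2 ≤ ∑ _s : Fin m, (36 / 25 : ℝ) :=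
        Finset.sum_le_sum fun s _ => by nlinarith [hx' s]
      have h2 : ∑ _s : Fin m, (16 / 25 : ℝ) ≤ ∑ s, x s ^ 2 :=
        Finset.sum_le_sum fun s _ => by nlinarith [hx' s]
      simp only [Finset.sum_const, Finset.card_univ, Fintype.card_fin, nsmul_eq_mul] at h1 h2
      have h3 : (∑ s, x s ^ 2) / m ≤ 36 / 25 := by rw [div_le_iff₀ hm']; linarith
      have h4 : 16 / 25 ≤ (∑ s, x s ^ 2) / m := by rw [le_div_iff₀ hm']; linarith
      simp only [Set.mem_ofPred_eq] at hx
      rcases lt_abs.1 hx with h | h <;> linarith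
    have hms : MeasurableSet (Set.univ.pi fun _ : Fin m => Set.Icc (4 / 5 : ℝ) (6 / 5)) :=
      MeasurableSet.univ_pi fun _ => measurableSet_Icc
    calc chiSqTail m (1 / 2) ≤ stdPi (Fin m) _ := measure_mono hsub
      _ = 1 - _ := by rw [measure_compl hms (measure_ne_top _ _), measure_univ]
      _ ≤ 1 - ENNReal.ofReal (q ^ 100) := tsub_le_tsub_left hge _
      _ = ENNReal.ofReal (1 - q ^ 100) := by
          rw [ENNReal.ofReal_sub _ (by positivity), ENNReal.ofReal_one]
      _ ≤ _ := by
          refine ENNReal.ofReal_le_ofReal ?_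
          have h1 := Real.add_one_le_exp (-(q ^ 100 / 100 * m))
          have h' : (m : ℝ) ≤ 100 := by exact_mod_cast h.le
          have : q ^ 100 / 100 * m ≤ q ^ 100 := by
            have : 0 ≤ q ^ 100 := by positivity
            nlinarith
          linarith

end ChiSquare


section TotalVariation

/-- The Bretagnolle–Huber inequality for `Q = exp (-ℓ) P`. -/
theorem abs_measureReal_sub_le {E : Type*} [MeasurableSpace E] (P Q : Measure E)
    [IsProbabilityMeasure P] [IsProbabilityMeasure Q] {ℓ : E → ℝ} (hℓ : Measurable ℓ)
    (hQ : Q = P.withDensity fun x => ENNReal.ofReal (Real.exp (-ℓ x))) (hInt : Integrable ℓ P)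
    {S : Set E} (hS : MeasurableSet S) :
    |P.real S - Q.real S| ≤ √(1 - Real.exp (-∫ x, ℓ x ∂P)) := by
  set f : E → ℝ := fun x => Real.exp (-ℓ x) with hf
  set g : E → ℝ := fun x => Real.exp (-ℓ x / 2) with hg
  have hfm : Measurable f := by fun_prop
  have hgm : Measurable g := by fun_prop
  have hgf : ∀ x, g x ^ 2 = f x := fun x => by
    simp only [hf, hg]
    rw [← Real.exp_nat_mul]; congr 1; push_cast; ring
  have hgpos : ∀ x, 0 < g x := fun x => Real.exp_pos _
  have hQS : ∀ T, MeasurableSet T → ∫⁻ x in T, ENNReal.ofReal (f x) ∂P = Q T := fun T hT => by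
    rw [hQ, withDensity_apply _ hT]
  have hfi : Integrable f P := by
    refine ⟨hfm.aestronglyMeasurable, ?_⟩
    rw [hasFiniteIntegral_iff_ofReal (Filter.Eventually.of_forall fun x => (Real.exp_pos _).le),
      ← setLIntegral_univ, hQS _ MeasurableSet.univ, measure_univ]
    exact ENNReal.one_lt_top
  have hQr : ∀ T, MeasurableSet T → Q.real T = ∫ x in T, f x ∂P := fun T hT => by
    rw [measureReal_def, ← hQS T hT, integral_eq_lintegral_of_nonneg_ae
      (Filter.Eventually.of_forall fun x => (Real.exp_pos _).le) hfm.aestronglyMeasurable]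
  have hf1 : ∫ x, f x ∂P = 1 := by
    rw [← setIntegral_univ, ← hQr _ MeasurableSet.univ]; simp
  have hgi : Integrable g P := by
    refine Integrable.mono' ((integrable_const (1 : ℝ)).add hfi) hgm.aestronglyMeasurable
      (Filter.Eventually.of_forall fun x => ?_)
    rw [Real.norm_of_nonneg (hgpos x).le, Pi.add_apply, ← hgf]
    nlinarith [sq_nonneg (g x - 1), hgpos x]
  set b := ∫ x, g x ∂P with hb
  have hbJ : Real.exp (-(∫ x, ℓ x ∂P) / 2) ≤ b := by
    have h := ConvexOn.map_integral_le (μ := P) (g := Real.exp) (f := fun x => -ℓ x / 2)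
      convexOn_exp Real.continuous_exp.continuousOn isClosed_univ
      (Filter.Eventually.of_forall fun x => Set.mem_univ _) (hInt.neg.div_const 2) hgi
    rwa [integral_div, integral_neg] at h
  set a := ∫ x, |1 - f x| ∂P with ha
  have habs : ∀ x, |1 - f x| = |1 - g x| * (1 + g x) := fun x => by
    rw [← hgf, show 1 - g x ^ 2 = (1 - g x) * (1 + g x) by ring, abs_mul,
      abs_of_pos (show 0 < 1 + g x by linarith [hgpos x])]
  have hai : Integrable (fun x => |1 - f x|) P := ((integrable_const 1).sub hfi).abs
  have hquad : ∀ t : ℝ, 0 ≤ (1 - b) * (t * t) + (-a) * t + (1 + b) := by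
    intro t
    have h0 : 0 ≤ ∫ x, (t * |1 - g x| - (1 + g x)) ^ 2 ∂P :=
      integral_nonneg fun x => sq_nonneg _
    have he : ∀ x, (t * |1 - g x| - (1 + g x)) ^ 2 =
        t ^ 2 * (1 - 2 * g x + f x) - 2 * t * |1 - f x| + (1 + 2 * g x + f x) := fun x => by
      rw [habs, ← hgf]
      have := sq_abs (1 - g x)
      linear_combination t ^ 2 * this
    have i1 : Integrable (fun x => 1 - 2 * g x + f x) P :=
      ((integrable_const 1).sub (hgi.const_mul 2)).add hfi
    have i2 : Integrable (fun x => 1 + 2 * g x + f x) P :=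
      ((integrable_const 1).add (hgi.const_mul 2)).add hfi
    have j1 : Integrable (fun x => 1 - 2 * g x) P := (integrable_const 1).sub (hgi.const_mul 2)
    have j2 : Integrable (fun x => 1 + 2 * g x) P := (integrable_const 1).add (hgi.const_mul 2)
    have j3 : Integrable (fun x => t ^ 2 * (1 - 2 * g x + f x) - 2 * t * |1 - f x|) P :=
      (i1.const_mul _).sub (hai.const_mul _)
    have v1 : ∫ x, (1 - 2 * g x + f x) ∂P = 2 - 2 * b := by
      rw [integral_add j1 hfi,
        integral_sub (integrable_const 1) (hgi.const_mul 2), integral_const_mul, hf1]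
      simp; ring
    have v2 : ∫ x, (1 + 2 * g x + f x) ∂P = 2 + 2 * b := by
      rw [integral_add j2 hfi,
        integral_add (integrable_const 1) (hgi.const_mul 2), integral_const_mul, hf1]
      simp; ring
    simp only [he] at h0
    rw [integral_add j3 i2,
      integral_sub (i1.const_mul _) (hai.const_mul _), integral_const_mul, integral_const_mul,
      v1, v2] at h0
    linarith
  have hdisc := discrim_le_zero hquad
  rw [discrim] at hdisc
  have ha4 : (a / 2) ^ 2 ≤ 1 - b ^ 2 := by nlinarith
  have hb2 : Real.exp (-∫ x, ℓ x ∂P) ≤ b ^ 2 := by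
    calc Real.exp (-∫ x, ℓ x ∂P) = Real.exp (-(∫ x, ℓ x ∂P) / 2) ^ 2 := by
          rw [← Real.exp_nat_mul]; congr 1; push_cast; ring
      _ ≤ b ^ 2 := by gcongr
  have hmain : ∀ T, MeasurableSet T → P.real T - Q.real T = ∫ x in T, (1 - f x) ∂P := by
    intro T hT
    rw [integral_sub (integrable_const _).integrableOn hfi.integrableOn, hQr T hT]
    simp
  have hle : ∀ T, MeasurableSet T → |P.real T - Q.real T| ≤ ∫ x in T, |1 - f x| ∂P := by
    intro T hT
    rw [hmain T hT]
    exact abs_integral_le_integral_abs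
  have hc : |P.real S - Q.real S| = |P.real Sᶜ - Q.real Sᶜ| := by
    rw [probReal_compl_eq_one_sub hS, probReal_compl_eq_one_sub hS, ← abs_neg]
    congr 1; ring
  have hhalf : |P.real S - Q.real S| ≤ a / 2 := by
    have h1 := hle S hS
    have h2 := hle Sᶜ hS.compl
    have h3 := integral_add_compl hS hai
    rw [← hc] at h2
    linarith
  refine hhalf.trans (Real.le_sqrt_of_sq_le ?_)
  linarith

end TotalVariation

section Density

theorem pi_gaussianReal_eq_withDensity {ι : Type*} [Fintype ι] {v : ι → NNReal}
    (hv : ∀ i, v i ≠ 0) :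
    (Measure.pi fun i => gaussianReal 0 (v i)) =
      volume.withDensity fun x => ENNReal.ofReal (∏ i, gaussianPDFReal 0 (v i) (x i)) := by
  refine Measure.pi_eq fun s hs => ?_
  rw [withDensity_apply _ (MeasurableSet.univ_pi hs), volume_pi, Measure.restrict_pi_pi,
    ← ofReal_integral_eq_lintegral_ofReal, integral_fintype_prod_eq_prod,
    ENNReal.ofReal_prod_of_nonneg]
  · refine Finset.prod_congr rfl fun i _ => ?_
    rw [gaussianReal_apply_eq_integral _ (hv i)]
  · exact fun i _ => integral_nonneg fun x => gaussianPDFReal_nonneg _ _ _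
  · exact Integrable.fintype_prod_dep fun i => (integrable_gaussianPDFReal 0 (v i)).integrableOn
  · exact Filter.Eventually.of_forall fun x =>
      Finset.prod_nonneg fun i _ => gaussianPDFReal_nonneg _ _ _

theorem map_mulVec_withDensity {ι : Type*} [Fintype ι] [DecidableEq ι] {T : Matrix ι ι ℝ}
    (hT : T.det = 1) {F : (ι → ℝ) → ENNReal} (hF : Measurable F) :
    (volume.withDensity F).map (fun x => T⁻¹ *ᵥ x) = volume.withDensity fun x => F (T *ᵥ x) := by
  have hTu : IsUnit T.det := by rw [hT]; exact isUnit_one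
  have hdet : (T⁻¹).det = 1 := by rw [det_nonsing_inv, hT, Ring.inverse_one]
  have hvol : (volume : Measure (ι → ℝ)).map (fun x => T⁻¹ *ᵥ x) = volume := by
    have := Real.map_matrix_volume_pi_eq_smul_volume_pi (M := T⁻¹) (by rw [hdet]; exact one_ne_zero)
    rw [hdet] at this
    simp only [inv_one, abs_one, ENNReal.ofReal_one, one_smul] at this
    exact this
  have hm : Measurable fun x : ι → ℝ => T⁻¹ *ᵥ x := by fun_prop
  have hm' : Measurable fun x : ι → ℝ => T *ᵥ x := by fun_prop
  ext S hS
  rw [Measure.map_apply hm hS, withDensity_apply _ (hm hS), withDensity_apply _ hS]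
  conv_rhs => rw [← hvol, setLIntegral_map (f := fun x => F (T *ᵥ x)) hS (hF.comp hm') hm]
  simp [mulVec_mulVec, mul_nonsing_inv _ hTu]

end Density

section Network

variable {n : ℕ} {π : Fin n → Finset (Fin n)}

theorem det_one_sub_coeffMatrix (hπ : ∀ i, ∀ j ∈ π i, j < i) (A : ∀ i, {j // j ∈ π i} → ℝ) :
    (1 - coeffMatrix π A).det = 1 := by
  rw [det_of_isLowerTriangular]
  · refine Finset.prod_eq_one fun i _ => ?_
    have : i ∉ π i := fun h => lt_irrefl _ (hπ i i h)
    simp [coeffMatrix, this]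
  · intro i j hij
    have hij' : i < j := hij
    have h : j ∉ π i := fun h => absurd (hπ i j h) hij'.not_gt
    simp [coeffMatrix, h, hij'.ne]

theorem isUnit_det_one_sub_coeffMatrix (hπ : ∀ i, ∀ j ∈ π i, j < i)
    (A : ∀ i, {j // j ∈ π i} → ℝ) : IsUnit (1 - coeffMatrix π A).det := by
  rw [det_one_sub_coeffMatrix hπ]; exact isUnit_one

theorem one_sub_coeffMatrix_mulVec (A : ∀ i, {j // j ∈ π i} → ℝ) (x : Fin n → ℝ) (i : Fin n) :
    ((1 - coeffMatrix π A) *ᵥ x) i = x i - ∑ j, A i j * x j.1 := by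
  rw [sub_mulVec, one_mulVec, Pi.sub_apply]
  congr 1
  simp only [mulVec, dotProduct, coeffMatrix, of_apply]
  rw [← Finset.sum_subset (Finset.subset_univ (π i)) fun j _ h => by rw [dif_neg h, zero_mul],
    ← Finset.sum_coe_sort]
  exact Finset.sum_congr rfl fun j _ => by rw [dif_pos j.2]

instance (A : ∀ i, {j // j ∈ π i} → ℝ) (σ : Fin n → ℝ) :
    IsProbabilityMeasure (gaussianBN π A σ) := by
  unfold gaussianBN
  exact Measure.isProbabilityMeasure_map (by fun_prop)

/-- The variance of `X i - ∑ j, A' i j * X j` under the network with parameters `A`, `σ`. -/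
noncomputable def resVar (π : Fin n → Finset (Fin n)) (A : ∀ i, {j // j ∈ π i} → ℝ)
    (σ : Fin n → ℝ) (A' : ∀ i, {j // j ∈ π i} → ℝ) (i : Fin n) : ℝ :=
  ∑ a, σ a ^ 2 * ((1 - coeffMatrix π A') * (1 - coeffMatrix π A)⁻¹) i a ^ 2

theorem map_dotProduct_gaussianBN (A : ∀ i, {j // j ∈ π i} → ℝ) (σ : Fin n → ℝ)
    (w : Fin n → ℝ) :
    (gaussianBN π A σ).map (fun x => w ⬝ᵥ x) = gaussianReal 0
      (∑ a, σ a ^ 2 * (w ᵥ* (1 - coeffMatrix π A)⁻¹) a ^ 2).toNNReal := by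
  have h := map_dotProduct_pi_gaussianReal (fun a => (σ a ^ 2).toNNReal)
    (w ᵥ* (1 - coeffMatrix π A)⁻¹)
  simp only [Real.coe_toNNReal _ (sq_nonneg _)] at h
  rw [← h, gaussianBN, Measure.map_map (by fun_prop) (by fun_prop)]
  congr 1
  ext x
  simp [dotProduct_mulVec]

theorem map_residual_gaussianBN (A : ∀ i, {j // j ∈ π i} → ℝ) (σ : Fin n → ℝ)
    (A' : ∀ i, {j // j ∈ π i} → ℝ) (i : Fin n) :
    (gaussianBN π A σ).map (fun x => ((1 - coeffMatrix π A') *ᵥ x) i) =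
      gaussianReal 0 (resVar π A σ A' i).toNNReal :=
  map_dotProduct_gaussianBN A σ _

theorem resVar_nonneg (A : ∀ i, {j // j ∈ π i} → ℝ) (σ : Fin n → ℝ)
    (A' : ∀ i, {j // j ∈ π i} → ℝ) (i : Fin n) : 0 ≤ resVar π A σ A' i :=
  Finset.sum_nonneg fun _ _ => by positivity

theorem resVar_self (hπ : ∀ i, ∀ j ∈ π i, j < i) (A : ∀ i, {j // j ∈ π i} → ℝ) (σ : Fin n → ℝ)
    (i : Fin n) : resVar π A σ A i = σ i ^ 2 := by
  rw [resVar, mul_nonsing_inv _ (isUnit_det_one_sub_coeffMatrix hπ A)]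
  simp [Matrix.one_apply]

theorem integral_sq_residual (A : ∀ i, {j // j ∈ π i} → ℝ) (σ : Fin n → ℝ)
    (A' : ∀ i, {j // j ∈ π i} → ℝ) (i : Fin n) :
    Integrable (fun x => ((1 - coeffMatrix π A') *ᵥ x) i ^ 2) (gaussianBN π A σ) ∧
    ∫ x, ((1 - coeffMatrix π A') *ᵥ x) i ^ 2 ∂(gaussianBN π A σ) = resVar π A σ A' i := by
  have hmap := map_residual_gaussianBN A σ A' i
  have hm : Measurable fun x => ((1 - coeffMatrix π A') *ᵥ x) i := by fun_prop
  set v := (resVar π A σ A' i).toNNReal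
  have h2 : MemLp (fun x : ℝ => x) 2 (gaussianReal 0 v) := memLp_id_gaussianReal 2
  have hi : Integrable (fun y : ℝ => y ^ 2) (gaussianReal 0 v) := h2.integrable_sq
  have hv : ∫ y, y ^ 2 ∂(gaussianReal 0 v) = v := by
    have := variance_eq_sub h2
    rw [variance_fun_id_gaussianReal, integral_id_gaussianReal] at this
    simpa using this.symm
  rw [← hmap] at hi hv
  constructor
  · exact hi.comp_measurable hm
  · rw [integral_map hm.aemeasurable (by fun_prop)] at hv
    rw [hv, Real.coe_toNNReal _ (resVar_nonneg A σ A' i)]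

theorem gaussianBN_eq_withDensity (hπ : ∀ i, ∀ j ∈ π i, j < i) (A : ∀ i, {j // j ∈ π i} → ℝ)
    {σ : Fin n → ℝ} (hσ : ∀ i, 0 < σ i) :
    gaussianBN π A σ = volume.withDensity fun x => ENNReal.ofReal
      (∏ i, gaussianPDFReal 0 (σ i ^ 2).toNNReal (((1 - coeffMatrix π A) *ᵥ x) i)) := by
  rw [gaussianBN, pi_gaussianReal_eq_withDensity fun i => by
    have := hσ i; simp; positivity]
  exact map_mulVec_withDensity (det_one_sub_coeffMatrix hπ A) (by fun_prop)

/-- The log-likelihood ratio of two networks. -/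
noncomputable def logRatio (π : Fin n → Finset (Fin n)) (A : ∀ i, {j // j ∈ π i} → ℝ)
    (σ : Fin n → ℝ) (A' : ∀ i, {j // j ∈ π i} → ℝ) (σ' : Fin n → ℝ) (x : Fin n → ℝ) : ℝ :=
  ∑ i, (Real.log (σ' i / σ i) - ((1 - coeffMatrix π A) *ᵥ x) i ^ 2 / (2 * σ i ^ 2) +
    ((1 - coeffMatrix π A') *ᵥ x) i ^ 2 / (2 * σ' i ^ 2))

theorem gaussianPDFReal_mul_exp {s t : ℝ} (hs : 0 < s) (ht : 0 < t) (x y : ℝ) :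
    gaussianPDFReal 0 (s ^ 2).toNNReal x *
      Real.exp (-(Real.log (t / s) - x ^ 2 / (2 * s ^ 2) + y ^ 2 / (2 * t ^ 2))) =
    gaussianPDFReal 0 (t ^ 2).toNNReal y := by
  have h1 : Real.exp (-(Real.log (t / s) - x ^ 2 / (2 * s ^ 2) + y ^ 2 / (2 * t ^ 2))) =
      s / t * Real.exp (x ^ 2 / (2 * s ^ 2)) * Real.exp (-(y ^ 2 / (2 * t ^ 2))) := by
    rw [show s / t = Real.exp (-Real.log (t / s)) by
      rw [Real.exp_neg, Real.exp_log (by positivity), inv_div], ← Real.exp_add, ← Real.exp_add]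
    congr 1; ring
  rw [h1]
  simp only [gaussianPDFReal, sub_zero, Real.coe_toNNReal _ (sq_nonneg _)]
  rw [Real.sqrt_mul (by positivity) (s ^ 2), Real.sqrt_mul (by positivity) (t ^ 2),
    Real.sqrt_sq hs.le, Real.sqrt_sq ht.le, neg_div, neg_div]
  have h2 : Real.exp (-(x ^ 2 / (2 * s ^ 2))) * Real.exp (x ^ 2 / (2 * s ^ 2)) = 1 := by
    rw [← Real.exp_add]; simp
  have hp : (0 : ℝ) < √(2 * Real.pi) := by positivity
  calc _ = (√(2 * Real.pi) * s)⁻¹ * (s / t) * (Real.exp (-(x ^ 2 / (2 * s ^ 2))) *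
        Real.exp (x ^ 2 / (2 * s ^ 2))) * Real.exp (-(y ^ 2 / (2 * t ^ 2))) := by ring
    _ = _ := by
        rw [h2]
        field_simp

/-- Total variation bound between two Gaussian networks on the same graph. -/
theorem dTV_gaussianBN_le (hπ : ∀ i, ∀ j ∈ π i, j < i) (A A' : ∀ i, {j // j ∈ π i} → ℝ)
    {σ σ' : Fin n → ℝ} (hσ : ∀ i, 0 < σ i) (hσ' : ∀ i, 0 < σ' i) :
    dTV (gaussianBN π A σ) (gaussianBN π A' σ') ≤ √(1 - Real.exp (-∑ i,
      (Real.log (σ' i / σ i) - 1 / 2 + resVar π A σ A' i / (2 * σ' i ^ 2)))) := by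
  have hm : Measurable (logRatio π A σ A' σ') := by unfold logRatio; fun_prop
  have hterm : ∀ i, Integrable (fun x => Real.log (σ' i / σ i) -
      ((1 - coeffMatrix π A) *ᵥ x) i ^ 2 / (2 * σ i ^ 2) +
      ((1 - coeffMatrix π A') *ᵥ x) i ^ 2 / (2 * σ' i ^ 2)) (gaussianBN π A σ) := fun i =>
    ((integrable_const _).sub ((integral_sq_residual A σ A i).1.div_const _)).add
      ((integral_sq_residual A σ A' i).1.div_const _)
  have hInt : Integrable (logRatio π A σ A' σ') (gaussianBN π A σ) :=
    integrable_finsetSum _ fun i _ => hterm i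
  have hval : ∫ x, logRatio π A σ A' σ' x ∂(gaussianBN π A σ) = ∑ i,
      (Real.log (σ' i / σ i) - 1 / 2 + resVar π A σ A' i / (2 * σ' i ^ 2)) := by
    unfold logRatio
    rw [integral_finsetSum _ fun i _ => hterm i]
    refine Finset.sum_congr rfl fun i _ => ?_
    have j1 : Integrable (fun x => Real.log (σ' i / σ i) -
        ((1 - coeffMatrix π A) *ᵥ x) i ^ 2 / (2 * σ i ^ 2)) (gaussianBN π A σ) :=
      (integrable_const _).sub ((integral_sq_residual A σ A i).1.div_const _)
    rw [integral_add j1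
      ((integral_sq_residual A σ A' i).1.div_const _),
      integral_sub (integrable_const _) ((integral_sq_residual A σ A i).1.div_const _),
      integral_div, integral_div, (integral_sq_residual A σ A i).2,
      (integral_sq_residual A σ A' i).2, resVar_self hπ]
    have := (hσ i).ne'
    simp
    field_simp
  have hQ : gaussianBN π A' σ' = (gaussianBN π A σ).withDensity
      fun x => ENNReal.ofReal (Real.exp (-logRatio π A σ A' σ' x)) := by
    rw [gaussianBN_eq_withDensity hπ A hσ, gaussianBN_eq_withDensity hπ A' hσ',
      ← withDensity_mul _ (by fun_prop) (by fun_prop)]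
    congr 1
    ext x
    rw [Pi.mul_apply, ← ENNReal.ofReal_mul
      (Finset.prod_nonneg fun i _ => gaussianPDFReal_nonneg _ _ _)]
    congr 1
    rw [logRatio, ← Finset.sum_neg_distrib, Real.exp_sum, ← Finset.prod_mul_distrib]
    exact Finset.prod_congr rfl fun i _ => (gaussianPDFReal_mul_exp (hσ i) (hσ' i) _ _).symm
  rw [← hval]
  have : Nonempty {s : Set (Fin n → ℝ) // MeasurableSet s} := ⟨⟨∅, MeasurableSet.empty⟩⟩
  exact ciSup_le fun s => abs_measureReal_sub_le _ _ hm hQ hInt s.2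

end Network


section Polytree

variable {n : ℕ} {π : Fin n → Finset (Fin n)}

theorem inv_one_sub_coeffMatrix_apply (hπ : ∀ i, ∀ j ∈ π i, j < i)
    (A : ∀ i, {j // j ∈ π i} → ℝ) (i a : Fin n) :
    (1 - coeffMatrix π A)⁻¹ i a =
      (1 : Matrix (Fin n) (Fin n) ℝ) i a + ∑ j, A i j * (1 - coeffMatrix π A)⁻¹ j.1 a := by
  have h := mul_nonsing_inv _ (isUnit_det_one_sub_coeffMatrix hπ A)
  have h2 := one_sub_coeffMatrix_mulVec A (fun k => (1 - coeffMatrix π A)⁻¹ k a) i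
  have h3 : ((1 - coeffMatrix π A) *ᵥ fun k => (1 - coeffMatrix π A)⁻¹ k a) i =
      ((1 - coeffMatrix π A) * (1 - coeffMatrix π A)⁻¹) i a := rfl
  rw [h3, h] at h2
  linarith

/-- A node with nonzero influence on `i` is at most `i` and connected to `i` through nodes that
are at most `i`. -/
theorem reachable_of_inv_apply_ne_zero (hπ : ∀ i, ∀ j ∈ π i, j < i)
    (A : ∀ i, {j // j ∈ π i} → ℝ) (i a : Fin n) (h : (1 - coeffMatrix π A)⁻¹ i a ≠ 0) :
    a ≤ i ∧ ∀ k l, i < k → ((underlyingGraph π).deleteEdges {s(k, l)}).Reachable i a := by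
  induction i using WellFoundedLT.induction with
  | ind i ih =>
    rw [inv_one_sub_coeffMatrix_apply hπ] at h
    by_cases hia : i = a
    · subst hia
      exact ⟨le_rfl, fun _ _ _ => SimpleGraph.Reachable.refl _⟩
    rw [Matrix.one_apply_ne hia, zero_add] at h
    obtain ⟨j, -, hj⟩ := Finset.exists_ne_zero_of_sum_ne_zero h
    have hji := hπ i j.1 j.2
    obtain ⟨h1, h2⟩ := ih j.1 hji (right_ne_zero_of_mul hj)
    refine ⟨h1.trans hji.le, fun k l hk => ?_⟩
    refine SimpleGraph.Reachable.trans (SimpleGraph.Adj.reachable ?_) (h2 k l (hji.trans hk))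
    rw [SimpleGraph.deleteEdges_adj]
    refine ⟨?_, ?_⟩
    · rw [underlyingGraph, SimpleGraph.fromRel_adj]
      exact ⟨hji.ne', Or.inl j.2⟩
    · intro h
      rw [Set.mem_singleton_iff, Sym2.eq_iff] at h
      rcases h with ⟨h, -⟩ | ⟨-, h⟩
      · exact hk.ne h
      · exact (hji.trans hk).ne h

theorem inv_apply_eq_zero_of_lt (hπ : ∀ i, ∀ j ∈ π i, j < i)
    (A : ∀ i, {j // j ∈ π i} → ℝ) {i a : Fin n} (h : i < a) : (1 - coeffMatrix π A)⁻¹ i a = 0 := by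
  by_contra h0
  exact absurd (reachable_of_inv_apply_ne_zero hπ A i a h0).1 h.not_ge

/-- In a polytree distinct parents of a node have no common ancestor. -/
theorem inv_apply_mul_eq_zero (hπ : ∀ i, ∀ j ∈ π i, j < i)
    (hG : (underlyingGraph π).IsAcyclic) (A : ∀ i, {j // j ∈ π i} → ℝ) {i j k : Fin n}
    (hj : j ∈ π i) (hk : k ∈ π i) (hjk : j ≠ k) (a : Fin n) :
    (1 - coeffMatrix π A)⁻¹ j a * (1 - coeffMatrix π A)⁻¹ k a = 0 := by
  by_contra h
  have rj := (reachable_of_inv_apply_ne_zero hπ A j a (left_ne_zero_of_mul h)).2 i j (hπ i j hj)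
  have rk := (reachable_of_inv_apply_ne_zero hπ A k a (right_ne_zero_of_mul h)).2 i j (hπ i k hk)
  have hadj : (underlyingGraph π).Adj i j := by
    rw [underlyingGraph, SimpleGraph.fromRel_adj]
    exact ⟨(hπ i j hj).ne', Or.inl hj⟩
  have hb := SimpleGraph.isAcyclic_iff_forall_adj_isBridge.1 hG hadj
  rw [SimpleGraph.isBridge_iff] at hb
  refine hb ?_
  refine (SimpleGraph.Adj.reachable ?_).trans (rk.trans rj.symm)
  rw [SimpleGraph.deleteEdges_adj]
  refine ⟨?_, ?_⟩
  · rw [underlyingGraph, SimpleGraph.fromRel_adj]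
    exact ⟨(hπ i k hk).ne', Or.inl hk⟩
  · intro h
    rw [Set.mem_singleton_iff, Sym2.eq_iff] at h
    rcases h with ⟨-, h⟩ | ⟨h, -⟩
    · exact hjk h.symm
    · exact (hπ i j hj).ne' h

/-- The variance of `X j`. -/
noncomputable def nodeVar (π : Fin n → Finset (Fin n)) (A : ∀ i, {j // j ∈ π i} → ℝ)
    (σ : Fin n → ℝ) (j : Fin n) : ℝ :=
  ∑ a, σ a ^ 2 * (1 - coeffMatrix π A)⁻¹ j a ^ 2

theorem nodeVar_pos (hπ : ∀ i, ∀ j ∈ π i, j < i) (A : ∀ i, {j // j ∈ π i} → ℝ) {σ : Fin n → ℝ}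
    (hσ : ∀ i, 0 < σ i) (j : Fin n) : 0 < nodeVar π A σ j := by
  have hjj : (1 - coeffMatrix π A)⁻¹ j j = 1 := by
    rw [inv_one_sub_coeffMatrix_apply hπ, Matrix.one_apply_eq, Finset.sum_eq_zero, add_zero]
    intro k _
    rw [inv_apply_eq_zero_of_lt hπ A (hπ j k.1 k.2), mul_zero]
  have hle : σ j ^ 2 * (1 - coeffMatrix π A)⁻¹ j j ^ 2 ≤ nodeVar π A σ j :=
    Finset.single_le_sum (f := fun a => σ a ^ 2 * (1 - coeffMatrix π A)⁻¹ j a ^ 2)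
      (fun _ _ => by positivity) (Finset.mem_univ j)
  rw [hjj] at hle
  have := hσ j
  nlinarith [pow_pos this 2]

theorem sq_sum_of_pairwise_mul_eq_zero {J : Type*} [Fintype J] (f : J → ℝ)
    (h : ∀ j k, j ≠ k → f j * f k = 0) : (∑ j, f j) ^ 2 = ∑ j, f j ^ 2 := by
  classical
  rw [sq, Finset.sum_mul_sum]
  refine Finset.sum_congr rfl fun j _ => ?_
  rw [Finset.sum_eq_single j (fun k _ hk => h j k hk.symm) (by simp), sq]

theorem resVar_eq (hπ : ∀ i, ∀ j ∈ π i, j < i) (hG : (underlyingGraph π).IsAcyclic)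
    (A : ∀ i, {j // j ∈ π i} → ℝ) (σ : Fin n → ℝ) (A' : ∀ i, {j // j ∈ π i} → ℝ) (i : Fin n) :
    resVar π A σ A' i = σ i ^ 2 + ∑ j, (A' i j - A i j) ^ 2 * nodeVar π A σ j.1 := by
  set L := (1 - coeffMatrix π A)⁻¹ with hL
  have hrow : ∀ a, ((1 - coeffMatrix π A') * L) i a =
      (1 : Matrix (Fin n) (Fin n) ℝ) i a + ∑ j, (A i j - A' i j) * L j.1 a := by
    intro a
    have h3 : ((1 - coeffMatrix π A') * L) i a =
      ((1 - coeffMatrix π A') *ᵥ fun k => L k a) i := rfl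
    rw [h3, one_sub_coeffMatrix_mulVec, hL, inv_one_sub_coeffMatrix_apply hπ, ← hL]
    simp only [sub_mul, Finset.sum_sub_distrib]
    ring
  have hsq : ∀ a, ((1 - coeffMatrix π A') * L) i a ^ 2 =
      (1 : Matrix (Fin n) (Fin n) ℝ) i a ^ 2 + ∑ j, ((A i j - A' i j) * L j.1 a) ^ 2 := by
    intro a
    rw [hrow]
    have h := sq_sum_of_pairwise_mul_eq_zero (J := Option {j // j ∈ π i})
      (fun o => o.elim ((1 : Matrix (Fin n) (Fin n) ℝ) i a) fun j => (A i j - A' i j) * L j.1 a) ?_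
    · simpa [Fintype.sum_option] using h
    · have h0 : ∀ j : {j // j ∈ π i}, (1 : Matrix (Fin n) (Fin n) ℝ) i a * L j.1 a = 0 := by
        intro j
        by_cases hia : i = a
        · subst hia
          rw [hL, inv_apply_eq_zero_of_lt hπ A (hπ i j.1 j.2), mul_zero]
        · rw [Matrix.one_apply_ne hia, zero_mul]
      rintro (_ | j) (_ | k) hjk
      · exact absurd rfl hjk
      · simp only [Option.elim_none, Option.elim_some]
        linear_combination (A i k - A' i k) * h0 k
      · simp only [Option.elim_none, Option.elim_some]
        linear_combination (A i j - A' i j) * h0 j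
      · have := inv_apply_mul_eq_zero hπ hG A j.2 k.2
          (fun h => hjk (congrArg some (Subtype.ext h))) a
        simp only [Option.elim_some]
        linear_combination (A i j - A' i j) * (A i k - A' i k) * this
  rw [resVar]
  simp only [← hL, hsq, mul_add, Finset.sum_add_distrib]
  congr 1
  · simp [Matrix.one_apply]
  · simp only [Finset.mul_sum, nodeVar, ← hL]
    rw [Finset.sum_comm]
    refine Finset.sum_congr rfl fun j _ => Finset.sum_congr rfl fun a _ => ?_
    ring

/-- Total variation bound for estimates of the parameters of a polytree network: the coefficient
`A i j` up to `τ i σ i / sd (X j)`, and the residual variances up to a factor `1 ± u`. -/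
theorem dTV_le_of_close (hπ : ∀ i, ∀ j ∈ π i, j < i) (hG : (underlyingGraph π).IsAcyclic)
    (A A' : ∀ i, {j // j ∈ π i} → ℝ) {σ : Fin n → ℝ} (hσ : ∀ i, 0 < σ i)
    {w τ : Fin n → ℝ} {u ε : ℝ} (hu : u ≤ 1 / 2) (hε : 0 ≤ ε)
    (hA : ∀ i j, |A' i j - A i j| ≤ τ i * (σ i / √(nodeVar π A σ j.1)))
    (hw : ∀ i, |w i / resVar π A σ A' i - 1| ≤ u)
    (hsum : ∑ i, ((π i).card * τ i ^ 2 + 2 * u ^ 2) / 2 ≤ ε ^ 2) :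
    dTV (gaussianBN π A σ) (gaussianBN π A' fun i => √(w i)) ≤ ε := by
  have hrv : ∀ i, σ i ^ 2 ≤ resVar π A σ A' i := fun i => by
    rw [resVar_eq hπ hG]
    have : 0 ≤ ∑ j, (A' i j - A i j) ^ 2 * nodeVar π A σ j.1 :=
      Finset.sum_nonneg fun j _ => mul_nonneg (sq_nonneg _) (nodeVar_pos hπ A hσ _).le
    linarith
  have hrpos : ∀ i, 0 < resVar π A σ A' i := fun i => (pow_pos (hσ i) 2).trans_le (hrv i)
  have hwpos : ∀ i, 0 < w i := fun i => by
    have h1 := (abs_le.1 (hw i)).1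
    have h2 : 0 < w i / resVar π A σ A' i := by linarith
    exact (div_pos_iff_of_pos_right (hrpos i)).1 h2
  refine (dTV_gaussianBN_le hπ A A' hσ fun i => Real.sqrt_pos.2 (hwpos i)).trans ?_
  have hterm : ∀ i, Real.log (√(w i) / σ i) - 1 / 2 + resVar π A σ A' i / (2 * √(w i) ^ 2) ≤
      ((π i).card * τ i ^ 2 + 2 * u ^ 2) / 2 := by
    intro i
    set r := resVar π A σ A' i
    have hrp : 0 < r := hrpos i
    have hwp := hwpos i
    have hs := hσ i
    have hr1 : r / σ i ^ 2 - 1 ≤ (π i).card * τ i ^ 2 := by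
      have : r - σ i ^ 2 ≤ (π i).card * τ i ^ 2 * σ i ^ 2 := by
        simp only [r]
        rw [resVar_eq hπ hG, add_sub_cancel_left]
        calc _ ≤ ∑ _j : {j // j ∈ π i}, τ i ^ 2 * σ i ^ 2 := by
              refine Finset.sum_le_sum fun j _ => ?_
              have hv := nodeVar_pos hπ A hσ j.1
              have h1 : (A' i j - A i j) ^ 2 ≤ (τ i * (σ i / √(nodeVar π A σ j.1))) ^ 2 := by
                rw [← sq_abs (A' i j - A i j)]
                exact pow_le_pow_left₀ (abs_nonneg _) (hA i j) 2
              calc _ ≤ (τ i * (σ i / √(nodeVar π A σ j.1))) ^ 2 * nodeVar π A σ j.1 := by gcongr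
                _ = _ := by
                  rw [mul_pow, div_pow, Real.sq_sqrt hv.le]
                  field_simp
          _ = _ := by simp; ring
      rw [sub_le_iff_le_add, div_le_iff₀ (by positivity)]
      linarith
    have hlog : Real.log (√(w i) / σ i) =
        (Real.log (w i / r) + Real.log (r / σ i ^ 2)) / 2 := by
      rw [← Real.log_mul (by positivity) (by positivity),
        show w i / r * (r / σ i ^ 2) = (√(w i) / σ i) ^ 2 by
          rw [div_pow, Real.sq_sqrt hwp.le]; field_simp, Real.log_pow]
      push_cast; ring
    set z := w i / r with hz
    have hzp : 0 < z := by positivity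
    have hzu := abs_le.1 (hw i)
    have hz1 : Real.log z ≤ z - 1 := Real.log_le_sub_one_of_pos hzp
    have hz2 : Real.log (r / σ i ^ 2) ≤ r / σ i ^ 2 - 1 :=
      Real.log_le_sub_one_of_pos (by positivity)
    have hz3 : r / (2 * √(w i) ^ 2) = z⁻¹ / 2 := by
      rw [Real.sq_sqrt hwp.le, hz]; field_simp
    have hz4 : z - 1 + (z⁻¹ - 1) ≤ 2 * u ^ 2 := by
      have e : z - 1 + (z⁻¹ - 1) = (z - 1) ^ 2 / z := by field_simp; ring
      rw [e, div_le_iff₀ hzp]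
      have h1 : (z - 1) ^ 2 ≤ u ^ 2 := sq_le_sq' (by linarith) hzu.2
      nlinarith [sq_nonneg u]
    rw [hlog, hz3]
    linarith
  have hsum' := (Finset.sum_le_sum fun i (_ : i ∈ Finset.univ) => hterm i).trans hsum
  rw [Real.sqrt_le_iff]
  refine ⟨hε, ?_⟩
  have := Real.add_one_le_exp (-∑ i, (Real.log (√(w i) / σ i) - 1 / 2 +
    resVar π A σ A' i / (2 * √(w i) ^ 2)))
  linarith

end Polytree


section Batch

variable {n : ℕ} {π : Fin n → Finset (Fin n)}

theorem measurable_batchSolution (S : Finset (Fin n)) (i : Fin n) (c : Fin S.card) :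
    Measurable fun x : Fin S.card → Fin n → ℝ => batchSolution S i x c := by
  simp only [batchSolution, inv_mulVec_apply_eq_div]
  refine Measurable.div (measurable_det_of fun r k => ?_) (measurable_det_of fun r k => ?_)
  · by_cases h : k = c
    · subst h; simp only [updateCol_self]; fun_prop
    · simp only [updateCol_ne h, batchMatrix, of_apply]; fun_prop
  · simp only [batchMatrix, of_apply]; fun_prop

theorem measurable_batch {E : Type*} [MeasurableSpace E] {m₁ p : ℕ} (s : Fin (m₁ / p)) :
    Measurable fun x : Fin m₁ → E => batch x s := by
  unfold batch; fun_prop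

theorem measurable_coeffRecovery {m₁ : ℕ} (i : Fin n) (j : {j // j ∈ π i}) :
    Measurable fun x : Fin m₁ → Fin n → ℝ => coeffRecovery π x i j := by
  unfold coeffRecovery
  refine measurable_sampleMedian.comp (measurable_pi_lambda _ fun s => ?_)
  exact (measurable_batchSolution (π i) i _).comp (measurable_batch s)

/-- The noise of node `i` and the values of its parents, all normalized. -/
noncomputable def normalized (π : Fin n → Finset (Fin n)) (A : ∀ i, {j // j ∈ π i} → ℝ)
    (σ : Fin n → ℝ) (i : Fin n) (x : Fin n → ℝ) : Option (Fin (π i).card) → ℝ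
  | none => ((1 - coeffMatrix π A) *ᵥ x) i / σ i
  | some c => x ((π i).orderEmbOfFin rfl c) / √(nodeVar π A σ ((π i).orderEmbOfFin rfl c))

theorem measurable_normalized (A : ∀ i, {j // j ∈ π i} → ℝ) (σ : Fin n → ℝ) (i : Fin n) :
    Measurable (normalized π A σ i) := by
  refine measurable_pi_lambda _ fun o => ?_
  cases o <;> simp only [normalized] <;> fun_prop

theorem map_normalized_gaussianBN (hπ : ∀ i, ∀ j ∈ π i, j < i)
    (hG : (underlyingGraph π).IsAcyclic) (A : ∀ i, {j // j ∈ π i} → ℝ) {σ : Fin n → ℝ}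
    (hσ : ∀ i, 0 < σ i) (i : Fin n) :
    (gaussianBN π A σ).map (normalized π A σ i) = stdPi (Option (Fin (π i).card)) := by
  set L := (1 - coeffMatrix π A)⁻¹ with hL
  set e := (π i).orderEmbOfFin rfl
  have he : ∀ c, e c ∈ π i := fun c => Finset.orderEmbOfFin_mem _ _ _
  let M : Matrix (Option (Fin (π i).card)) (Fin n) ℝ := Matrix.of fun o a =>
    o.elim ((1 : Matrix (Fin n) (Fin n) ℝ) i a / σ i) fun c => L (e c) a / √(nodeVar π A σ (e c))
  have h := map_mulVec_pi_gaussianReal (fun a => (σ a ^ 2).toNNReal) M ?_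
  · rw [gaussianBN, Measure.map_map (measurable_normalized A σ i) (by fun_prop)]
    have h1 : (normalized π A σ i ∘ fun η => (1 - coeffMatrix π A)⁻¹ *ᵥ η) = fun η => M *ᵥ η := by
      ext η o
      cases o with
      | none =>
        simp only [Function.comp, normalized, mulVec_mulVec,
          mul_nonsing_inv _ (isUnit_det_one_sub_coeffMatrix hπ A), one_mulVec]
        simp [M, mulVec, dotProduct, Matrix.one_apply, div_eq_inv_mul]
      | some c =>
        simp only [Function.comp, normalized, mulVec, dotProduct, M, of_apply, Option.elim_some,
          Finset.sum_div]
        exact Finset.sum_congr rfl fun a _ => by ring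
    rw [h1, h, stdPi]
    congr 1
    ext1 o
    congr 1
    rw [← Real.toNNReal_one]
    congr 1
    simp only [Real.coe_toNNReal _ (sq_nonneg _)]
    cases o with
    | none =>
      have := (hσ i).ne'
      simp [M, Matrix.one_apply, ite_pow, div_pow, ← mul_div_assoc, ← Finset.sum_div, this]
    | some c =>
      have hv := nodeVar_pos hπ A hσ (e c)
      simp only [M, of_apply, Option.elim_some, div_pow, Real.sq_sqrt hv.le, ← mul_div_assoc,
        ← Finset.sum_div]
      exact div_self hv.ne'
  · have h0 : ∀ c a, (1 : Matrix (Fin n) (Fin n) ℝ) i a * L (e c) a = 0 := by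
      intro c a
      by_cases hia : i = a
      · subst hia
        rw [hL, inv_apply_eq_zero_of_lt hπ A (hπ i _ (he c)), mul_zero]
      · rw [Matrix.one_apply_ne hia, zero_mul]
    intro o o' hoo
    refine Finset.sum_eq_zero fun a _ => ?_
    rw [mul_eq_zero]
    right
    rcases o with _ | c <;> rcases o' with _ | c'
    · exact absurd rfl hoo
    · simp only [M, of_apply, Option.elim_none, Option.elim_some]
      rw [div_mul_div_comm, h0, zero_div]
    · simp only [M, of_apply, Option.elim_none, Option.elim_some]
      rw [div_mul_div_comm, mul_comm (L _ _), h0, zero_div]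
    · simp only [M, of_apply, Option.elim_some]
      rw [div_mul_div_comm, inv_apply_mul_eq_zero hπ hG A (he c) (he c')
        (fun h => hoo (congrArg some (e.injective h))) a, zero_div]

/-- The normalized variables of a batch, listed by columns. -/
noncomputable def normalizedCols (π : Fin n → Finset (Fin n)) (A : ∀ i, {j // j ∈ π i} → ℝ)
    (σ : Fin n → ℝ) (i : Fin n) (x : Fin (π i).card → Fin n → ℝ)
    (o : Option (Fin (π i).card)) (r : Fin (π i).card) : ℝ :=
  normalized π A σ i (x r) o

theorem measurable_normalizedCols (A : ∀ i, {j // j ∈ π i} → ℝ) (σ : Fin n → ℝ) (i : Fin n) :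
    Measurable (normalizedCols π A σ i) := by
  refine measurable_pi_lambda _ fun o => measurable_pi_lambda _ fun r => ?_
  exact (measurable_pi_apply o).comp ((measurable_normalized A σ i).comp (measurable_pi_apply r))

theorem map_normalizedCols (hπ : ∀ i, ∀ j ∈ π i, j < i)
    (hG : (underlyingGraph π).IsAcyclic) (A : ∀ i, {j // j ∈ π i} → ℝ) {σ : Fin n → ℝ}
    (hσ : ∀ i, 0 < σ i) (i : Fin n) :
    (Measure.pi fun _ : Fin (π i).card => gaussianBN π A σ).map (normalizedCols π A σ i) =
      stdCols (Fin (π i).card) := by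
  have hmn := measurable_normalized A σ i
  have h1 := Measure.pi_map_pi (μ := fun _ : Fin (π i).card => gaussianBN π A σ)
    (f := fun _ => normalized π A σ i)
    (hμ := fun _ => by rw [map_normalized_gaussianBN hπ hG A hσ]; infer_instance)
    (fun _ => hmn.aemeasurable)
  simp only [map_normalized_gaussianBN hπ hG A hσ] at h1
  have h2 := map_pi_swap fun (_ : Fin (π i).card) (_ : Option (Fin (π i).card)) => gaussianReal 0 1
  change _ = stdCols _ at h2
  rw [← h2]
  change _ = Measure.map _ (Measure.pi fun _ => stdPi _)
  rw [← h1, Measure.map_map (by fun_prop)]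
  · rfl
  · exact measurable_pi_lambda _ fun r => hmn.comp (measurable_pi_apply r)

theorem batchSolution_eq (hπ : ∀ i, ∀ j ∈ π i, j < i) (A : ∀ i, {j // j ∈ π i} → ℝ)
    {σ : Fin n → ℝ} (hσ : ∀ i, 0 < σ i) (i : Fin n) (x : Fin (π i).card → Fin n → ℝ)
    (hx : (colMatrix (normalizedCols π A σ i x)).det ≠ 0) (c : Fin (π i).card) :
    batchSolution (π i) i x c = A i ((π i).orderIsoOfFin rfl c) +
      σ i / √(nodeVar π A σ ((π i).orderEmbOfFin rfl c)) *
        cramerRatio c (normalizedCols π A σ i x) := by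
  set z := normalizedCols π A σ i x with hz
  set e := (π i).orderEmbOfFin rfl
  set s : Fin (π i).card → ℝ := fun c => √(nodeVar π A σ (e c)) with hs
  have hspos : ∀ c, 0 < s c := fun c => Real.sqrt_pos.2 (nodeVar_pos hπ A hσ _)
  have hM : batchMatrix (π i) x = colMatrix z * diagonal s := by
    ext r c
    rw [mul_diagonal]
    simp only [batchMatrix, of_apply, colMatrix, hz, normalizedCols, normalized]
    exact (div_mul_cancel₀ _ (hspos c).ne').symm
  have hb : (fun r => x r i) = batchMatrix (π i) x *ᵥ (fun c => A i ((π i).orderIsoOfFin rfl c)) +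
      σ i • z none := by
    ext r
    have h1 := one_sub_coeffMatrix_mulVec A (x r) i
    have h2 : z none r = ((1 - coeffMatrix π A) *ᵥ x r) i / σ i := rfl
    have h3 : ∑ j, A i j * x r j.1 =
        (batchMatrix (π i) x *ᵥ (fun c => A i ((π i).orderIsoOfFin rfl c))) r := by
      simp only [mulVec, dotProduct, batchMatrix, of_apply]
      rw [← Equiv.sum_comp ((π i).orderIsoOfFin rfl).toEquiv]
      exact Finset.sum_congr rfl fun c _ => mul_comm _ _
    rw [Pi.add_apply, Pi.smul_apply, smul_eq_mul, h2, ← h3, h1, mul_div_cancel₀ _ (hσ i).ne']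
    ring
  have hMu : IsUnit (batchMatrix (π i) x).det := by
    rw [hM, det_mul, det_diagonal]
    exact (mul_ne_zero hx (Finset.prod_ne_zero_iff.2 fun c _ => (hspos c).ne')).isUnit
  rw [batchSolution, hb, mulVec_add, mulVec_mulVec, nonsing_inv_mul _ hMu, one_mulVec,
    mulVec_smul, hM, Matrix.mul_inv_rev, ← mulVec_mulVec]
  have hd : (diagonal s)⁻¹ = diagonal fun c => (s c)⁻¹ := by
    refine inv_eq_left_inv ?_
    rw [diagonal_mul_diagonal, ← diagonal_one]
    congr 1
    ext k
    exact inv_mul_cancel₀ (hspos k).ne'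
  rw [hd]
  simp only [Pi.add_apply, Pi.smul_apply, mulVec_diagonal, smul_eq_mul, cramerRatio]
  ring

/-- The constant in the tail bound for a coordinate of a batch solution. -/
noncomputable def tailConst : ℝ := gaussianPDFReal 0 1 1 * gaussianPDFReal 0 1 2

theorem tailConst_pos : 0 < tailConst :=
  mul_pos (gaussianPDFReal_pos _ _ _ one_ne_zero) (gaussianPDFReal_pos _ _ _ one_ne_zero)

theorem tailConst_le : tailConst ≤ 1 / 2 := by
  have hle : ∀ x, gaussianPDFReal 0 1 x ≤ 1 / 2 := by
    intro x
    simp only [gaussianPDFReal, NNReal.coe_one, mul_one, sub_zero]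
    have h1 : (√(2 * Real.pi))⁻¹ ≤ 1 / 2 := by
      rw [one_div]
      gcongr
      exact Real.le_sqrt_of_sq_le (by nlinarith [Real.pi_gt_three])
    have h2 : Real.exp (-x ^ 2 / 2) ≤ 1 := by
      rw [Real.exp_le_one_iff]; nlinarith [sq_nonneg x]
    nlinarith [Real.exp_pos (-x ^ 2 / 2)]
  unfold tailConst
  nlinarith [hle 1, hle 2, gaussianPDFReal_nonneg 0 1 1, gaussianPDFReal_nonneg 0 1 2]

theorem measure_batchSolution_tail_le (hπ : ∀ i, ∀ j ∈ π i, j < i)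
    (hG : (underlyingGraph π).IsAcyclic) (A : ∀ i, {j // j ∈ π i} → ℝ) {σ : Fin n → ℝ}
    (hσ : ∀ i, 0 < σ i) (i : Fin n) (c : Fin (π i).card) {τ : ℝ} (h0 : 0 < τ) (h1 : τ ≤ 1) :
    let t := τ * (σ i / √(nodeVar π A σ ((π i).orderEmbOfFin rfl c)))
    let a := A i ((π i).orderIsoOfFin rfl c)
    (Measure.pi fun _ : Fin (π i).card => gaussianBN π A σ)
        {x | a + t < batchSolution (π i) i x c} ≤ ENNReal.ofReal (1 / 2 - tailConst * τ) ∧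
    (Measure.pi fun _ : Fin (π i).card => gaussianBN π A σ)
        {x | batchSolution (π i) i x c < a - t} ≤ ENNReal.ofReal (1 / 2 - tailConst * τ) := by
  intro t a
  have hmap := map_normalizedCols hπ hG A hσ i
  have hm := measurable_normalizedCols A σ i
  have htail := measure_cramerRatio_tail_le c h0 h1
  have hr := measurable_cramerRatio c
  rw [← hmap, Measure.map_apply hm (measurableSet_lt measurable_const hr),
    Measure.map_apply hm (measurableSet_lt hr measurable_const)] at htail
  have hae : ∀ᵐ x ∂(Measure.pi fun _ : Fin (π i).card => gaussianBN π A σ),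
      (colMatrix (normalizedCols π A σ i x)).det ≠ 0 :=
    ae_of_ae_map hm.aemeasurable (hmap ▸ ae_det_colMatrix_ne_zero)
  have hpos : 0 < σ i / √(nodeVar π A σ ((π i).orderEmbOfFin rfl c)) :=
    div_pos (hσ i) (Real.sqrt_pos.2 (nodeVar_pos hπ A hσ _))
  constructor
  · refine le_trans (measure_mono_ae ?_) htail.1
    filter_upwards [hae] with x hx hx'
    change a + t < batchSolution (π i) i x c at hx'
    change τ < cramerRatio c _
    rw [batchSolution_eq hπ A hσ i x hx] at hx'
    simp only [a, t] at hx'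
    by_contra hcon
    nlinarith [mul_le_mul_of_nonneg_left (not_lt.1 hcon) hpos.le]
  · refine le_trans (measure_mono_ae ?_) htail.2
    filter_upwards [hae] with x hx hx'
    change batchSolution (π i) i x c < a - t at hx'
    change cramerRatio c _ < -τ
    rw [batchSolution_eq hπ A hσ i x hx] at hx'
    simp only [a, t] at hx'
    by_contra hcon
    nlinarith [mul_le_mul_of_nonneg_left (not_lt.1 hcon) hpos.le]

/-- Disjoint batches of i.i.d. samples are independent. -/
theorem map_batch_pi {E : Type*} [MeasurableSpace E] (μ : Measure E) [IsProbabilityMeasure μ]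
    (m₁ p : ℕ) :
    (Measure.pi fun _ : Fin m₁ => μ).map (fun x (s : Fin (m₁ / p)) => batch x s) =
      Measure.pi fun _ : Fin (m₁ / p) => Measure.pi fun _ : Fin p => μ := by
  let f : Fin (m₁ / p) × Fin p → Fin m₁ := fun q => ⟨p * q.1.1 + q.2.1, by
    calc p * q.1.1 + q.2.1 < p * q.1.1 + p := Nat.add_lt_add_left q.2.2 _
      _ = p * (q.1.1 + 1) := by ring
      _ ≤ p * (m₁ / p) := Nat.mul_le_mul le_rfl q.1.2
      _ ≤ m₁ := Nat.mul_div_le m₁ p⟩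
  have hf : f.Injective := by
    rintro ⟨s, r⟩ ⟨s', r'⟩ h
    have hp : 0 < p := r.pos
    have h' : p * s.1 + r.1 = p * s'.1 + r'.1 := congrArg Fin.val h
    have h1 : s.1 = s'.1 := by
      have := congrArg (· / p) h'
      simpa [Nat.mul_add_div hp, Nat.div_eq_of_lt r.2, Nat.div_eq_of_lt r'.2] using this
    have h2 : r.1 = r'.1 := by rw [h1] at h'; omega
    exact Prod.ext (Fin.ext h1) (Fin.ext h2)
  rw [← map_pi_curry fun (_ : Fin (m₁ / p)) (_ : Fin p) => μ,
    ← map_pi_precomp (fun _ : Fin m₁ => μ) hf, Measure.map_map (by fun_prop) (by fun_prop)]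
  rfl

theorem measure_coeffRecovery_tail_le (hπ : ∀ i, ∀ j ∈ π i, j < i)
    (hG : (underlyingGraph π).IsAcyclic) (A : ∀ i, {j // j ∈ π i} → ℝ) {σ : Fin n → ℝ}
    (hσ : ∀ i, 0 < σ i) {m₁ : ℕ} (i : Fin n) (j : {j // j ∈ π i}) (hm : (π i).card ≤ m₁)
    {τ : ℝ} (h0 : 0 < τ) (h1 : τ ≤ 1) :
    (Measure.pi fun _ : Fin m₁ => gaussianBN π A σ)
        {x | τ * (σ i / √(nodeVar π A σ j.1)) < |coeffRecovery π x i j - A i j|} ≤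
      ENNReal.ofReal (2 * Real.exp (-((m₁ / (π i).card : ℕ) * (tailConst * τ) ^ 2))) := by
  classical
  set c := ((π i).orderIsoOfFin rfl).symm j with hc
  have hj : (π i).orderIsoOfFin rfl c = j := by simp [hc]
  have hj' : (π i).orderEmbOfFin rfl c = j.1 := by
    rw [← Finset.coe_orderIsoOfFin_apply, hj]
  have htail := measure_batchSolution_tail_le hπ hG A hσ i c h0 h1
  simp only [hj, hj'] at htail
  set t := τ * (σ i / √(nodeVar π A σ j.1)) with ht
  set k := m₁ / (π i).card with hk
  have hp : 0 < (π i).card := Finset.card_pos.2 ⟨j.1, j.2⟩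
  have hk0 : 0 < k := Nat.div_pos hm hp
  have hbm := measurable_batchSolution (π i) i c
  have hγ0 : 0 ≤ tailConst * τ := mul_nonneg tailConst_pos.le h0.le
  have hγ1 : tailConst * τ ≤ 1 / 2 := by nlinarith [tailConst_le, tailConst_pos]
  have hmb : Measurable fun (x : Fin m₁ → Fin n → ℝ) (s : Fin k) => batch x s :=
    measurable_pi_lambda _ fun s => measurable_batch s
  have hcnt : ∀ (S : Set (Fin (π i).card → Fin n → ℝ)), MeasurableSet S → MeasurableSet
      {y : Fin k → Fin (π i).card → Fin n → ℝ |
        k ≤ 2 * (Finset.univ.filter fun s => y s ∈ S).card} := by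
    intro S hS
    simp only [Finset.card_filter]
    refine measurableSet_le measurable_const (Measurable.const_mul
      (Finset.measurable_fun_sum _ fun s _ => ?_) 2)
    exact Measurable.ite (measurable_pi_apply s hS) measurable_const measurable_const
  have hmain : ∀ (S : Set (Fin (π i).card → Fin n → ℝ)), MeasurableSet S →
      (Measure.pi fun _ : Fin (π i).card => gaussianBN π A σ) S ≤
        ENNReal.ofReal (1 / 2 - tailConst * τ) →
      (Measure.pi fun _ : Fin m₁ => gaussianBN π A σ)
        {x | k ≤ 2 * (Finset.univ.filter fun s : Fin k => batch x s ∈ S).card} ≤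
      ENNReal.ofReal (Real.exp (-(k * (tailConst * τ) ^ 2))) := by
    intro S hS hle
    have := measure_pi_half_le _ k hS hγ0 hγ1 hle
    rw [← map_batch_pi, Measure.map_apply hmb (hcnt S hS)] at this
    exact this
  have hS1 := hmain _ (measurableSet_lt measurable_const hbm) htail.1
  have hS2 := hmain _ (measurableSet_lt hbm measurable_const) htail.2
  refine (measure_mono ?_).trans ((measure_union_le _ _).trans ((add_le_add hS1 hS2).trans_eq ?_))
  · intro x hx
    change t < |coeffRecovery π x i j - A i j| at hx
    rcases lt_abs.1 hx with h | h
    · left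
      exact le_two_mul_card_of_lt_sampleMedian hk0
        (x := fun s : Fin k => batchSolution (π i) i (batch x s) c)
        (show A i j + t < coeffRecovery π x i j by linarith)
    · right
      exact le_two_mul_card_of_sampleMedian_lt hk0
        (x := fun s : Fin k => batchSolution (π i) i (batch x s) c)
        (show coeffRecovery π x i j < A i j - t by linarith)
  · rw [← ENNReal.ofReal_add (Real.exp_pos _).le (Real.exp_pos _).le]
    congr 1; ring

end Batch


section SampleComplexity

/-- The two halves of an i.i.d. sample are independent. -/
theorem map_halves_pi {E : Type*} [MeasurableSpace E] (μ : Measure E) [IsProbabilityMeasure μ]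
    (m : ℕ) :
    (Measure.pi fun _ : Fin m => μ).map (fun x => (firstHalf x, secondHalf x)) =
      (Measure.pi fun _ : Fin (m / 2) => μ).prod (Measure.pi fun _ : Fin (m - m / 2) => μ) := by
  let f : Fin (m / 2) ⊕ Fin (m - m / 2) → Fin m :=
    Sum.elim (fun s => ⟨s.1, by omega⟩) (fun s => ⟨m / 2 + s.1, by omega⟩)
  have hf : f.Injective := by
    rintro (a | a) (b | b) h <;> have h' := congrArg Fin.val h <;> simp only [f, Sum.elim_inl,
      Sum.elim_inr] at h'
    · exact congrArg Sum.inl (Fin.ext h')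
    · have := a.2; omega
    · have := b.2; omega
    · exact congrArg Sum.inr (Fin.ext (by omega))
  have h1 := (measurePreserving_sumPiEquivProdPi
    (fun _ : Fin (m / 2) ⊕ Fin (m - m / 2) => μ)).map_eq
  rw [← h1, ← map_pi_precomp (fun _ : Fin m => μ) hf,
    Measure.map_map (MeasurableEquiv.measurable _) (by fun_prop)]
  rfl

theorem measurable_halves {E : Type*} [MeasurableSpace E] {m : ℕ} :
    Measurable fun x : Fin m → E => (firstHalf x, secondHalf x) := by
  unfold firstHalf secondHalf; fun_prop

variable {n : ℕ} {π : Fin n → Finset (Fin n)}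

theorem resVar_pos (hπ : ∀ i, ∀ j ∈ π i, j < i) (hG : (underlyingGraph π).IsAcyclic)
    (A : ∀ i, {j // j ∈ π i} → ℝ) {σ : Fin n → ℝ} (hσ : ∀ i, 0 < σ i)
    (A' : ∀ i, {j // j ∈ π i} → ℝ) (i : Fin n) : 0 < resVar π A σ A' i := by
  rw [resVar_eq hπ hG]
  have h1 : 0 ≤ ∑ j, (A' i j - A i j) ^ 2 * nodeVar π A σ j.1 :=
    Finset.sum_nonneg fun j _ => mul_nonneg (sq_nonneg _) (nodeVar_pos hπ A hσ _).le
  have h2 := pow_pos (hσ i) 2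
  linarith

theorem measure_varianceRecovery_eq (A : ∀ i, {j // j ∈ π i} → ℝ) (σ : Fin n → ℝ)
    (A' : ∀ i, {j // j ∈ π i} → ℝ) (i : Fin n) (hr : 0 < resVar π A σ A' i) (m₂ : ℕ) (u : ℝ) :
    (Measure.pi fun _ : Fin m₂ => gaussianBN π A σ)
      {y | u < |varianceRecovery π A' y i / resVar π A σ A' i - 1|} = chiSqTail m₂ u := by
  set r := resVar π A σ A' i with hrdef
  have hm : Measurable fun x : Fin n → ℝ => ((1 - coeffMatrix π A') *ᵥ x) i / √r := by fun_prop
  have h1 : (gaussianBN π A σ).map (fun x => ((1 - coeffMatrix π A') *ᵥ x) i / √r) =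
      gaussianReal 0 1 := by
    have := congrArg (Measure.map fun y : ℝ => y / √r) (map_residual_gaussianBN A σ A' i)
    rw [Measure.map_map (by fun_prop) (by fun_prop), gaussianReal_map_div_const] at this
    convert this using 2
    · rfl
    · rw [zero_div]
    · apply NNReal.eq
      simp [← hrdef, Real.coe_toNNReal _ hr.le, Real.sq_sqrt hr.le, hr.ne']
  have h2 := Measure.pi_map_pi (μ := fun _ : Fin m₂ => gaussianBN π A σ)
    (f := fun _ x => ((1 - coeffMatrix π A') *ᵥ x) i / √r)
    (hμ := fun _ => by rw [h1]; infer_instance) (fun _ => hm.aemeasurable)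
  simp only [h1] at h2
  unfold chiSqTail
  change _ = (Measure.pi fun _ => gaussianReal 0 1) _
  rw [← h2, Measure.map_apply]
  · congr 1
    ext y
    simp only [Set.mem_ofPred_eq, Set.mem_preimage, varianceRecovery, div_pow,
      Real.sq_sqrt hr.le, ← Finset.sum_div, one_sub_coeffMatrix_mulVec]
    rw [div_right_comm]
  · fun_prop
  · exact measurableSet_lt measurable_const (by fun_prop)

/-- The estimates are as accurate as `dTV_le_of_close` requires. -/
def Close (π : Fin n → Finset (Fin n)) (A : ∀ i, {j // j ∈ π i} → ℝ) (σ τ : Fin n → ℝ) (u : ℝ)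
    {m : ℕ} (x : Fin m → Fin n → ℝ) : Prop :=
  (∀ i j, |coeffEst π x i j - A i j| ≤ τ i * (σ i / √(nodeVar π A σ j.1))) ∧
    ∀ i, |varEst π x i / resVar π A σ (coeffEst π x) i - 1| ≤ u

theorem measure_not_close_le (hπ : ∀ i, ∀ j ∈ π i, j < i) (hG : (underlyingGraph π).IsAcyclic)
    (A : ∀ i, {j // j ∈ π i} → ℝ) {σ : Fin n → ℝ} (hσ : ∀ i, 0 < σ i) {τ : Fin n → ℝ}
    (hτ0 : ∀ i, 0 < (π i).card → 0 < τ i) (hτ1 : ∀ i, τ i ≤ 1) (u : ℝ) {m : ℕ}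
    (hm : ∀ i, (π i).card ≤ m / 2) :
    (Measure.pi fun _ : Fin m => gaussianBN π A σ) {x | ¬ Close π A σ τ u x} ≤
      ∑ i, (π i).card * ENNReal.ofReal
        (2 * Real.exp (-((m / 2 / (π i).card : ℕ) * (tailConst * τ i) ^ 2))) +
      n * chiSqTail (m - m / 2) u := by
  set P := gaussianBN π A σ
  set S₁ : ∀ i, {j // j ∈ π i} → Set (Fin (m / 2) → Fin n → ℝ) := fun i j =>
    {x | τ i * (σ i / √(nodeVar π A σ j.1)) < |coeffRecovery π x i j - A i j|} with hS₁
  set S₂ : Fin n → Set ((Fin (m / 2) → Fin n → ℝ) × (Fin (m - m / 2) → Fin n → ℝ)) := fun i =>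
    {z | u < |varianceRecovery π (coeffRecovery π z.1) z.2 i /
      resVar π A σ (coeffRecovery π z.1) i - 1|} with hS₂
  have hmap := map_halves_pi P m
  have hS₁m : ∀ i j, MeasurableSet (S₁ i j) := fun i j =>
    measurableSet_lt measurable_const ((measurable_coeffRecovery i j).sub_const _).abs
  have hS₂m : ∀ i, MeasurableSet (S₂ i) := by
    intro i
    have hc : ∀ i j, Measurable fun z : (Fin (m / 2) → Fin n → ℝ) ×
        (Fin (m - m / 2) → Fin n → ℝ) => coeffRecovery π z.1 i j := fun i j =>
      (measurable_coeffRecovery i j).comp measurable_fst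
    simp only [hS₂, resVar_eq hπ hG, varianceRecovery]
    refine measurableSet_lt measurable_const (Measurable.abs (Measurable.sub_const
      (Measurable.div (Measurable.div_const ?_ _) ?_) _))
    · fun_prop
    · fun_prop
  have hmeas1 : ∀ i j, (Measure.pi fun _ : Fin m => P) {x | firstHalf x ∈ S₁ i j} ≤
      ENNReal.ofReal (2 * Real.exp (-((m / 2 / (π i).card : ℕ) * (tailConst * τ i) ^ 2))) := by
    intro i j
    have h1 := measure_coeffRecovery_tail_le hπ hG A hσ i j (hm i)
      (hτ0 i (Finset.card_pos.2 ⟨j.1, j.2⟩)) (hτ1 i)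
    refine le_trans (le_of_eq ?_) h1
    have h2 : {x : Fin m → Fin n → ℝ | firstHalf x ∈ S₁ i j} =
        (fun x => (firstHalf x, secondHalf x)) ⁻¹' (S₁ i j ×ˢ Set.univ) := by
      ext x; simp
    rw [h2, ← Measure.map_apply measurable_halves ((hS₁m i j).prod MeasurableSet.univ), hmap,
      Measure.prod_prod, measure_univ, mul_one]
  have hmeas2 : ∀ i, (Measure.pi fun _ : Fin m => P) {x | (firstHalf x, secondHalf x) ∈ S₂ i} =
      chiSqTail (m - m / 2) u := by
    intro i
    have h2 : {x : Fin m → Fin n → ℝ | (firstHalf x, secondHalf x) ∈ S₂ i} =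
        (fun x => (firstHalf x, secondHalf x)) ⁻¹' (S₂ i) := rfl
    rw [h2, ← Measure.map_apply measurable_halves (hS₂m i), hmap, Measure.prod_apply (hS₂m i)]
    have h3 : ∀ x, (Measure.pi fun _ : Fin (m - m / 2) => P) (Prod.mk x ⁻¹' S₂ i) =
        chiSqTail (m - m / 2) u := fun x =>
      measure_varianceRecovery_eq A σ (coeffRecovery π x) i (resVar_pos hπ hG A hσ _ i) _ u
    simp [h3]
  have hsub : {x : Fin m → Fin n → ℝ | ¬ Close π A σ τ u x} ⊆
      (⋃ i, ⋃ j, {x | firstHalf x ∈ S₁ i j}) ∪ ⋃ i, {x | (firstHalf x, secondHalf x) ∈ S₂ i} := by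
    intro x hx
    simp only [Set.mem_ofPred_eq, Close, not_and_or, not_forall, not_le] at hx
    rcases hx with ⟨i, j, h⟩ | ⟨i, h⟩
    · exact Or.inl (Set.mem_iUnion₂.2 ⟨i, j, h⟩)
    · exact Or.inr (Set.mem_iUnion.2 ⟨i, h⟩)
  refine (measure_mono hsub).trans ((measure_union_le _ _).trans (add_le_add ?_ ?_))
  · refine (measure_iUnion_fintype_le _ _).trans (Finset.sum_le_sum fun i _ => ?_)
    refine (measure_iUnion_fintype_le _ _).trans
      ((Finset.sum_le_sum fun j _ => hmeas1 i j).trans ?_)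
    simp
  · refine (measure_iUnion_fintype_le _ _).trans (le_of_eq ?_)
    simp [hmeas2]

theorem learnsWithin_of_measure_not_close_le (hπ : ∀ i, ∀ j ∈ π i, j < i)
    (hG : (underlyingGraph π).IsAcyclic) (A : ∀ i, {j // j ∈ π i} → ℝ) {σ : Fin n → ℝ}
    (hσ : ∀ i, 0 < σ i) {τ : Fin n → ℝ} {u ε δ : ℝ} (hu : u ≤ 1 / 2) (hε : 0 ≤ ε) (hδ : 0 ≤ δ)
    {m : ℕ} (hsum : ∑ i, ((π i).card * τ i ^ 2 + 2 * u ^ 2) / 2 ≤ ε ^ 2)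
    (h : (Measure.pi fun _ : Fin m => gaussianBN π A σ) {x | ¬ Close π A σ τ u x} ≤
      ENNReal.ofReal δ) : LearnsWithin π A σ m ε δ := by
  unfold LearnsWithin
  set μ := Measure.pi fun _ : Fin m => gaussianBN π A σ
  have hsub : {x | Close π A σ τ u x} ⊆
      {x : Fin m → Fin n → ℝ | dTV (gaussianBN π A σ) (learnedBN π x) ≤ ε} := fun x hx =>
    dTV_le_of_close hπ hG A _ hσ hu hε hx.1 hx.2 hsum
  refine le_trans ?_ (measure_mono hsub)
  have h1 : (1 : ENNReal) ≤ μ {x | Close π A σ τ u x} + μ {x | ¬ Close π A σ τ u x} := by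
    rw [← measure_univ (μ := μ)]
    refine (measure_mono ?_).trans (measure_union_le _ _)
    intro x _
    exact em _
  rw [ENNReal.ofReal_sub _ hδ, ENNReal.ofReal_one, tsub_le_iff_right]
  exact h1.trans (add_le_add le_rfl h)

theorem sum_sq_card_le {d : ℕ} (hd : ∀ i, (π i).card ≤ d) :
    ∑ i, ((π i).card : ℝ) ^ 2 ≤ n * max 1 (avgInDegree π * d) := by
  rcases Nat.eq_zero_or_pos n with rfl | hn
  · simp
  have hn' : (0 : ℝ) < n := by exact_mod_cast hn
  calc ∑ i, ((π i).card : ℝ) ^ 2 ≤ ∑ i, ((π i).card : ℝ) * d := by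
        refine Finset.sum_le_sum fun i _ => ?_
        rw [sq]
        gcongr
        exact_mod_cast hd i
    _ = n * (avgInDegree π * d) := by
        rw [← Finset.sum_mul, avgInDegree]; field_simp
    _ ≤ _ := by gcongr; exact le_max_right _ _

theorem failure_sum_le {n ε δ : ℝ} (hn' : 1 ≤ n) (hε0 : 0 < ε) (hε1 : ε < 1) (hδ0 : 0 < δ)
    (hδ1 : δ < 1) (h2 : 2 ≤ n / (ε * δ)) : (n + 1) * (n * (2 * (ε * δ / n) ^ 4)) ≤ δ := by
  have hεδ : 0 < ε * δ := mul_pos hε0 hδ0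
  set t := ε * δ / n with ht
  have htn : n * t = ε * δ := by rw [ht]; field_simp
  have ht0 : 0 < t := by positivity
  have ht2 : t ≤ 1 / 2 := by
    rw [ht, div_le_iff₀ (by linarith)]
    rw [le_div_iff₀ hεδ] at h2
    linarith
  have e1 : (n + 1) * (n * (2 * t ^ 4)) ≤ 2 * n * (n * (2 * t ^ 4)) := by
    have : 0 ≤ n * (2 * t ^ 4) := by positivity
    nlinarith
  have e2 : 2 * n * (n * (2 * t ^ 4)) = (ε * δ) ^ 2 * (4 * t ^ 2) := by
    rw [← htn]; ring
  have e3 : 4 * t ^ 2 ≤ 1 := by nlinarith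
  have e4 : (ε * δ) ^ 2 ≤ δ := by
    have h5 : ε * δ ≤ δ := by nlinarith
    have h6 : ε * δ ≤ 1 := by linarith
    nlinarith
  calc _ ≤ _ := e1
    _ = _ := e2
    _ ≤ (ε * δ) ^ 2 * 1 := by gcongr
    _ ≤ δ := by linarith

theorem div_le_cast_half_div {m p : ℕ} (h : 0 < p) (hpm : p ≤ m / 2) :
    (m : ℝ) / (8 * p) ≤ (m / 2 / p : ℕ) := by
  have hp : (0 : ℝ) < p := by exact_mod_cast h
  have h1 : m ≤ 4 * (m / 2) := by omega
  have h3 : m / 2 < p * (m / 2 / p) + p := by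
    have := Nat.div_add_mod (m / 2) p
    have := Nat.mod_lt (m / 2) h
    omega
  have h4 : 1 ≤ m / 2 / p := Nat.div_pos hpm h
  have h5 : p ≤ p * (m / 2 / p) := Nat.le_mul_of_pos_right _ h4
  have h6 : m ≤ (m / 2 / p) * (8 * p) := by
    calc m ≤ 4 * (m / 2) := h1
      _ ≤ 4 * (2 * (p * (m / 2 / p))) := by omega
      _ = _ := by ring
  rw [div_le_iff₀ (by positivity)]
  exact_mod_cast h6

theorem learnsWithin_of_two_le (hπ : ∀ i, ∀ j ∈ π i, j < i) (hG : (underlyingGraph π).IsAcyclic)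
    {d : ℕ} (hd : ∀ i, (π i).card ≤ d) (A : ∀ i, {j // j ∈ π i} → ℝ) {σ : Fin n → ℝ}
    (hσ : ∀ i, 0 < σ i) (hn : 1 ≤ n) {ε δ C : ℝ} (hε0 : 0 < ε) (hε1 : ε < 1) (hδ0 : 0 < δ)
    (hδ1 : δ < 1) (h2 : 2 ≤ n / (ε * δ)) (hC1 : 256 ≤ C) (hC2 : 32 ≤ C * tailConst ^ 2) {m : ℕ}
    (hm : C * (n * max 1 (avgInDegree π * d) / ε ^ 2) * Real.log (n / (ε * δ)) ≤ m) :
    LearnsWithin π A σ m ε δ := by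
  have hn' : (1 : ℝ) ≤ n := by exact_mod_cast hn
  have hεδ : 0 < ε * δ := mul_pos hε0 hδ0
  set N : ℝ := n * max 1 (avgInDegree π * d) with hN
  have hNn : (n : ℝ) ≤ N := le_mul_of_one_le_right (by linarith) (le_max_left _ _)
  have hN1 : 1 ≤ N := hn'.trans hNn
  have hsq : ∑ i, ((π i).card : ℝ) ^ 2 ≤ N := sum_sq_card_le hd
  have hcN : ∀ i, ((π i).card : ℝ) ≤ N := fun i => by
    refine le_trans ?_ ((Finset.single_le_sum (f := fun i => ((π i).card : ℝ) ^ 2)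
      (fun _ _ => by positivity) (Finset.mem_univ i)).trans hsq)
    rw [sq]
    rcases Nat.eq_zero_or_pos (π i).card with h | h
    · simp [h]
    · have : (1 : ℝ) ≤ (π i).card := by exact_mod_cast h
      nlinarith
  set Λ := Real.log (n / (ε * δ)) with hΛ
  have hΛ2 : 1 / 2 ≤ Λ := by
    have h1 : Real.log 2 ≤ Λ := Real.log_le_log (by norm_num) h2
    linarith [Real.log_two_gt_d9]
  have hmN : C * Λ * N ≤ m * ε ^ 2 := by
    have : C * (N / ε ^ 2) * Λ = C * Λ * N / ε ^ 2 := by ring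
    rw [this, div_le_iff₀ (by positivity)] at hm
    exact hm
  have hmε : (m : ℝ) * ε ^ 2 ≤ m := by
    have : ε ^ 2 ≤ 1 := by nlinarith
    nlinarith [(Nat.cast_nonneg m : (0 : ℝ) ≤ m)]
  have hm8 : 128 * N ≤ m := by
    have : 128 ≤ C * Λ := by nlinarith
    nlinarith
  have hm0 : (128 : ℝ) ≤ m := by linarith
  have hm0' : 128 ≤ m := by exact_mod_cast hm0
  set u : ℝ := ε / (2 * √n) with hu
  have hsn : (1 : ℝ) ≤ √n := by rw [Real.one_le_sqrt]; exact hn'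
  have hu2 : u ^ 2 = ε ^ 2 / (4 * n) := by
    rw [hu, div_pow, mul_pow, Real.sq_sqrt (by linarith)]; norm_num
  have hu0 : 0 < u := by positivity
  have hu1 : u ≤ 1 / 2 := by
    rw [hu, div_le_iff₀ (by positivity)]; linarith
  set τ : Fin n → ℝ := fun i => ε * √((π i).card / N) with hτ
  have hτ2 : ∀ i, τ i ^ 2 = ε ^ 2 * ((π i).card / N) := fun i => by
    simp only [hτ]; rw [mul_pow, Real.sq_sqrt (by positivity)]
  have hτ0 : ∀ i, 0 < (π i).card → 0 < τ i := fun i hi => by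
    have : (0 : ℝ) < (π i).card := by exact_mod_cast hi
    simp only [hτ]; positivity
  have hτ1 : ∀ i, τ i ≤ 1 := fun i => by
    have h1 : √((π i).card / N) ≤ 1 := by
      rw [Real.sqrt_le_one, div_le_one (by linarith)]; exact hcN i
    simp only [hτ]
    nlinarith [Real.sqrt_nonneg ((π i).card / N)]
  have hcm : ∀ i, (π i).card ≤ m / 2 := fun i => by
    have h1 : ((π i).card : ℝ) * 2 ≤ m := by linarith [hcN i]
    have h2 : (π i).card * 2 ≤ m := by exact_mod_cast h1
    omega
  have hΛexp : Real.exp (-(4 * Λ)) = (ε * δ / n) ^ 4 := by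
    rw [show -(4 * Λ) = (4 : ℕ) * -Λ by push_cast; ring, Real.exp_nat_mul, Real.exp_neg, hΛ,
      Real.exp_log (by positivity), inv_div]
  refine learnsWithin_of_measure_not_close_le hπ hG A hσ (τ := τ) hu1 hε0.le hδ0.le ?_
    ((measure_not_close_le hπ hG A hσ hτ0 hτ1 u hcm).trans ?_)
  · have h1 : ∑ i, ((π i).card * τ i ^ 2 + 2 * u ^ 2) / 2 =
        (ε ^ 2 * ((∑ i, ((π i).card : ℝ) ^ 2) / N) + n * (2 * u ^ 2)) / 2 := by
      rw [← Finset.sum_div, Finset.sum_add_distrib]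
      simp only [hτ2, Finset.sum_const, Finset.card_univ, Fintype.card_fin, nsmul_eq_mul]
      congr 2
      rw [Finset.sum_div, Finset.mul_sum]
      exact Finset.sum_congr rfl fun i _ => by ring
    have h3 : (∑ i, ((π i).card : ℝ) ^ 2) / N ≤ 1 := by
      rw [div_le_one (by linarith)]; exact hsq
    have h4 : n * (2 * u ^ 2) = ε ^ 2 / 2 := by rw [hu2]; field_simp; norm_num
    rw [h1, h4]
    nlinarith [sq_nonneg ε]
  · have hb1 : ∀ i, ((π i).card : ENNReal) * ENNReal.ofReal
        (2 * Real.exp (-((m / 2 / (π i).card : ℕ) * (tailConst * τ i) ^ 2))) ≤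
        ENNReal.ofReal (n * (2 * (ε * δ / n) ^ 4)) := by
      intro i
      rcases Nat.eq_zero_or_pos (π i).card with h | h
      · simp [h]
      have hp : (0 : ℝ) < (π i).card := by exact_mod_cast h
      have hk : (m : ℝ) / (8 * (π i).card) ≤ (m / 2 / (π i).card : ℕ) := by
        exact div_le_cast_half_div h (hcm i)
      have hexp : 4 * Λ ≤ (m / 2 / (π i).card : ℕ) * (tailConst * τ i) ^ 2 := by
        rw [mul_pow, hτ2]
        calc 4 * Λ ≤ C * tailConst ^ 2 / 8 * Λ := by nlinarith
          _ = C * Λ * N * (tailConst ^ 2 / (8 * N)) := by field_simp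
          _ ≤ m * ε ^ 2 * (tailConst ^ 2 / (8 * N)) := by
              refine mul_le_mul_of_nonneg_right hmN ?_
              positivity
          _ = m / (8 * (π i).card) * (tailConst ^ 2 * (ε ^ 2 * ((π i).card / N))) := by
              field_simp
          _ ≤ _ := mul_le_mul_of_nonneg_right hk (by positivity)
      rw [← ENNReal.ofReal_natCast, ← ENNReal.ofReal_mul (by positivity)]
      refine ENNReal.ofReal_le_ofReal ?_
      have hcard : ((π i).card : ℝ) ≤ n := by
        have := Finset.card_le_univ (π i)
        rw [Fintype.card_fin] at this
        exact_mod_cast this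
      rw [← hΛexp]
      gcongr
    have hb2 : (n : ENNReal) * chiSqTail (m - m / 2) u ≤
        ENNReal.ofReal (n * (2 * (ε * δ / n) ^ 4)) := by
      have h1 := chiSqTail_le (m := m - m / 2) (by omega) hu0 (by linarith)
      rw [← ENNReal.ofReal_natCast, ENNReal.ofReal_mul (Nat.cast_nonneg n)]
      refine mul_le_mul_right ?_ _
      refine h1.trans (ENNReal.ofReal_le_ofReal ?_)
      rw [← hΛexp]
      gcongr
      have h3 : (m : ℝ) / 2 ≤ (m - m / 2 : ℕ) := by
        have : m ≤ 2 * (m - m / 2) := by omega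
        have h4 : (m : ℝ) ≤ 2 * (m - m / 2 : ℕ) := by exact_mod_cast this
        linarith
      rw [hu2]
      calc 4 * Λ ≤ C * Λ / 64 := by nlinarith
        _ = C * Λ * n * (1 / (64 * n)) := by field_simp
        _ ≤ C * Λ * N * (1 / (64 * n)) := by gcongr
        _ ≤ m * ε ^ 2 * (1 / (64 * n)) := by gcongr
        _ = (m / 2) * (ε ^ 2 / (4 * n)) / 8 := by field_simp; norm_num
        _ ≤ _ := by gcongr
    calc _ ≤ ∑ _i : Fin n, ENNReal.ofReal (n * (2 * (ε * δ / n) ^ 4)) +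
          ENNReal.ofReal (n * (2 * (ε * δ / n) ^ 4)) :=
          add_le_add (Finset.sum_le_sum fun i _ => hb1 i) hb2
      _ = ENNReal.ofReal ((n + 1) * (n * (2 * (ε * δ / n) ^ 4))) := by
          rw [Finset.sum_const, Finset.card_univ, Fintype.card_fin, nsmul_eq_mul,
            ← ENNReal.ofReal_natCast, ← ENNReal.ofReal_mul (by positivity),
            ← ENNReal.ofReal_add (by positivity) (by positivity)]
          congr 1; ring
      _ ≤ _ := by
          refine ENNReal.ofReal_le_ofReal ?_
          exact failure_sum_le hn' hε0 hε1 hδ0 hδ1 h2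

theorem exists_learnsWithin_const : ∃ C : ℝ, 256 ≤ C ∧
    ∀ (ε δ : ℝ), 0 < ε → ε < 1 → 0 < δ → δ < 1 →
      ∀ (n d : ℕ) (π : Fin n → Finset (Fin n)),
        (∀ i, ∀ j ∈ π i, j < i) → (∀ i, (π i).card ≤ d) → (underlyingGraph π).IsAcyclic →
        ∀ (A : ∀ i, {j // j ∈ π i} → ℝ) (σ : Fin n → ℝ), (∀ i, 0 < σ i) →
        ∀ m : ℕ, C * (n * max 1 (avgInDegree π * d) / ε ^ 2) * Real.log (n / (ε * δ)) ≤ m →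
          LearnsWithin π A σ m ε δ := by
  obtain ⟨κ, hκ, hchi⟩ := exists_chiSqTail_half_le
  have hc := tailConst_pos
  refine ⟨256 + 32 / tailConst ^ 2 + 2 / κ, by
    have : 0 < 32 / tailConst ^ 2 := by positivity
    have : 0 < 2 / κ := by positivity
    linarith, ?_⟩
  set C := 256 + 32 / tailConst ^ 2 + 2 / κ with hC
  intro ε δ hε0 hε1 hδ0 hδ1 n d π hπ hd hG A σ hσ m hm
  have hp1 : 0 < 32 / tailConst ^ 2 := by positivity
  have hp2 : 0 < 2 / κ := by positivity
  have hC1 : 256 ≤ C := by linarith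
  have hC2 : 32 ≤ C * tailConst ^ 2 := by
    rw [← div_le_iff₀ (by positivity)]; linarith
  have hC3 : 2 ≤ C * κ := by
    rw [← div_le_iff₀ hκ]; linarith
  have hεδ : 0 < ε * δ := mul_pos hε0 hδ0
  rcases Nat.eq_zero_or_pos n with rfl | hn
  · refine learnsWithin_of_measure_not_close_le hπ hG A hσ (τ := 0) (u := 0) (by norm_num) hε0.le
      hδ0.le (by simp; positivity) ?_
    simp [Close]
  by_cases h2 : 2 ≤ n / (ε * δ)
  · exact learnsWithin_of_two_le hπ hG hd A hσ hn hε0 hε1 hδ0 hδ1 h2 hC1 hC2 hm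
  push Not at h2
  rw [div_lt_iff₀ hεδ] at h2
  have hn1 : n = 1 := by
    have : (n : ℝ) < 2 := by nlinarith
    have : n < 2 := by exact_mod_cast this
    omega
  subst hn1
  have hcard : ∀ i, (π i).card = 0 := fun i => by
    rw [Finset.card_eq_zero, Finset.eq_empty_iff_forall_notMem]
    intro j hj
    have := hπ i j hj
    omega
  have hε2 : 1 / 2 < ε := by norm_num at h2; nlinarith
  have hlog : -Real.log δ ≤ Real.log ((1 : ℕ) / (ε * δ)) := by
    rw [Nat.cast_one, one_div, Real.log_inv, Real.log_mul hε0.ne' hδ0.ne']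
    linarith [Real.log_neg hε0 hε1]
  have hlogδ : 0 < -Real.log δ := by linarith [Real.log_neg hδ0 hδ1]
  have hmlog : C * -Real.log δ ≤ m := by
    refine le_trans ?_ hm
    have h1 : 1 ≤ ((1 : ℕ) : ℝ) * max 1 (avgInDegree π * d) / ε ^ 2 := by
      rw [le_div_iff₀ (by positivity), Nat.cast_one, one_mul, one_mul]
      exact le_trans (by nlinarith) (le_max_left _ _)
    have h3 : C ≤ C * (((1 : ℕ) : ℝ) * max 1 (avgInDegree π * d) / ε ^ 2) :=
      le_mul_of_one_le_right (by linarith) h1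
    exact mul_le_mul h3 hlog hlogδ.le (by linarith)
  have hm0 : 0 < m := by
    have : (0 : ℝ) < m := lt_of_lt_of_le (by positivity) hmlog
    exact_mod_cast this
  refine learnsWithin_of_measure_not_close_le hπ hG A hσ (τ := 0) (u := 1 / 2) le_rfl hε0.le
    hδ0.le (by simp; nlinarith) ((measure_not_close_le hπ hG A hσ ?_ ?_ _ ?_).trans ?_)
  · intro i hi; rw [hcard i] at hi; exact absurd hi (lt_irrefl _)
  · intro i; simp
  · intro i; rw [hcard i]; exact Nat.zero_le _
  · simp only [hcard, Nat.cast_zero, zero_mul, Finset.sum_const_zero, zero_add, Nat.cast_one,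
      one_mul]
    refine (hchi _ (by omega)).trans (ENNReal.ofReal_le_ofReal ?_)
    rw [← Real.le_log_iff_exp_le hδ0]
    have h3 : (m : ℝ) ≤ 2 * (m - m / 2 : ℕ) := by
      have : m ≤ 2 * (m - m / 2) := by omega
      exact_mod_cast this
    nlinarith

end SampleComplexity


section Trees

/-- Renaming the registers of a tree. -/
def ArithTree.rename {κ : Type} : {α β : Type} → (α → β) → ArithTree κ α → ArithTree κ β
  | _, _, f, .ret out => .ret (f ∘ out)
  | _, _, f, .const c next => .const c (next.rename (Option.map f))
  | _, _, f, .op o a b next => .op o (f a) (f b) (next.rename (Option.map f))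
  | _, _, f, .branch a b lt ge => .branch (f a) (f b) (lt.rename f) (ge.rename f)

theorem ArithTree.cost_rename {κ : Type} : ∀ {α β : Type} (f : α → β) (t : ArithTree κ α),
    (t.rename f).cost = t.cost
  | _, _, _, .ret _ => rfl
  | _, _, f, .const _ next => by simp [rename, cost, cost_rename _ next]
  | _, _, f, .op _ _ _ next => by simp [rename, cost, cost_rename _ next]
  | _, _, f, .branch _ _ lt ge => by simp [rename, cost, cost_rename _ lt, cost_rename _ ge]

theorem elim_comp_optionMap {α β : Type} (f : α → β) (x : ℝ) (v : β → ℝ) :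
    (fun r : Option β => r.elim x v) ∘ Option.map f = fun r => r.elim x (v ∘ f) := by
  funext r; cases r <;> rfl

theorem ArithTree.eval_rename {κ : Type} : ∀ {α β : Type} (f : α → β) (t : ArithTree κ α)
    (v : β → ℝ), (t.rename f).eval v = t.eval (v ∘ f)
  | _, _, _, .ret _, _ => rfl
  | _, _, f, .const c next, v => by
    simp only [rename, eval, eval_rename _ next, elim_comp_optionMap]
  | _, _, f, .op o a b next, v => by
    simp only [rename, eval, eval_rename _ next, elim_comp_optionMap, Function.comp]
  | _, _, f, .branch a b lt ge, v => by
    simp only [rename, eval, eval_rename _ lt, eval_rename _ ge, Function.comp]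

/-- Running a second tree on the outputs of a first one. -/
def ArithTree.comp {κ ι : Type} (t' : ArithTree ι κ) : {α : Type} → ArithTree κ α → ArithTree ι α
  | _, .ret out => t'.rename out
  | _, .const c next => .const c (ArithTree.comp t' next)
  | _, .op o a b next => .op o a b (ArithTree.comp t' next)
  | _, .branch a b lt ge => .branch a b (ArithTree.comp t' lt) (ArithTree.comp t' ge)

theorem ArithTree.cost_comp {κ ι : Type} (t' : ArithTree ι κ) : ∀ {α : Type} (t : ArithTree κ α),
    (t'.comp t).cost = t.cost + t'.cost
  | _, .ret _ => by simp [comp, cost, cost_rename]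
  | _, .const _ next => by simp only [comp, cost, cost_comp t' next]; omega
  | _, .op _ _ _ next => by simp only [comp, cost, cost_comp t' next]; omega
  | _, .branch _ _ lt ge => by simp only [comp, cost, cost_comp t' lt, cost_comp t' ge]; omega

theorem ArithTree.eval_comp {κ ι : Type} (t' : ArithTree ι κ) : ∀ {α : Type} (t : ArithTree κ α)
    (v : α → ℝ), (t'.comp t).eval v = t'.eval (t.eval v)
  | _, .ret _, v => eval_rename _ _ _
  | _, .const _ next, v => by simp only [comp, eval, eval_comp t' next]
  | _, .op _ _ _ next, v => by simp only [comp, eval, eval_comp t' next]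
  | _, .branch a b lt ge, v => by
    simp only [comp, eval, eval_comp t' lt, eval_comp t' ge]
    split_ifs <;> rfl

/-- Adding the registers `g` to the outputs of a tree. -/
def ArithTree.keep {κ β : Type} : {α : Type} → (β → α) → ArithTree κ α → ArithTree (κ ⊕ β) α
  | _, g, .ret out => .ret (Sum.elim out g)
  | _, g, .const c next => .const c (next.keep (some ∘ g))
  | _, g, .op o a b next => .op o a b (next.keep (some ∘ g))
  | _, g, .branch a b lt ge => .branch a b (lt.keep g) (ge.keep g)

theorem ArithTree.cost_keep {κ β : Type} : ∀ {α : Type} (g : β → α) (t : ArithTree κ α),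
    (t.keep g).cost = t.cost
  | _, _, .ret _ => rfl
  | _, g, .const _ next => by simp [keep, cost, cost_keep _ next]
  | _, g, .op _ _ _ next => by simp [keep, cost, cost_keep _ next]
  | _, g, .branch _ _ lt ge => by simp [keep, cost, cost_keep _ lt, cost_keep _ ge]

theorem ArithTree.eval_keep {κ β : Type} : ∀ {α : Type} (g : β → α) (t : ArithTree κ α)
    (v : α → ℝ), (t.keep g).eval v = Sum.elim (t.eval v) (v ∘ g)
  | _, _, .ret _, _ => by
    funext k; cases k <;> rfl
  | _, g, .const c next, v => by
    simp only [keep, eval, eval_keep _ next]; rfl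
  | _, g, .op o a b next, v => by
    simp only [keep, eval, eval_keep _ next]; rfl
  | _, g, .branch a b lt ge, v => by
    simp only [keep, eval, eval_keep _ lt, eval_keep _ ge]
    split_ifs <;> rfl

end Trees

namespace ComputableInTime

section

variable {α β κ ι : Type}

theorem mono {F : (α → ℝ) → κ → ℝ} {S T : ℝ} (h : ComputableInTime F S) (hST : S ≤ T) :
    ComputableInTime F T := by
  obtain ⟨t, h1, h2⟩ := h
  exact ⟨t, h1.trans hST, h2⟩

theorem nonneg {F : (α → ℝ) → κ → ℝ} {T : ℝ} (h : ComputableInTime F T) : 0 ≤ T := by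
  obtain ⟨t, h1, -⟩ := h
  exact (Nat.cast_nonneg _).trans h1

theorem proj (f : κ → α) : ComputableInTime (fun v k => v (f k)) 0 :=
  ⟨.ret f, by simp [ArithTree.cost], fun _ => rfl⟩

theorem comp {F : (α → ℝ) → κ → ℝ} {G : (κ → ℝ) → ι → ℝ} {S T : ℝ} (hG : ComputableInTime G T)
    (hF : ComputableInTime F S) : ComputableInTime (fun v => G (F v)) (S + T) := by
  obtain ⟨t, h1, h2⟩ := hF
  obtain ⟨t', h1', h2'⟩ := hG
  refine ⟨t'.comp t, ?_, fun v => ?_⟩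
  · rw [ArithTree.cost_comp]; push_cast; linarith
  · rw [ArithTree.eval_comp, h2, h2']

theorem keep {F : (α → ℝ) → κ → ℝ} {T : ℝ} (hF : ComputableInTime F T) :
    ComputableInTime (fun v => Sum.elim (F v) v) T := by
  obtain ⟨t, h1, h2⟩ := hF
  exact ⟨t.keep id, by rwa [ArithTree.cost_keep], fun v => by
    rw [ArithTree.eval_keep, h2]; rfl⟩

/-- Using intermediate results together with the inputs. -/
theorem bind {F : (α → ℝ) → κ → ℝ} {G : (κ ⊕ α → ℝ) → ι → ℝ} {S T : ℝ}
    (hF : ComputableInTime F S) (hG : ComputableInTime G T) :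
    ComputableInTime (fun v => G (Sum.elim (F v) v)) (S + T) :=
  hG.comp hF.keep

/-- Feeding a computation with a selection of the registers. -/
theorem precomp {F : (α → ℝ) → κ → ℝ} {T : ℝ} (hF : ComputableInTime F T) (f : α → β) :
    ComputableInTime (fun v : β → ℝ => F fun a => v (f a)) T := by
  simpa using hF.comp (proj f)

theorem reindex {F : (α → ℝ) → κ → ℝ} {T : ℝ} (hF : ComputableInTime F T) (f : ι → κ) :
    ComputableInTime (fun v i => F v (f i)) T := by
  simpa using (proj f).comp hF

theorem pair {F : (α → ℝ) → κ → ℝ} {G : (α → ℝ) → ι → ℝ} {S T : ℝ}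
    (hF : ComputableInTime F S) (hG : ComputableInTime G T) :
    ComputableInTime (fun v => Sum.elim (F v) (G v)) (S + T) := by
  have h := (hF.bind (hG.precomp Sum.inr).keep).reindex
    (Sum.elim (fun k => Sum.inr (Sum.inl k)) Sum.inl : κ ⊕ ι → ι ⊕ (κ ⊕ α))
  convert h using 3 with v k
  cases k <;> rfl

/-- A finite family of computations. -/
theorem pi [Fintype ι] {κ : ι → Type} {F : ∀ i, (α → ℝ) → κ i → ℝ} {T : ι → ℝ}
    (h : ∀ i, ComputableInTime (F i) (T i)) :
    ComputableInTime (fun v (k : Σ i, κ i) => F k.1 v k.2) (∑ i, T i) := by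
  classical
  suffices H : ∀ s : Finset ι,
      ComputableInTime (fun v (k : Σ i : s, κ i) => F k.1 v k.2) (∑ i ∈ s, T i) by
    exact (H Finset.univ).reindex fun k : Σ i, κ i => ⟨⟨k.1, Finset.mem_univ _⟩, k.2⟩
  intro s
  induction s using Finset.induction_on with
  | empty =>
    refine ⟨.ret fun k => absurd k.1.2 (Finset.notMem_empty _), by simp [ArithTree.cost],
      fun v => ?_⟩
    funext k
    exact absurd k.1.2 (Finset.notMem_empty _)
  | insert a s ha ih =>
    rw [Finset.sum_insert ha]
    have h2 := ((h a).pair ih).reindex fun k : Σ i : ↥(insert a s), κ i =>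
      if hk : k.1.1 = a then (Sum.inl (hk ▸ k.2) : κ a ⊕ Σ i : s, κ i)
      else Sum.inr ⟨⟨k.1, (Finset.mem_insert.1 k.1.2).resolve_left hk⟩, k.2⟩
    convert h2 using 3 with v k
    obtain ⟨⟨i, hi⟩, k⟩ := k
    by_cases hk : i = a
    · subst hk; simp
    · simp [hk]

/-- A finite family of real-valued computations. -/
theorem of_forall [Fintype κ] {F : (α → ℝ) → κ → ℝ} {T : κ → ℝ}
    (h : ∀ k, ComputableInTime (fun v (_ : Unit) => F v k) (T k)) :
    ComputableInTime F (∑ k, T k) :=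
  (pi h).reindex fun k => ⟨k, ()⟩

theorem const (c : ℚ) : ComputableInTime (fun (_ : α → ℝ) (_ : Unit) => (c : ℝ)) 1 :=
  ⟨.const c (.ret fun _ => none), by simp [ArithTree.cost], fun _ => rfl⟩

theorem op (o : ArithOp) (a b : α) :
    ComputableInTime (fun v (_ : Unit) => o.apply (v a) (v b)) 1 :=
  ⟨.op o a b (.ret fun _ => none), by simp [ArithTree.cost], fun _ => rfl⟩

theorem op₂ (o : ArithOp) {f g : (α → ℝ) → ℝ} {S T : ℝ}
    (hf : ComputableInTime (fun v (_ : Unit) => f v) S)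
    (hg : ComputableInTime (fun v (_ : Unit) => g v) T) :
    ComputableInTime (fun v (_ : Unit) => o.apply (f v) (g v)) (S + T + 1) :=
  (op o (Sum.inl ()) (Sum.inr ())).comp (hf.pair hg)

theorem add {f g : (α → ℝ) → ℝ} {S T : ℝ}
    (hf : ComputableInTime (fun v (_ : Unit) => f v) S)
    (hg : ComputableInTime (fun v (_ : Unit) => g v) T) :
    ComputableInTime (fun v (_ : Unit) => f v + g v) (S + T + 1) := op₂ .add hf hg

theorem sub {f g : (α → ℝ) → ℝ} {S T : ℝ}
    (hf : ComputableInTime (fun v (_ : Unit) => f v) S)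
    (hg : ComputableInTime (fun v (_ : Unit) => g v) T) :
    ComputableInTime (fun v (_ : Unit) => f v - g v) (S + T + 1) := op₂ .sub hf hg

theorem mul {f g : (α → ℝ) → ℝ} {S T : ℝ}
    (hf : ComputableInTime (fun v (_ : Unit) => f v) S)
    (hg : ComputableInTime (fun v (_ : Unit) => g v) T) :
    ComputableInTime (fun v (_ : Unit) => f v * g v) (S + T + 1) := op₂ .mul hf hg

theorem div {f g : (α → ℝ) → ℝ} {S T : ℝ}
    (hf : ComputableInTime (fun v (_ : Unit) => f v) S)
    (hg : ComputableInTime (fun v (_ : Unit) => g v) T) :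
    ComputableInTime (fun v (_ : Unit) => f v / g v) (S + T + 1) := op₂ .div hf hg

theorem var (a : α) : ComputableInTime (fun v (_ : Unit) => v a) 0 := proj fun _ => a

theorem sum [Fintype ι] {f : ι → (α → ℝ) → ℝ} {T : ι → ℝ}
    (h : ∀ i, ComputableInTime (fun v (_ : Unit) => f i v) (T i)) :
    ComputableInTime (fun v (_ : Unit) => ∑ i, f i v) (∑ i, (T i + 1) + 1) := by
  classical
  suffices H : ∀ s : Finset ι, ComputableInTime (fun v (_ : Unit) => ∑ i ∈ s, f i v)
      (∑ i ∈ s, (T i + 1) + 1) from H Finset.univ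
  intro s
  induction s using Finset.induction_on with
  | empty => simpa using const (α := α) 0
  | insert a s ha ih =>
    simp only [Finset.sum_insert ha]
    exact (add (h a) ih).mono (by linarith)

end

end ComputableInTime


section Selection

/-- Comparison trees over the registers `α` with results in `β`. -/
inductive CmpTree (α β : Type) : Type
  | ret (b : β) : CmpTree α β
  | cmp (x y : α) (lt ge : CmpTree α β) : CmpTree α β

namespace CmpTree

variable {α β γ : Type}

/-- The result of a comparison tree on the register contents `v`. -/
noncomputable def run (v : α → ℝ) : CmpTree α β → β
  | .ret b => b
  | .cmp x y lt ge => if v x < v y then lt.run v else ge.run v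

/-- The number of comparisons on the register contents `v`. -/
noncomputable def costOn (v : α → ℝ) : CmpTree α β → ℕ
  | .ret _ => 0
  | .cmp x y lt ge => (if v x < v y then lt.costOn v else ge.costOn v) + 1

def bind : CmpTree α β → (β → CmpTree α γ) → CmpTree α γ
  | .ret b, g => g b
  | .cmp x y lt ge, g => .cmp x y (lt.bind g) (ge.bind g)

theorem run_bind (v : α → ℝ) (g : β → CmpTree α γ) : ∀ t : CmpTree α β,
    (t.bind g).run v = (g (t.run v)).run v
  | .ret _ => rfl
  | .cmp x y lt ge => by
    simp only [bind, run, run_bind v g lt, run_bind v g ge]; split_ifs <;> rfl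

theorem costOn_bind (v : α → ℝ) (g : β → CmpTree α γ) : ∀ t : CmpTree α β,
    (t.bind g).costOn v = t.costOn v + (g (t.run v)).costOn v
  | .ret _ => by simp [bind, costOn, run]
  | .cmp x y lt ge => by
    simp only [bind, costOn, run, costOn_bind v g lt, costOn_bind v g ge]; split_ifs <;> omega

/-- Some result of a tree. -/
def anyResult : CmpTree α β → β
  | .ret b => b
  | .cmp _ _ lt _ => lt.anyResult

/-- The arithmetic tree that makes the first `T` comparisons of a comparison tree. -/
def toArith {κ : Type} (out : β → κ → α) : ℕ → CmpTree α β → ArithTree κ α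
  | _, .ret b => .ret (out b)
  | 0, .cmp _ _ lt _ => .ret (out lt.anyResult)
  | T + 1, .cmp x y lt ge => .branch x y (toArith out T lt) (toArith out T ge)

theorem cost_toArith {κ : Type} (out : β → κ → α) : ∀ (T : ℕ) (t : CmpTree α β),
    (toArith out T t).cost ≤ T
  | _, .ret _ => by simp [toArith, ArithTree.cost]
  | 0, .cmp _ _ _ _ => by simp [toArith, ArithTree.cost]
  | T + 1, .cmp _ _ lt ge => by
    have h1 := cost_toArith out T lt
    have h2 := cost_toArith out T ge
    simp only [toArith, ArithTree.cost]
    omega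

theorem eval_toArith {κ : Type} (out : β → κ → α) (v : α → ℝ) : ∀ (T : ℕ) (t : CmpTree α β),
    t.costOn v ≤ T → (toArith out T t).eval v = fun k => v (out (t.run v) k)
  | _, .ret _, _ => by simp [toArith, ArithTree.eval, run]
  | 0, .cmp x y lt ge, h => by simp [costOn] at h
  | T + 1, .cmp x y lt ge, h => by
    simp only [costOn] at h
    simp only [toArith, ArithTree.eval, run]
    split_ifs at h ⊢ with hxy
    · exact eval_toArith out v T lt (by omega)
    · exact eval_toArith out v T ge (by omega)

/-- The elements of `l` with value below that of `a`. -/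
def filterLt (a : α) : List α → CmpTree α (List α)
  | [] => .ret []
  | x :: l => .cmp x a ((filterLt a l).bind fun r => .ret (x :: r)) (filterLt a l)

theorem run_filterLt (v : α → ℝ) (a : α) : ∀ l : List α,
    (filterLt a l).run v = l.filter fun x => v x < v a
  | [] => rfl
  | x :: l => by
    simp only [filterLt, run, run_bind, run_filterLt v a l, List.filter_cons, decide_eq_true_eq]

theorem costOn_filterLt (v : α → ℝ) (a : α) : ∀ l : List α,
    (filterLt a l).costOn v = l.length
  | [] => rfl
  | x :: l => by
    simp only [filterLt, costOn, costOn_bind, costOn_filterLt v a l, List.length_cons, add_zero,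
      ite_self]

/-- The elements of `l` with value above that of `a`. -/
def filterGt (a : α) : List α → CmpTree α (List α)
  | [] => .ret []
  | x :: l => .cmp a x ((filterGt a l).bind fun r => .ret (x :: r)) (filterGt a l)

theorem run_filterGt (v : α → ℝ) (a : α) : ∀ l : List α,
    (filterGt a l).run v = l.filter fun x => v a < v x
  | [] => rfl
  | x :: l => by
    simp only [filterGt, run, run_bind, run_filterGt v a l, List.filter_cons, decide_eq_true_eq]

theorem costOn_filterGt (v : α → ℝ) (a : α) : ∀ l : List α,
    (filterGt a l).costOn v = l.length
  | [] => rfl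
  | x :: l => by
    simp only [filterGt, costOn, costOn_bind, costOn_filterGt v a l, List.length_cons, add_zero,
      ite_self]

end CmpTree

open CmpTree

variable {α : Type}

/-- The value of `a` has rank `r` among the values of the list `l`. -/
def IsRank (v : α → ℝ) (l : List α) (r : ℕ) (a : α) : Prop :=
  l.countP (fun x => v x < v a) ≤ r ∧ l.countP (fun x => v a < v x) + r < l.length

theorem length_eq_countP (v : α → ℝ) (l : List α) (t : ℝ) :
    l.length = l.countP (fun x => v x ≤ t) + l.countP (fun x => t < v x) := by
  rw [List.length_eq_countP_add_countP (fun x => v x ≤ t)]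
  congr 2
  funext x
  simp

theorem ordStat_eq_of_isRank {v : α → ℝ} {l : List α} {r : ℕ} {a : α} (h : IsRank v l r a) :
    ordStat (l.map v : Multiset ℝ) r = v a := by
  obtain ⟨h1, h2⟩ := h
  have hr : r < Multiset.card (l.map v : Multiset ℝ) := by simp; omega
  have hl := length_eq_countP v l (v a)
  apply le_antisymm
  · rw [ordStat_le_iff hr, Multiset.coe_countP, List.countP_map]
    change r < l.countP fun x => v x ≤ v a
    omega
  · by_contra hlt
    push Not at hlt
    rw [ordStat_lt_iff hr, Multiset.coe_countP, List.countP_map] at hlt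
    change r < l.countP fun x => v x < v a at hlt
    omega

theorem exists_isRank (v : α → ℝ) {l : List α} {r : ℕ} (hr : r < l.length) :
    ∃ a ∈ l, IsRank v l r a := by
  have hr' : r < Multiset.card (l.map v : Multiset ℝ) := by simpa using hr
  have hmem : ordStat (l.map v : Multiset ℝ) r ∈ l.map v := by
    have h1 : ordStat (l.map v : Multiset ℝ) r ∈
        (Multiset.sort (l.map v : Multiset ℝ) (· ≤ ·)) := by
      unfold ordStat
      rw [List.getD_eq_getElem _ _ (by simpa using hr)]
      exact List.getElem_mem _
    simpa using h1
  obtain ⟨a, ha, hva⟩ := List.mem_map.1 hmem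
  have hl := length_eq_countP v l (v a)
  have h1 := (ordStat_le_iff hr' (v a)).1 hva.ge
  have h2 := (ordStat_lt_iff hr' (v a)).not.1 (by rw [hva]; exact lt_irrefl _)
  rw [Multiset.coe_countP, List.countP_map] at h1 h2
  change r < l.countP fun x => v x ≤ v a at h1
  change ¬ r < l.countP fun x => v x < v a at h2
  exact ⟨a, ha, by omega, by omega⟩

/-- Selection by comparing all pairs. -/
theorem exists_cmpTree_isRank_sq (l : List α) (r : ℕ) (hr : r < l.length) :
    ∃ t : CmpTree α α, ∀ v, IsRank v l r (t.run v) ∧ t.costOn v ≤ 2 * l.length ^ 2 := by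
  have a₀ : α := l[0]
  suffices H : ∀ c : List α, ∃ t : CmpTree α α, ∀ v,
      ((∃ a ∈ c, IsRank v l r a) → IsRank v l r (t.run v)) ∧
        t.costOn v ≤ 2 * l.length * c.length by
    obtain ⟨t, ht⟩ := H l
    exact ⟨t, fun v => ⟨(ht v).1 (exists_isRank v hr), (ht v).2.trans (by rw [sq, mul_assoc])⟩⟩
  intro c
  induction c with
  | nil => exact ⟨.ret a₀, fun v => ⟨by simp, by simp [costOn]⟩⟩
  | cons a c ih =>
    obtain ⟨t, ht⟩ := ih
    refine ⟨(filterLt a l).bind fun L => (filterGt a l).bind fun G =>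
      if L.length ≤ r ∧ G.length + r < l.length then .ret a else t, fun v => ?_⟩
    simp only [run_bind, costOn_bind, run_filterLt, run_filterGt, costOn_filterLt,
      costOn_filterGt, ← List.countP_eq_length_filter, List.length_cons]
    split_ifs with h
    · refine ⟨fun _ => h, ?_⟩
      simp only [costOn]
      nlinarith
    · refine ⟨?_, ?_⟩
      · rintro ⟨b, hb, hb'⟩
        rcases List.mem_cons.1 hb with rfl | hb
        · exact absurd hb' h
        · exact (ht v).1 ⟨b, hb, hb'⟩
      · have := (ht v).2
        nlinarith

/-- Splitting a list into groups of five. -/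
theorem exists_groups : ∀ (q : ℕ) (l : List α), 5 * q ≤ l.length →
    ∃ (gs : List (List α)) (rest : List α), gs.length = q ∧ (∀ g ∈ gs, g.length = 5) ∧
      l = gs.flatten ++ rest
  | 0, l, _ => ⟨[], l, rfl, by simp, by simp⟩
  | q + 1, l, h => by
    obtain ⟨gs, rest, h1, h2, h3⟩ := exists_groups q (l.drop 5) (by simp; omega)
    refine ⟨l.take 5 :: gs, rest, by simp [h1], ?_, ?_⟩
    · intro g hg
      rcases List.mem_cons.1 hg with rfl | hg
      · simp; omega
      · exact h2 g hg
    · rw [List.flatten_cons, List.append_assoc, ← h3, List.take_append_drop]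

/-- Finding the medians of all groups of five. -/
theorem exists_cmpTree_medians : ∀ gs : List (List α), (∀ g ∈ gs, g.length = 5) →
    ∃ t : CmpTree α (List α), ∀ v, List.Forall₂ (fun g a => g.length = 5 ∧ IsRank v g 2 a) gs
        (t.run v) ∧
      t.costOn v ≤ 50 * gs.length
  | [], _ => ⟨.ret [], fun v => ⟨by simp [run], by simp [costOn]⟩⟩
  | g :: gs, h => by
    obtain ⟨t, ht⟩ := exists_cmpTree_medians gs fun g hg => h g (List.mem_cons_of_mem _ hg)
    have hg := h g List.mem_cons_self
    obtain ⟨s, hs⟩ := exists_cmpTree_isRank_sq g 2 (by omega)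
    refine ⟨s.bind fun a => t.bind fun as => .ret (a :: as), fun v => ⟨?_, ?_⟩⟩
    · simp only [run_bind, run]
      exact List.Forall₂.cons ⟨hg, (hs v).1⟩ (ht v).1
    · have h1 := (hs v).2
      have h2 := (ht v).2
      rw [hg] at h1
      simp only [costOn_bind, costOn, List.length_cons]
      omega

theorem three_mul_countP_le_of_medians (p : α → Bool) : ∀ (gs : List (List α)) (ms : List α),
    List.Forall₂ (fun g a => p a = true → 3 ≤ g.countP p) gs ms →
      3 * ms.countP p ≤ gs.flatten.countP p
  | _, _, .nil => by simp
  | _, _, .cons (a := g) (b := a) (l₁ := gs) (l₂ := ms) h h' => by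
    have ih := three_mul_countP_le_of_medians p gs ms h'
    rw [List.flatten_cons, List.countP_append, List.countP_cons]
    by_cases hp : p a = true
    · have := h hp
      simp only [hp, if_true]
      omega
    · simp only [hp, Bool.false_eq_true, if_false]
      omega

theorem length_eq_countP' (v : α → ℝ) (l : List α) (t : ℝ) :
    l.length = l.countP (fun x => v x < t) + l.countP (fun x => t ≤ v x) := by
  rw [List.length_eq_countP_add_countP (fun x => v x < t)]
  congr 2
  funext x
  simp

/-- The median of the medians of five has rank bounded away from both ends. -/
theorem countP_le_of_isRank_medians {v : α → ℝ} {gs : List (List α)} {rest ms : List α} {q : ℕ}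
    (hq : ms.length = q)
    (hms : List.Forall₂ (fun g a => g.length = 5 ∧ IsRank v g 2 a) gs ms) {a : α}
    (ha : IsRank v ms (q / 2) a) :
    2 * (gs.flatten ++ rest).countP (fun x => v x < v a) + 3 * q ≤
        2 * (gs.flatten ++ rest).length ∧
      2 * (gs.flatten ++ rest).countP (fun x => v a < v x) + 3 * q ≤
        2 * (gs.flatten ++ rest).length := by
  set l := gs.flatten ++ rest with hl
  obtain ⟨ha1, ha2⟩ := ha
  have hle := three_mul_countP_le_of_medians (fun x => decide (v x ≤ v a)) gs ms
    (hms.imp fun g m ⟨h5, hm⟩ hma => by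
      have h1 := length_eq_countP v g (v m)
      have h2 : g.countP (fun x => v x ≤ v m) ≤ g.countP (fun x => v x ≤ v a) :=
        List.countP_mono_left fun x _ hx => by
          simp only [decide_eq_true_eq] at hx hma ⊢
          exact hx.trans hma
      have := hm.2
      omega)
  have hge := three_mul_countP_le_of_medians (fun x => decide (v a ≤ v x)) gs ms
    (hms.imp fun g m ⟨h5, hm⟩ hma => by
      have h1 := length_eq_countP' v g (v m)
      have h2 : g.countP (fun x => v m ≤ v x) ≤ g.countP (fun x => v a ≤ v x) :=
        List.countP_mono_left fun x _ hx => by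
          simp only [decide_eq_true_eq] at hx hma ⊢
          exact hma.trans hx
      have := hm.1
      omega)
  have e1 := length_eq_countP v l (v a)
  have e2 := length_eq_countP' v l (v a)
  have e3 := length_eq_countP v ms (v a)
  have e4 := length_eq_countP' v ms (v a)
  have e5 : gs.flatten.countP (fun x => v x ≤ v a) ≤ l.countP (fun x => v x ≤ v a) := by
    rw [hl, List.countP_append]; omega
  have e6 : gs.flatten.countP (fun x => v a ≤ v x) ≤ l.countP (fun x => v a ≤ v x) := by
    rw [hl, List.countP_append]; omega
  constructor <;> omega

theorem IsRank.of_filter_lt {v : α → ℝ} {l : List α} {r : ℕ} {t : ℝ} {b : α}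
    (h : IsRank v (l.filter fun x => v x < t) r b) : IsRank v l r b := by
  obtain ⟨h1, h2⟩ := h
  have hbt : v b < t := by
    by_contra hbt
    have h3 : (l.filter fun x => v x < t).countP (fun x => v x < v b) =
        (l.filter fun x => v x < t).length := by
      rw [List.countP_eq_length]
      intro x hx
      simp only [List.mem_filter, decide_eq_true_eq] at hx ⊢
      linarith [hx.2]
    omega
  have e1 : (l.filter fun x => v x < t).countP (fun x => v x < v b) =
      l.countP (fun x => v x < v b) := by
    rw [List.countP_filter]
    refine List.countP_congr fun x _ => ?_
    simp only [Bool.and_eq_true, decide_eq_true_eq, and_iff_left_iff_imp]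
    exact fun h => h.trans hbt
  have e2 : (l.filter fun x => v x < t).countP (fun x => v x ≤ v b) =
      l.countP (fun x => v x ≤ v b) := by
    rw [List.countP_filter]
    refine List.countP_congr fun x _ => ?_
    simp only [Bool.and_eq_true, decide_eq_true_eq, and_iff_left_iff_imp]
    exact fun h => h.trans_lt hbt
  have e3 := length_eq_countP v l (v b)
  have e4 := length_eq_countP v (l.filter fun x => v x < t) (v b)
  exact ⟨by omega, by omega⟩

theorem IsRank.of_filter_gt {v : α → ℝ} {l : List α} {r : ℕ} {t : ℝ} {b : α}
    (h : IsRank v (l.filter fun x => t < v x) (r - (l.length - (l.filter fun x => t < v x).length))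
      b) (hr : l.length ≤ (l.filter fun x => t < v x).length + r) : IsRank v l r b := by
  obtain ⟨h1, h2⟩ := h
  have hlen : (l.filter fun x => t < v x).length ≤ l.length := List.length_filter_le _ _
  have hbt : t < v b := by
    by_contra hbt
    have h3 : (l.filter fun x => t < v x).countP (fun x => v b < v x) =
        (l.filter fun x => t < v x).length := by
      rw [List.countP_eq_length]
      intro x hx
      simp only [List.mem_filter, decide_eq_true_eq] at hx ⊢
      linarith [hx.2]
    omega
  have e1 : (l.filter fun x => t < v x).countP (fun x => v b < v x) =
      l.countP (fun x => v b < v x) := by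
    rw [List.countP_filter]
    refine List.countP_congr fun x _ => ?_
    simp only [Bool.and_eq_true, decide_eq_true_eq, and_iff_left_iff_imp]
    exact fun h => hbt.trans h
  have e2 : (l.filter fun x => t < v x).countP (fun x => v b ≤ v x) =
      l.countP (fun x => v b ≤ v x) := by
    rw [List.countP_filter]
    refine List.countP_congr fun x _ => ?_
    simp only [Bool.and_eq_true, decide_eq_true_eq, and_iff_left_iff_imp]
    exact fun h => hbt.trans_le h
  have e3 := length_eq_countP' v l (v b)
  have e4 := length_eq_countP' v (l.filter fun x => t < v x) (v b)
  exact ⟨by omega, by omega⟩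

/-- Selection in linear time. -/
theorem exists_cmpTree_isRank (l : List α) (r : ℕ) (hr : r < l.length) :
    ∃ t : CmpTree α α, ∀ v, IsRank v l r (t.run v) ∧ t.costOn v ≤ 240 * l.length := by
  induction hn : l.length using Nat.strong_induction_on generalizing l r with
  | _ n ih =>
  have a₀ : α := l[0]
  rcases lt_or_ge n 5 with h5 | h5
  · obtain ⟨t, ht⟩ := exists_cmpTree_isRank_sq l r hr
    refine ⟨t, fun v => ⟨(ht v).1, (ht v).2.trans ?_⟩⟩
    rw [hn]
    nlinarith
  have : Nonempty (CmpTree α α) := ⟨.ret a₀⟩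
  have ih' : ∀ (l' : List α) (r' : ℕ), l'.length < n → r' < l'.length →
      ∃ t : CmpTree α α, ∀ v, IsRank v l' r' (t.run v) ∧ t.costOn v ≤ 240 * l'.length :=
    fun l' r' h h' => ih _ h l' r' h' rfl
  choose! f hf using ih'
  set q := n / 5 with hq
  obtain ⟨gs, rest, hg1, hg2, hg3⟩ := exists_groups q l (by omega)
  obtain ⟨M, hM⟩ := exists_cmpTree_medians gs hg2
  refine ⟨M.bind fun ms => (f ms (q / 2)).bind fun a => (filterLt a l).bind fun L =>
    (filterGt a l).bind fun G => if r < L.length then f L r else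
      if l.length ≤ G.length + r then f G (r - (l.length - G.length)) else .ret a, fun v => ?_⟩
  obtain ⟨hM1, hM2⟩ := hM v
  simp only [run_bind, costOn_bind, run_filterLt, run_filterGt, costOn_filterLt, costOn_filterGt]
  set ms := M.run v
  have hms : ms.length = q := by rw [← hM1.length_eq, hg1]
  obtain ⟨hf1, hf2⟩ := hf ms (q / 2) (by omega) (by omega) v
  set a := (f ms (q / 2)).run v
  obtain ⟨hL, hG⟩ := countP_le_of_isRank_medians (rest := rest) hms hM1 hf1
  rw [← hg3, List.countP_eq_length_filter] at hL hG
  set L := l.filter fun x => v x < v a with hLdef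
  set G := l.filter fun x => v a < v x with hGdef
  split_ifs with h1 h2
  · obtain ⟨h3, h4⟩ := hf L r (by omega) h1 v
    exact ⟨h3.of_filter_lt, by omega⟩
  · obtain ⟨h3, h4⟩ := hf G (r - (l.length - G.length)) (by omega) (by omega) v
    exact ⟨h3.of_filter_gt h2, by omega⟩
  · refine ⟨⟨?_, ?_⟩, ?_⟩
    · rw [List.countP_eq_length_filter]; exact not_lt.1 h1
    · rw [List.countP_eq_length_filter]; exact not_le.1 h2
    · simp only [costOn]; omega

theorem computableInTime_ordStat {k r : ℕ} (hr : r < k) :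
    ComputableInTime (fun (x : Fin k → ℝ) (_ : Unit) => ordStat (Finset.univ.val.map x) r)
      (240 * k) := by
  obtain ⟨t, ht⟩ := exists_cmpTree_isRank (List.finRange k) r (by simpa using hr)
  refine ⟨t.toArith (fun a _ => a) (240 * k), ?_, fun v => ?_⟩
  · exact_mod_cast cost_toArith _ _ _
  · obtain ⟨h1, h2⟩ := ht v
    rw [List.length_finRange] at h2
    rw [eval_toArith _ _ _ _ h2]
    funext _
    rw [← ordStat_eq_of_isRank h1]
    congr 1

theorem computableInTime_sampleMedian (k : ℕ) :
    ComputableInTime (fun (x : Fin k → ℝ) (_ : Unit) => sampleMedian x) (480 * k + 3) := by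
  rcases Nat.eq_zero_or_pos k with rfl | hk
  · have h := ComputableInTime.const (α := Fin 0) 0
    refine ComputableInTime.mono (S := 1) ?_ (by norm_num)
    convert h using 3
    simp [sampleMedian]
  · simp only [sampleMedian_eq]
    have h := ((computableInTime_ordStat (k := k) (r := (k - 1) / 2) (by omega)).add
      (computableInTime_ordStat (k := k) (r := k / 2) (by omega))).div
      (ComputableInTime.const 2)
    refine ComputableInTime.mono (S := 240 * k + 240 * k + 1 + 1 + 1) ?_ (by linarith)
    simpa using h

end Selection


section MatrixComputations

variable {α κ τ : Type}

/-- Coordinatewise arithmetic on two computed families. -/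
theorem ComputableInTime.map₂ [Fintype κ] (o : ArithOp) {F G : (α → ℝ) → κ → ℝ} {S T : ℝ}
    (hF : ComputableInTime F S) (hG : ComputableInTime G T) :
    ComputableInTime (fun v k => o.apply (F v k) (G v k)) (S + T + Fintype.card κ) := by
  have h := (ComputableInTime.of_forall fun k : κ =>
    ComputableInTime.op o (Sum.inl k : κ ⊕ κ) (Sum.inr k)).comp (hF.pair hG)
  simpa using h

/-- The matrix-valued map `M` is computed entry by entry in time `T`. -/
def MatComputable (M : (α → ℝ) → Matrix κ κ ℝ) (T : ℝ) : Prop :=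
  ComputableInTime (fun v (e : κ × κ) => M v e.1 e.2) T

/-- Square matrices indexed by `κ` can be multiplied in time `T`. -/
def MulComputable (κ : Type) [Fintype κ] (T : ℝ) : Prop :=
  ∀ {α : Type} {M N : (α → ℝ) → Matrix κ κ ℝ} {S S' : ℝ}, MatComputable M S →
    MatComputable N S' → MatComputable (fun v => M v * N v) (S + S' + T)

theorem MatComputable.add [Fintype κ] {M N : (α → ℝ) → Matrix κ κ ℝ} {S T : ℝ}
    (hM : MatComputable M S) (hN : MatComputable N T) :
    MatComputable (fun v => M v + N v) (S + T + (Fintype.card κ : ℝ) ^ 2) := by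
  have h := ComputableInTime.map₂ .add hM hN
  rw [Fintype.card_prod, Nat.cast_mul, ← sq] at h
  exact h

theorem MatComputable.sub [Fintype κ] {M N : (α → ℝ) → Matrix κ κ ℝ} {S T : ℝ}
    (hM : MatComputable M S) (hN : MatComputable N T) :
    MatComputable (fun v => M v - N v) (S + T + (Fintype.card κ : ℝ) ^ 2) := by
  have h := ComputableInTime.map₂ .sub hM hN
  rw [Fintype.card_prod, Nat.cast_mul, ← sq] at h
  exact h

theorem MatComputable.smul [Fintype κ] {c : (α → ℝ) → ℝ} {M : (α → ℝ) → Matrix κ κ ℝ} {S T : ℝ}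
    (hc : ComputableInTime (fun v (_ : Unit) => c v) S) (hM : MatComputable M T) :
    MatComputable (fun v => c v • M v) (S + T + (Fintype.card κ : ℝ) ^ 2) := by
  have h := ComputableInTime.map₂ .mul (hc.reindex fun _ : κ × κ => ()) hM
  rw [Fintype.card_prod, Nat.cast_mul, ← sq] at h
  exact h

theorem MatComputable.proj (f : κ × κ → α) :
    MatComputable (fun v => Matrix.of fun i j => v (f (i, j))) 0 :=
  ComputableInTime.proj f

theorem mulComputable_of_matMul [Fintype κ] {p : ℕ} {T : ℝ} (e : κ ≃ Fin p)
    (h : ComputableInTime (matMul p) T) : MulComputable κ T := by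
  intro α M N S S' hM hN
  have h2 := (h.comp ((hM.reindex fun x : Fin p × Fin p => (e.symm x.1, e.symm x.2)).pair
    (hN.reindex fun x : Fin p × Fin p => (e.symm x.1, e.symm x.2)))).reindex
    fun x : κ × κ => (e x.1, e x.2)
  unfold MatComputable
  convert h2 using 3 with v x
  simp only [matMul, Matrix.mul_apply, Matrix.of_apply, Sum.elim_inl, Sum.elim_inr,
    Equiv.symm_apply_apply]
  exact (e.symm.sum_comp fun j => M v x.1 j * N v j x.2).symm

/-- Positive semidefinite matrices indexed by `κ` can be inverted, with detection of singularity,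
in time `T`. -/
def PSDInvComputable (κ : Type) [Fintype κ] [DecidableEq κ] (T : ℝ) : Prop :=
  ∃ F : (κ × κ → ℝ) → (κ × κ) ⊕ Unit → ℝ, ComputableInTime F T ∧
    ∀ M : Matrix κ κ ℝ, M.PosSemidef → F (fun e => M e.1 e.2) =
      Sum.elim (fun e => M⁻¹ e.1 e.2) fun _ => if M.det = 0 then 0 else 1

theorem PSDInvComputable.mono [Fintype κ] [DecidableEq κ] {S T : ℝ}
    (h : PSDInvComputable κ S) (hST : S ≤ T) : PSDInvComputable κ T := by
  obtain ⟨F, h1, h2⟩ := h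
  exact ⟨F, h1.mono hST, h2⟩

theorem PSDInvComputable.congr [Fintype κ] [DecidableEq κ] [Fintype τ] [DecidableEq τ] {T : ℝ}
    (h : PSDInvComputable κ T) (e : τ ≃ κ) : PSDInvComputable τ T := by
  obtain ⟨F, h1, h2⟩ := h
  refine ⟨_, (h1.precomp fun x : κ × κ => (e.symm x.1, e.symm x.2)).reindex
    (Sum.map (fun x : τ × τ => (e x.1, e x.2)) id), fun M hM => ?_⟩
  have h3 := h2 (M.submatrix e.symm e.symm) (hM.submatrix _)
  funext k
  have h4 := congrFun h3 (Sum.map (fun x : τ × τ => (e x.1, e x.2)) id k)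
  simp only [Matrix.submatrix_apply] at h4
  rw [h4]
  rcases k with k | k
  · simp [Matrix.inv_submatrix_equiv]
  · simp [Matrix.det_submatrix_equiv_self]

theorem psdInvComputable_unit : PSDInvComputable Unit 4 := by
  refine ⟨_, ((ComputableInTime.div (ComputableInTime.const 1)
    (ComputableInTime.var ((), ()))).reindex fun _ : Unit × Unit => ()).pair
    (ComputableInTime.div (ComputableInTime.var ((), ()))
      (ComputableInTime.var ((), ()))) |>.mono (by norm_num), fun M _ => ?_⟩
  funext k
  rcases k with k | k
  · simp [Matrix.det_unique]
  · by_cases h : M () () = 0 <;> simp [Matrix.det_unique, h]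

section Block

variable [Fintype κ] [DecidableEq κ] [Fintype τ] [DecidableEq τ]

theorem posDef_of_det_ne_zero {M : Matrix κ κ ℝ} (hM : M.PosSemidef) (h : M.det ≠ 0) :
    M.PosDef :=
  hM.posDef_iff_isUnit.2 ((Matrix.isUnit_iff_isUnit_det _).2 h.isUnit)

theorem det_toBlocks₁₁_ne_zero {M : Matrix (κ ⊕ τ) (κ ⊕ τ) ℝ} (hM : M.PosSemidef)
    (h : M.det ≠ 0) : M.toBlocks₁₁.det ≠ 0 :=
  ((posDef_of_det_ne_zero hM h).submatrix Sum.inl_injective).det_pos.ne'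

theorem schur_posSemidef {τ : Type} [Fintype τ] {A : Matrix κ κ ℝ} {B : Matrix κ τ ℝ}
    {C : Matrix τ κ ℝ} {D : Matrix τ τ ℝ} (hM : (fromBlocks A B C D).PosSemidef) :
    (D - C * (A⁻¹ * B)).PosSemidef := by
  by_cases hA : A.det = 0
  · have : A⁻¹ = 0 := Matrix.nonsing_inv_apply_not_isUnit _ (by simp [hA])
    have h := hM.submatrix (Sum.inr : τ → κ ⊕ τ)
    rw [this, Matrix.zero_mul, Matrix.mul_zero, sub_zero]
    exact h
  · have hC : C = Bᴴ := by
      have := (Matrix.isHermitian_fromBlocks_iff.1 hM.isHermitian).2.1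
      exact this.symm
    subst hC
    have hA' : A.PosDef := posDef_of_det_ne_zero (hM.submatrix (Sum.inl : κ → κ ⊕ τ)) hA
    have : Invertible A := A.invertibleOfIsUnitDet (Ne.isUnit hA)
    rw [← Matrix.mul_assoc]
    exact (Matrix.PosDef.fromBlocks₁₁ B D hA').1 hM

/-- Block inversion of a positive semidefinite matrix through the Schur complement, valid also
for singular matrices. -/
theorem inv_fromBlocks_of_posSemidef {A : Matrix κ κ ℝ} {B : Matrix κ τ ℝ} {C : Matrix τ κ ℝ}
    {D : Matrix τ τ ℝ} (hM : (fromBlocks A B C D).PosSemidef) :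
    let S := D - C * (A⁻¹ * B)
    let f : ℝ := (if A.det = 0 then 0 else 1) * (if S.det = 0 then 0 else 1)
    (fromBlocks A B C D)⁻¹ = fromBlocks (f • (A⁻¹ + A⁻¹ * B * (S⁻¹ * (C * A⁻¹))))
        ((0 - f) • (A⁻¹ * B * S⁻¹)) ((0 - f) • (S⁻¹ * (C * A⁻¹))) (f • S⁻¹) ∧
      (if (fromBlocks A B C D).det = 0 then 0 else 1) = f := by
  intro S f
  by_cases hA : A.det = 0
  · have hdet : (fromBlocks A B C D).det = 0 := by
      by_contra h
      have := det_toBlocks₁₁_ne_zero hM h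
      rw [toBlocks_fromBlocks₁₁] at this
      exact this hA
    have hf : f = 0 := by simp [f, hA]
    rw [Matrix.nonsing_inv_apply_not_isUnit _ (by simp [hdet])]
    simp [hf, hdet]
  · have : Invertible A := A.invertibleOfIsUnitDet (Ne.isUnit hA)
    have hdet : (fromBlocks A B C D).det = A.det * S.det := by
      rw [Matrix.det_fromBlocks₁₁]
      simp [S, Matrix.mul_assoc]
    by_cases hS : S.det = 0
    · have hf : f = 0 := by simp [f, hS]
      have hdet' : (fromBlocks A B C D).det = 0 := by rw [hdet, hS, mul_zero]
      rw [Matrix.nonsing_inv_apply_not_isUnit _ (by simp [hdet'])]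
      simp [hf, hdet']
    · have hf : f = 1 := by simp [f, hS, hA]
      refine ⟨Matrix.inv_eq_right_inv ?_,
        by rw [hf, if_neg (by rw [hdet]; exact mul_ne_zero hA hS)]⟩
      have e1 : A * A⁻¹ = 1 := Matrix.mul_nonsing_inv _ (Ne.isUnit hA)
      have e2 : S * S⁻¹ = 1 := Matrix.mul_nonsing_inv _ (Ne.isUnit hS)
      have e3 : D = S + C * (A⁻¹ * B) := by simp [S]
      rw [Matrix.fromBlocks_multiply, hf, ← Matrix.fromBlocks_one]
      simp only [one_smul, zero_sub, neg_smul]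
      have e4 : ∀ X : Matrix κ τ ℝ, A * (A⁻¹ * X) = X := fun X => by
        rw [← Matrix.mul_assoc, e1, Matrix.one_mul]
      have e5 : ∀ X : Matrix τ κ ℝ, S * (S⁻¹ * X) = X := fun X => by
        rw [← Matrix.mul_assoc, e2, Matrix.one_mul]
      have e6 : ∀ X : Matrix κ κ ℝ, A * (A⁻¹ * X) = X := fun X => by
        rw [← Matrix.mul_assoc, e1, Matrix.one_mul]
      congr 1
      · simp only [Matrix.mul_add, e1, Matrix.mul_neg, Matrix.mul_assoc, e6]; abel
      · simp only [Matrix.mul_neg, Matrix.mul_assoc, e4]; abel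
      · rw [e3]
        simp only [Matrix.mul_add, Matrix.add_mul, Matrix.mul_neg, Matrix.mul_assoc, e5]; abel
      · rw [e3]
        simp only [Matrix.add_mul, Matrix.mul_neg, Matrix.mul_assoc, e2]; abel

end Block

theorem MatComputable.fromBlocks {A B C D : (α → ℝ) → Matrix κ κ ℝ} {a b c d : ℝ}
    (hA : MatComputable A a) (hB : MatComputable B b) (hC : MatComputable C c)
    (hD : MatComputable D d) :
    MatComputable (fun v => Matrix.fromBlocks (A v) (B v) (C v) (D v)) (a + b + (c + d)) := by
  have h := ((ComputableInTime.pair hA hB).pair (ComputableInTime.pair hC hD)).reindex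
    fun x : (κ ⊕ κ) × (κ ⊕ κ) => x.1.elim
      (fun i => x.2.elim (fun j => Sum.inl (Sum.inl (i, j))) fun j => Sum.inl (Sum.inr (i, j)))
      fun i => x.2.elim (fun j => Sum.inr (Sum.inl (i, j))) fun j => Sum.inr (Sum.inr (i, j))
  unfold MatComputable
  convert h using 3 with v x
  obtain ⟨i | i, j | j⟩ := x <;> rfl

/-- One level of the recursive block inversion. -/
theorem PSDInvComputable.double [Fintype κ] [DecidableEq κ] {T R : ℝ}
    (h : PSDInvComputable κ T) (hmul : MulComputable κ R) :
    PSDInvComputable (κ ⊕ κ) (2 * T + 10 * R + 6 * (Fintype.card κ : ℝ) ^ 2 + 9) := by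
  obtain ⟨F, hF, hF'⟩ := h
  -- registers: the entries of the matrix, then `A⁻¹`, then the inverse of the Schur complement
  have s1 := hF.precomp fun x : κ × κ => ((Sum.inl x.1, Sum.inl x.2) : (κ ⊕ κ) × (κ ⊕ κ))
  let ρ : Type := ((κ × κ) ⊕ Unit) ⊕ ((κ ⊕ κ) × (κ ⊕ κ))
  have s2 := MatComputable.sub
    (MatComputable.proj fun x : κ × κ => (Sum.inr (Sum.inr x.1, Sum.inr x.2) : ρ))
    (hmul (MatComputable.proj fun x : κ × κ => (Sum.inr (Sum.inr x.1, Sum.inl x.2) : ρ))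
      (hmul (MatComputable.proj fun x : κ × κ => (Sum.inl (Sum.inl x) : ρ))
        (MatComputable.proj fun x : κ × κ => (Sum.inr (Sum.inl x.1, Sum.inr x.2) : ρ))))
  have s3 := s1.bind (hF.comp s2).keep
  let θ : Type := ((κ × κ) ⊕ Unit) ⊕ ρ
  have hS := MatComputable.proj fun x : κ × κ => (Sum.inl (Sum.inl x) : θ)
  have hA := MatComputable.proj fun x : κ × κ => (Sum.inr (Sum.inl (Sum.inl x)) : θ)
  have hB := MatComputable.proj fun x : κ × κ =>
    (Sum.inr (Sum.inr (Sum.inl x.1, Sum.inr x.2)) : θ)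
  have hC := MatComputable.proj fun x : κ × κ =>
    (Sum.inr (Sum.inr (Sum.inr x.1, Sum.inl x.2)) : θ)
  have hf := ComputableInTime.mul
    (ComputableInTime.var (Sum.inr (Sum.inl (Sum.inr ())) : θ))
    (ComputableInTime.var (Sum.inl (Sum.inr ()) : θ))
  have hf' := ComputableInTime.sub (ComputableInTime.const (α := θ) 0) hf
  have s4 := (MatComputable.fromBlocks
    (MatComputable.smul hf (hA.add (hmul (hmul hA hB) (hmul hS (hmul hC hA)))))
    (MatComputable.smul hf' (hmul (hmul hA hB) hS))
    (MatComputable.smul hf' (hmul hS (hmul hC hA)))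
    (MatComputable.smul hf hS)).pair hf
  refine ⟨_, (s4.comp s3).mono (by linarith), fun M hM => ?_⟩
  have hM' := hM
  rw [← Matrix.fromBlocks_toBlocks M] at hM'
  have e1 : F (fun a : κ × κ => M (Sum.inl a.1) (Sum.inl a.2)) = _ :=
    hF' M.toBlocks₁₁ (hM'.submatrix (Sum.inl : κ → κ ⊕ κ))
  have e2 := hF' _ (schur_posSemidef hM')
  obtain ⟨e3, e4⟩ := inv_fromBlocks_of_posSemidef hM'
  simp only [Matrix.fromBlocks_toBlocks] at e3 e4
  simp only [e1]
  erw [e2]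
  funext k
  rcases k with k | k
  · rw [Sum.elim_inl, Sum.elim_inl, e3, Rat.cast_zero]
    rfl
  · exact e4.symm

end MatrixComputations


section LinearSolve

variable {α κ τ : Type}

/-- Restriction to a block, by padding with the identity. -/
theorem PSDInvComputable.of_sum [Fintype κ] [DecidableEq κ] [Fintype τ] [DecidableEq τ] {T : ℝ}
    (h : PSDInvComputable (κ ⊕ τ) T) : PSDInvComputable κ (T + 2) := by
  obtain ⟨F, hF, hF'⟩ := h
  have s1 := (ComputableInTime.const (α := κ × κ) 0).pair (ComputableInTime.const 1)
  have s2 := (s1.bind (hF.precomp fun x : (κ ⊕ τ) × (κ ⊕ τ) => x.1.elim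
    (fun i => x.2.elim (fun j => Sum.inr (i, j)) fun _ => Sum.inl (Sum.inl ()))
    fun i => x.2.elim (fun _ => Sum.inl (Sum.inl ()))
      fun j => if i = j then Sum.inl (Sum.inr ()) else Sum.inl (Sum.inl ()))).reindex
    (Sum.map (fun x : κ × κ => ((Sum.inl x.1, Sum.inl x.2) : (κ ⊕ τ) × (κ ⊕ τ))) id)
  refine ⟨_, s2.mono (by linarith), fun M hM => ?_⟩
  have hpsd : (Matrix.fromBlocks M 0 0 (1 : Matrix τ τ ℝ)).PosSemidef := by
    have h1 : (1 : Matrix τ τ ℝ).PosDef := Matrix.PosDef.one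
    have : Invertible (1 : Matrix τ τ ℝ) := invertibleOne
    have h2 := (Matrix.PosDef.fromBlocks₂₂ M (0 : Matrix κ τ ℝ) h1).2 (by simpa using hM)
    simpa using h2
  have hdet : (Matrix.fromBlocks M 0 0 (1 : Matrix τ τ ℝ)).det = M.det := by simp
  have hinv : (Matrix.fromBlocks M 0 0 (1 : Matrix τ τ ℝ))⁻¹.toBlocks₁₁ = M⁻¹ := by
    by_cases h0 : M.det = 0
    · rw [Matrix.nonsing_inv_apply_not_isUnit _ (by simp [h0]),
        Matrix.nonsing_inv_apply_not_isUnit _ (by simp [h0])]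
      rfl
    · have e : (Matrix.fromBlocks M 0 0 (1 : Matrix τ τ ℝ))⁻¹ = Matrix.fromBlocks M⁻¹ 0 0 1 := by
        refine Matrix.inv_eq_right_inv ?_
        rw [Matrix.fromBlocks_multiply]
        simp [Matrix.mul_nonsing_inv _ (Ne.isUnit h0)]
      rw [e, Matrix.toBlocks_fromBlocks₁₁]
  have e1 := hF' _ hpsd
  funext k
  have e2 := congrFun e1
    (Sum.map (fun x : κ × κ => ((Sum.inl x.1, Sum.inl x.2) : (κ ⊕ τ) × (κ ⊕ τ))) id k)
  refine Eq.trans (congrArg (fun z => F z _) ?_) (e2.trans ?_)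
  · funext x
    obtain ⟨i | i, j | j⟩ := x
    · rfl
    · simp
    · simp
    · by_cases hij : i = j <;> simp [hij]
  · rcases k with k | k
    · exact congrFun (congrFun hinv k.1) k.2
    · simp only [Sum.map_inr, Sum.elim_inr, hdet]

theorem ComputableInTime.mulVec [Fintype κ] {M : (α → ℝ) → Matrix κ κ ℝ} {x : (α → ℝ) → κ → ℝ}
    {S T : ℝ} (hM : MatComputable M S) (hx : ComputableInTime x T) :
    ComputableInTime (fun v => M v *ᵥ x v) (S + T + 3 * (Fintype.card κ : ℝ) ^ 2) := by
  have h1 : ComputableInTime (fun (w : (κ × κ) ⊕ κ → ℝ) (i : κ) =>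
      ∑ j, w (.inl (i, j)) * w (.inr j)) _ :=
    ComputableInTime.of_forall fun i => ComputableInTime.sum fun j =>
      ComputableInTime.mul (ComputableInTime.var (Sum.inl (i, j) : (κ × κ) ⊕ κ))
        (ComputableInTime.var (Sum.inr j))
  refine (h1.comp (ComputableInTime.pair hM hx)).mono ?_
  simp only [Finset.sum_const, Finset.card_univ, nsmul_eq_mul]
  have : (Fintype.card κ : ℝ) ≤ (Fintype.card κ : ℝ) ^ 2 := by
    exact_mod_cast Nat.le_self_pow two_ne_zero _
  nlinarith

theorem psdInvComputable_two_pow {ω K : ℝ} (hω : 2 ≤ ω) (hK : 0 ≤ K)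
    (h : ∀ p : ℕ, 1 ≤ p → ComputableInTime (matMul p) (K * (p : ℝ) ^ ω)) (k : ℕ) :
    PSDInvComputable (Fin (2 ^ k)) ((5 * K + 8) * ((2 ^ k : ℕ) : ℝ) ^ ω) := by
  induction k with
  | zero =>
    refine (psdInvComputable_unit.congr (finOneEquiv : Fin (2 ^ 0) ≃ Unit)).mono ?_
    simp
    linarith
  | succ k ih =>
    have e : Fin (2 ^ (k + 1)) ≃ Fin (2 ^ k) ⊕ Fin (2 ^ k) :=
      (finCongr (by ring)).trans finSumFinEquiv.symm
    refine ((ih.double (mulComputable_of_matMul (Equiv.refl _)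
      (h (2 ^ k) Nat.one_le_two_pow))).congr e).mono ?_
    have h1 : (1 : ℝ) ≤ ((2 ^ k : ℕ) : ℝ) := by exact_mod_cast Nat.one_le_two_pow
    have h2 : ((2 ^ k : ℕ) : ℝ) ^ 2 ≤ ((2 ^ k : ℕ) : ℝ) ^ ω := by
      rw [← Real.rpow_natCast]; exact Real.rpow_le_rpow_of_exponent_le h1 (by exact_mod_cast hω)
    have h3 : (1 : ℝ) ≤ ((2 ^ k : ℕ) : ℝ) ^ ω := Real.one_le_rpow h1 (by linarith)
    have h4 : (4 : ℝ) ≤ 2 ^ ω := by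
      calc (4 : ℝ) = 2 ^ (2 : ℝ) := by norm_num
        _ ≤ 2 ^ ω := Real.rpow_le_rpow_of_exponent_le one_le_two hω
    have h5 : ((2 ^ (k + 1) : ℕ) : ℝ) ^ ω = 2 ^ ω * ((2 ^ k : ℕ) : ℝ) ^ ω := by
      rw [← Real.mul_rpow (by norm_num) (by positivity)]
      congr 1; push_cast; ring
    rw [h5, Fintype.card_fin]
    set x := ((2 ^ k : ℕ) : ℝ) ^ ω
    have h6 : (5 * K + 8) * (4 * x) ≤ (5 * K + 8) * (2 ^ ω * x) := by gcongr
    nlinarith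

theorem inv_mulVec_eq_normal_equations [Fintype κ] [DecidableEq κ] (U : Matrix κ κ ℝ)
    (b : κ → ℝ) : U⁻¹ *ᵥ b = (Uᵀ * U)⁻¹ *ᵥ (Uᵀ *ᵥ b) := by
  rw [Matrix.mul_inv_rev, Matrix.mulVec_mulVec, Matrix.mul_assoc]
  by_cases h : U.det = 0
  · have : U⁻¹ = 0 := Matrix.nonsing_inv_apply_not_isUnit _ (by simp [h])
    simp [this]
  · rw [Matrix.nonsing_inv_mul Uᵀ (by rw [Matrix.det_transpose]; exact Ne.isUnit h),
      Matrix.mul_one]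

/-- Linear systems can be solved within the time of a matrix multiplication. -/
theorem IsMatMulExponent.exists_solve_time {ω : ℝ} (h : IsMatMulExponent ω) :
    ∃ K : ℝ, 0 ≤ K ∧ ∀ p : ℕ, 1 ≤ p →
      ComputableInTime (fun v : (Fin p × Fin p) ⊕ Fin p → ℝ =>
        (Matrix.of fun i j => v (.inl (i, j)) : Matrix (Fin p) (Fin p) ℝ)⁻¹ *ᵥ fun r => v (.inr r))
        (K * (p : ℝ) ^ ω) := by
  obtain ⟨hω, K, hK⟩ := h
  have hK0 : 0 ≤ K := by
    have := (hK 1 le_rfl).nonneg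
    simpa using this
  refine ⟨K + (5 * K + 8) * 2 ^ ω + 8, by positivity, fun p hp => ?_⟩
  obtain ⟨k, hk1, hk2⟩ : ∃ k : ℕ, p ≤ 2 ^ k ∧ 2 ^ k ≤ 2 * p := by
    refine ⟨Nat.log 2 p + 1, (Nat.lt_pow_succ_log_self one_lt_two p).le, ?_⟩
    rw [pow_succ, mul_comm]
    exact Nat.mul_le_mul le_rfl (Nat.pow_log_le_self 2 (by omega))
  have e : Fin p ⊕ Fin (2 ^ k - p) ≃ Fin (2 ^ k) := finSumFinEquiv.trans (finCongr (by omega))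
  obtain ⟨F, hF, hF'⟩ := ((psdInvComputable_two_pow hω hK0 hK k).congr e).of_sum
  have hU := MatComputable.proj fun x : Fin p × Fin p =>
    (Sum.inl x : (Fin p × Fin p) ⊕ Fin p)
  have hUT := MatComputable.proj fun x : Fin p × Fin p =>
    (Sum.inl (x.2, x.1) : (Fin p × Fin p) ⊕ Fin p)
  have hG := mulComputable_of_matMul (Equiv.refl _) (hK p hp) hUT hU
  have hinv := (hF.comp hG).reindex (Sum.inl : Fin p × Fin p → _)
  have hb : ComputableInTime (fun (v : (Fin p × Fin p) ⊕ Fin p → ℝ) r => v (.inr r)) 0 :=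
    ComputableInTime.proj _
  have hsol := ComputableInTime.mulVec
    (M := fun v : (Fin p × Fin p) ⊕ Fin p → ℝ => Matrix.of fun i j =>
      F (fun e => ((Matrix.of fun i j => v (.inl (j, i))) *
        (Matrix.of fun i j => v (.inl (i, j))) : Matrix (Fin p) (Fin p) ℝ) e.1 e.2) (.inl (i, j)))
    hinv (ComputableInTime.mulVec hUT hb)
  have hp1 : (1 : ℝ) ≤ p := by exact_mod_cast hp
  have h2 : (p : ℝ) ^ 2 ≤ (p : ℝ) ^ ω := by
    rw [← Real.rpow_natCast]; exact Real.rpow_le_rpow_of_exponent_le hp1 (by exact_mod_cast hω)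
  have h3 : (1 : ℝ) ≤ (p : ℝ) ^ ω := Real.one_le_rpow hp1 (by linarith)
  have h4 : ((2 ^ k : ℕ) : ℝ) ^ ω ≤ 2 ^ ω * (p : ℝ) ^ ω := by
    rw [← Real.mul_rpow (by norm_num) (by positivity)]
    exact Real.rpow_le_rpow (by positivity) (by exact_mod_cast hk2) (by linarith)
  have h5 : (5 * K + 8) * ((2 ^ k : ℕ) : ℝ) ^ ω ≤ (5 * K + 8) * (2 ^ ω * (p : ℝ) ^ ω) := by
    gcongr
  have hsol' := hsol.mono (T := (K + (5 * K + 8) * 2 ^ ω + 8) * (p : ℝ) ^ ω) (by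
    simp only [Fintype.card_fin]
    nlinarith)
  convert hsol' using 2 with v
  rw [inv_mulVec_eq_normal_equations]
  congr 1
  have hpsd := Matrix.posSemidef_conjTranspose_mul_self
    (Matrix.of fun i j => v (.inl (i, j)) : Matrix (Fin p) (Fin p) ℝ)
  ext i j
  exact (congrFun (hF' _ hpsd) (.inl (i, j))).symm

end LinearSolve


section EstimatorTime

/-- Time to recover the coefficients of one node with `p ≥ 1` parents. -/
theorem computableInTime_coeffEst_node {ω K : ℝ} (hω : 2 ≤ ω) (hK : 0 ≤ K)
    (hsolve : ∀ p : ℕ, 1 ≤ p → ComputableInTime (fun v : (Fin p × Fin p) ⊕ Fin p → ℝ =>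
      (Matrix.of fun i j => v (.inl (i, j)) : Matrix (Fin p) (Fin p) ℝ)⁻¹ *ᵥ fun r => v (.inr r))
      (K * (p : ℝ) ^ ω)) {n m : ℕ} (hm : 1 ≤ m) (π : Fin n → Finset (Fin n)) (i : Fin n) :
    ComputableInTime (fun (v : Fin m × Fin n → ℝ) j => coeffEst π (fun s i => v (s, i)) i j)
      (m * ((K + 3) * ((π i).card : ℝ) ^ (ω - 1) + 480)) := by
  have hm' : (1 : ℝ) ≤ m := by exact_mod_cast hm
  rcases Nat.eq_zero_or_pos (π i).card with h0 | hp
  · have hempty : IsEmpty {j // j ∈ π i} := by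
      rw [Finset.card_eq_zero] at h0
      exact ⟨fun j => by simpa [h0] using j.2⟩
    refine (ComputableInTime.of_forall (T := fun _ => 0) fun j => hempty.elim j).mono ?_
    simp only [Finset.sum_const_zero]
    positivity
  · set p := (π i).card with hpdef
    have hbatch : ∀ s : Fin (m / 2 / p), ComputableInTime (fun (v : Fin m × Fin n → ℝ) =>
        batchSolution (π i) i (batch (firstHalf fun s i => v (s, i)) s)) (K * (p : ℝ) ^ ω) := by
      intro s
      have hlt : ∀ r : Fin p, p * s.1 + r.1 < m := fun r => by
        calc p * s.1 + r.1 < p * s.1 + p := Nat.add_lt_add_left r.2 _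
          _ = p * (s.1 + 1) := by ring
          _ ≤ p * (m / 2 / p) := Nat.mul_le_mul le_rfl s.2
          _ ≤ m / 2 := Nat.mul_div_le _ p
          _ ≤ m := Nat.div_le_self _ _
      exact (hsolve p hp).precomp (Sum.elim
        (fun e : Fin p × Fin p => ((⟨p * s.1 + e.1.1, hlt e.1⟩,
          (π i).orderEmbOfFin rfl e.2) : Fin m × Fin n))
        fun r => (⟨p * s.1 + r.1, hlt r⟩, i))
    have hmed := (ComputableInTime.of_forall fun j : {j // j ∈ π i} =>
      (computableInTime_sampleMedian (m / 2 / p)).precomp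
        fun s => (⟨s, ((π i).orderIsoOfFin rfl).symm j⟩ : Σ _ : Fin (m / 2 / p), Fin p)).comp
      (ComputableInTime.pi hbatch)
    refine hmed.mono ?_
    have hp1 : (1 : ℝ) ≤ p := by exact_mod_cast hp
    have hb : ((m / 2 / p : ℕ) : ℝ) * p ≤ m := by
      have h1 : m / 2 / p * p ≤ m := (Nat.div_mul_le_self _ _).trans (Nat.div_le_self _ _)
      exact_mod_cast h1
    have hpow : (p : ℝ) ^ ω = p * (p : ℝ) ^ (ω - 1) := by
      rw [← Real.rpow_one_add' (by positivity) (by linarith)]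
      congr 1; ring
    have hpp : (p : ℝ) ≤ (p : ℝ) ^ (ω - 1) :=
      Real.self_le_rpow_of_one_le hp1 (by linarith)
    simp only [Finset.sum_const, Finset.card_univ, nsmul_eq_mul, Fintype.card_fin,
      Fintype.card_coe, ← hpdef, hpow]
    set x := (p : ℝ) ^ (ω - 1)
    set b := ((m / 2 / p : ℕ) : ℝ)
    have h1 : b * p * (K * x) ≤ m * (K * x) := by gcongr
    have h2 : (p : ℝ) ≤ m * x := by nlinarith
    nlinarith

/-- Time to recover the variance of one node, given the coefficients. -/
theorem computableInTime_varianceRecovery_node {n m : ℕ} (hm : 1 ≤ m)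
    (π : Fin n → Finset (Fin n)) (i : Fin n) :
    ComputableInTime
      (fun (w : ((i : Fin n) × {j // j ∈ π i}) ⊕ (Fin m × Fin n) → ℝ) (_ : Unit) =>
        varianceRecovery π (fun i j => w (.inl ⟨i, j⟩)) (secondHalf fun s i => w (.inr (s, i))) i)
      (m * (4 * ((π i).card : ℝ) + 9)) := by
  have hm' : (1 : ℝ) ≤ m := by exact_mod_cast hm
  let ρ : Type := ((i : Fin n) × {j // j ∈ π i}) ⊕ (Fin m × Fin n)
  have hidx : ∀ s : Fin (m - m / 2), m / 2 + s.1 < m := fun s => by omega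
  have hres := fun s : Fin (m - m / 2) => ComputableInTime.sub
    (ComputableInTime.var (Sum.inr (⟨m / 2 + s.1, hidx s⟩, i) : ρ))
    (ComputableInTime.sum fun j : {j // j ∈ π i} => ComputableInTime.mul
      (ComputableInTime.var (Sum.inl ⟨i, j⟩ : ρ))
      (ComputableInTime.var (Sum.inr (⟨m / 2 + s.1, hidx s⟩, j.1))))
  have h := ComputableInTime.div
    (ComputableInTime.sum fun s => ComputableInTime.mul (hres s) (hres s))
    (ComputableInTime.const ((m - m / 2 : ℕ) : ℚ))
  have h' := h.mono (T := m * (4 * ((π i).card : ℝ) + 9)) (by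
    simp only [Finset.sum_const, Finset.card_univ, nsmul_eq_mul, Fintype.card_fin,
      Fintype.card_coe]
    have hle : ((m - m / 2 : ℕ) : ℝ) ≤ m := by exact_mod_cast Nat.sub_le _ _
    have : ((m - m / 2 : ℕ) : ℝ) * (4 * ((π i).card : ℝ) + 6) ≤
        m * (4 * ((π i).card : ℝ) + 6) := by gcongr
    nlinarith)
  convert h' using 3 with w
  simp only [varianceRecovery, sq, Rat.cast_natCast]
  rfl

theorem sum_card_rpow_le {ω : ℝ} (hω : 2 ≤ ω) {n d : ℕ} (π : Fin n → Finset (Fin n))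
    (hd : ∀ i, (π i).card ≤ d) :
    ∑ i, ((π i).card : ℝ) ^ (ω - 1) ≤ n * (avgInDegree π * (d : ℝ) ^ (ω - 2)) := by
  rcases Nat.eq_zero_or_pos n with rfl | hn
  · simp
  · have hn' : (n : ℝ) ≠ 0 := by positivity
    rw [avgInDegree, div_mul_eq_mul_div, mul_div_cancel₀ _ hn', Finset.sum_mul]
    refine Finset.sum_le_sum fun i _ => ?_
    have h1 : ((π i).card : ℝ) ^ (ω - 1) = (π i).card * ((π i).card : ℝ) ^ (ω - 2) := by
      rw [← Real.rpow_one_add' (by positivity) (by linarith)]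
      congr 1; ring
    rw [h1]
    have h2 : ((π i).card : ℝ) ≤ d := by exact_mod_cast hd i
    gcongr

theorem IsMatMulExponent.exists_estimator_time {ω : ℝ} (h : IsMatMulExponent ω) :
    ∃ K : ℝ, 0 < K ∧ ∀ (n d : ℕ) (π : Fin n → Finset (Fin n)), (∀ i, (π i).card ≤ d) →
      ∀ m : ℕ, 1 ≤ m → ComputableInTime (estimator π m)
        (K * (m * n * max 1 (avgInDegree π * (d : ℝ) ^ (ω - 2)))) := by
  obtain ⟨K, hK, hsolve⟩ := h.exists_solve_time
  have hω := h.1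
  refine ⟨K + 496, by linarith, fun n d π hd m hm => ?_⟩
  have hcoef := ComputableInTime.pi fun i =>
    computableInTime_coeffEst_node hω hK hsolve hm π i
  have hvar := ComputableInTime.of_forall
    (F := fun (w : ((i : Fin n) × {j // j ∈ π i}) ⊕ (Fin m × Fin n) → ℝ) =>
      varianceRecovery π (fun i j => w (.inl ⟨i, j⟩)) (secondHalf fun s i => w (.inr (s, i))))
    fun i => computableInTime_varianceRecovery_node hm π i
  have hall := (hcoef.bind hvar.keep).reindex
    (Sum.elim (fun e => Sum.inr (Sum.inl e)) Sum.inl :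
      ((i : Fin n) × {j // j ∈ π i}) ⊕ Fin n → _)
  have hall' := hall.mono (T := (K + 496) * (m * n * max 1 (avgInDegree π * (d : ℝ) ^ (ω - 2)))) (by
    rw [← Finset.mul_sum, ← Finset.mul_sum, ← mul_add, ← Finset.sum_add_distrib]
    have h1 : ∀ i, (K + 3) * ((π i).card : ℝ) ^ (ω - 1) + 480 + (4 * ((π i).card : ℝ) + 9) ≤
        (K + 7) * ((π i).card : ℝ) ^ (ω - 1) + 489 := by
      intro i
      have : ((π i).card : ℝ) ≤ ((π i).card : ℝ) ^ (ω - 1) := by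
        rcases Nat.eq_zero_or_pos (π i).card with h0 | hp
        · rw [h0, Nat.cast_zero, Real.zero_rpow (by linarith)]
        · exact Real.self_le_rpow_of_one_le (by exact_mod_cast hp) (by linarith)
      linarith
    have h2 := (Finset.sum_le_sum fun i (_ : i ∈ Finset.univ) => h1 i)
    rw [Finset.sum_add_distrib (f := fun i => (K + 7) * _), ← Finset.mul_sum, Finset.sum_const,
      Finset.card_univ, Fintype.card_fin, nsmul_eq_mul] at h2
    have h3 := sum_card_rpow_le hω π hd
    set M := max 1 (avgInDegree π * (d : ℝ) ^ (ω - 2))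
    have hM1 : 1 ≤ M := le_max_left _ _
    have hM2 : (n : ℝ) * (avgInDegree π * (d : ℝ) ^ (ω - 2)) ≤ n * M := by
      gcongr; exact le_max_right _ _
    have h4 : (K + 7) * ∑ i, ((π i).card : ℝ) ^ (ω - 1) ≤ (K + 7) * (n * M) := by
      gcongr; exact h3.trans hM2
    have h5 : (n : ℝ) * 489 ≤ 489 * (n * M) := by
      nlinarith [(Nat.cast_nonneg n : (0 : ℝ) ≤ n)]
    calc _ ≤ (m : ℝ) * ((K + 496) * (n * M)) := by
          gcongr; linarith
      _ = _ := by ring)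
  convert hall' using 3 with v e
  rcases e with e | e <;> rfl

end EstimatorTime


theorem card_le_sum_card_add_one {n : ℕ} (π : Fin n → Finset (Fin n))
    (h : (underlyingGraph π).Connected) : n ≤ ∑ i, (π i).card + 1 := by
  have h1 := h.card_vert_le_card_edgeSet_add_one
  have h2 : Nat.card (underlyingGraph π).edgeSet ≤ ∑ i, (π i).card := by
    let f : (Σ i, {j // j ∈ π i}) → Sym2 (Fin n) := fun e => s(e.1, e.2.1)
    have hsub : (underlyingGraph π).edgeSet ⊆ Set.range f := by
      intro e
      induction e with
      | _ a b =>
        rw [SimpleGraph.mem_edgeSet, underlyingGraph, SimpleGraph.fromRel_adj]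
        rintro ⟨-, hab | hab⟩
        · exact ⟨⟨a, b, hab⟩, rfl⟩
        · exact ⟨⟨b, a, hab⟩, Sym2.eq_swap⟩
    calc Nat.card (underlyingGraph π).edgeSet ≤ Nat.card (Set.range f) :=
          Nat.card_mono (Set.toFinite _) hsub
      _ ≤ Nat.card (Σ i, {j // j ∈ π i}) := Finite.card_range_le f
      _ = ∑ i, (π i).card := by simp
  rw [Nat.card_fin] at h1
  omega

theorem half_le_avgInDegree {n : ℕ} (hn : 2 ≤ n) (π : Fin n → Finset (Fin n))
    (h : (underlyingGraph π).Connected) : 1 / 2 ≤ avgInDegree π := by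
  have h1 : (n : ℝ) ≤ ∑ i, ((π i).card : ℝ) + 1 := by
    exact_mod_cast card_le_sum_card_add_one π h
  have h2 : (2 : ℝ) ≤ n := by exact_mod_cast hn
  rw [avgInDegree, le_div_iff₀ (by linarith)]
  linarith

theorem one_le_of_connected {n d : ℕ} (hn : 2 ≤ n) (π : Fin n → Finset (Fin n))
    (hd : ∀ i, (π i).card ≤ d) (h : (underlyingGraph π).Connected) : 1 ≤ d := by
  by_contra hd0
  have : ∑ i, (π i).card = 0 := Finset.sum_eq_zero fun i _ => by have := hd i; omega
  have := card_le_sum_card_add_one π h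
  omega

theorem log_div_nonneg (n : ℕ) {ε δ : ℝ} (hε : 0 < ε) (hε1 : ε < 1) (hδ : 0 < δ) (hδ1 : δ < 1) :
    0 ≤ Real.log (n / (ε * δ)) := by
  rcases Nat.eq_zero_or_pos n with rfl | hn
  · simp
  · apply Real.log_nonneg
    rw [le_div_iff₀ (by positivity), one_mul]
    have : (1 : ℝ) ≤ n := by exact_mod_cast hn
    nlinarith

theorem half_le_log_div {n : ℕ} (hn : 2 ≤ n) {ε δ : ℝ} (hε : 0 < ε) (hε1 : ε < 1) (hδ : 0 < δ)
    (hδ1 : δ < 1) : 1 / 2 ≤ Real.log (n / (ε * δ)) := by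
  have h2 : (2 : ℝ) ≤ n := by exact_mod_cast hn
  have h3 : (2 : ℝ) ≤ n / (ε * δ) := by
    rw [le_div_iff₀ (by positivity)]
    nlinarith
  linarith [Real.log_le_log (by norm_num) h3, Real.log_two_gt_d9]

end GBN

theorem stmt_14 : ∃ C : ℝ, 0 < C ∧
    (∀ (ε δ : ℝ), 0 < ε → ε < 1 → 0 < δ → δ < 1 →
      ∀ (n d : ℕ) (π : Fin n → Finset (Fin n)),
        (∀ i, ∀ j ∈ π i, j < i) → (∀ i, (π i).card ≤ d) →
        (GBN.underlyingGraph π).IsAcyclic →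
        ∀ (A : ∀ i, {j // j ∈ π i} → ℝ) (σ : Fin n → ℝ), (∀ i, 0 < σ i) →
        ∀ m : ℕ,
          (C * (n * max 1 (GBN.avgInDegree π * d) / ε ^ 2) * Real.log (n / (ε * δ)) ≤ m →
            GBN.LearnsWithin π A σ m ε δ) ∧
          (2 ≤ n → (GBN.underlyingGraph π).Connected →
            C * (n * GBN.avgInDegree π * d / ε ^ 2) * Real.log (n / (ε * δ)) ≤ m →
            GBN.LearnsWithin π A σ m ε δ)) ∧
    (∀ ω : ℝ, GBN.IsMatMulExponent ω → ∃ K : ℝ, 0 < K ∧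
      ∀ (n d : ℕ) (π : Fin n → Finset (Fin n)),
        (∀ i, ∀ j ∈ π i, j < i) → (∀ i, (π i).card ≤ d) →
        (GBN.underlyingGraph π).IsAcyclic →
        (∀ m : ℕ, 1 ≤ m →
          GBN.ComputableInTime (GBN.estimator π m)
            (K * (m * n * max 1 (GBN.avgInDegree π * (d : ℝ) ^ (ω - 2))))) ∧
        (2 ≤ n → (GBN.underlyingGraph π).Connected →
          ∀ (ε δ : ℝ), 0 < ε → ε < 1 → 0 < δ → δ < 1 →
          ∀ m : ℕ,
            m = ⌈C * (n * GBN.avgInDegree π * d / ε ^ 2) * Real.log (n / (ε * δ))⌉₊ →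
            GBN.ComputableInTime (GBN.estimator π m)
              (K * ((n : ℝ) ^ 2 * GBN.avgInDegree π ^ 2 * (d : ℝ) ^ (ω - 1) / ε ^ 2 *
                Real.log (n / (ε * δ)))))) := by
  obtain ⟨C, hC, hlearn⟩ := GBN.exists_learnsWithin_const
  refine ⟨2 * C, by linarith, ?_, ?_⟩
  · intro ε δ hε hε1 hδ hδ1 n d π hπ hd hac A σ hσ m
    have hlog := GBN.log_div_nonneg n hε hε1 hδ hδ1
    refine ⟨fun hm => hlearn ε δ hε hε1 hδ hδ1 n d π hπ hd hac A σ hσ m (le_trans ?_ hm),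
      fun hn hconn hm => hlearn ε δ hε hε1 hδ hδ1 n d π hπ hd hac A σ hσ m (le_trans ?_ hm)⟩
    · have : C ≤ 2 * C := by linarith
      gcongr
    · have havg := GBN.half_le_avgInDegree hn π hconn
      have hd1 : (1 : ℝ) ≤ d := by exact_mod_cast GBN.one_le_of_connected hn π hd hconn
      have hmax : max 1 (GBN.avgInDegree π * d) ≤ 2 * (GBN.avgInDegree π * d) :=
        max_le (by nlinarith) (by nlinarith)
      calc C * (n * max 1 (GBN.avgInDegree π * d) / ε ^ 2) * Real.log (n / (ε * δ))
          ≤ C * (n * (2 * (GBN.avgInDegree π * d)) / ε ^ 2) * Real.log (n / (ε * δ)) := by gcongr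
        _ = _ := by ring
  · intro ω hω
    obtain ⟨K, hK, htime⟩ := hω.exists_estimator_time
    refine ⟨K * (8 * C), by positivity, fun n d π _ hd _ => ⟨fun m hm => ?_, ?_⟩⟩
    · refine (htime n d π hd m hm).mono ?_
      have h1 : K * 1 ≤ K * (8 * C) := by gcongr; linarith
      have h2 : 0 ≤ (m : ℝ) * n * max 1 (GBN.avgInDegree π * (d : ℝ) ^ (ω - 2)) := by positivity
      nlinarith
    · intro hn hconn ε δ hε hε1 hδ hδ1 m hm
      have havg := GBN.half_le_avgInDegree hn π hconn
      have hd1 : (1 : ℝ) ≤ d := by exact_mod_cast GBN.one_le_of_connected hn π hd hconn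
      have hlog := GBN.half_le_log_div hn hε hε1 hδ hδ1
      have hn2 : (2 : ℝ) ≤ n := by exact_mod_cast hn
      set a := GBN.avgInDegree π
      set L := Real.log (n / (ε * δ))
      set V := 2 * C * (n * a * d / ε ^ 2) * L with hV
      have hV1 : 1 ≤ V := by
        have h1 : (1 : ℝ) ≤ n * a := by nlinarith
        have h2 : (1 : ℝ) ≤ n * a * d := by nlinarith
        have h3 : (1 : ℝ) ≤ n * a * d / ε ^ 2 := by
          rw [le_div_iff₀ (by positivity)]; nlinarith
        have h4 : 512 ≤ 2 * C * (n * a * d / ε ^ 2) := by nlinarith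
        nlinarith
      have hm1 : 1 ≤ m := by rw [hm]; exact Nat.one_le_ceil_iff.2 (by linarith)
      have hm2 : (m : ℝ) ≤ 2 * V := by
        rw [hm]; linarith [Nat.ceil_lt_add_one (show 0 ≤ V by linarith)]
      refine (htime n d π hd m hm1).mono ?_
      have hx : 1 ≤ (d : ℝ) ^ (ω - 2) := Real.one_le_rpow hd1 (by linarith [hω.1])
      have hmax : max 1 (a * (d : ℝ) ^ (ω - 2)) ≤ 2 * (a * (d : ℝ) ^ (ω - 2)) :=
        max_le (by nlinarith) (by nlinarith)
      have hpow : (d : ℝ) ^ (ω - 1) = d * (d : ℝ) ^ (ω - 2) := by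
        rw [← Real.rpow_one_add' (by positivity) (by linarith [hω.1])]
        congr 1; ring
      calc K * (m * n * max 1 (a * (d : ℝ) ^ (ω - 2)))
          ≤ K * (2 * V * n * (2 * (a * (d : ℝ) ^ (ω - 2)))) := by gcongr
        _ = K * (8 * C) * ((n : ℝ) ^ 2 * a ^ 2 * (d : ℝ) ^ (ω - 1) / ε ^ 2 * L) := by
          rw [hpow, hV]; ring
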